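/- arXiv:2510.15323 — 2 statements merged into one kernel-verified Lean document; each statement's English description precedes it below -/
import Mathlib

section
/- Suppose σ_n → ∞. Then for every 1 ≤ s < ∞ there is a constant C_s such that for every absolutely continuous function h : ℝ → ℝ with H_s(h) := ∫_ℝ |h′(x)| / (1 + |x|^s) dx < ∞ and every n, |E[h((S_n − E[S_n]) / σ_n)] − ∫ h dΦ| ≤ C_s H_s(h) σ_n^{−1}. -/
open MeasureTheory ProbabilityTheory Filter
open scoped ENNReal NNReal

noncomputable section

variable {Ω : Type*} [MeasurableSpace Ω] {𝒳 : ℕ → Type*} [∀ j, MeasurableSpace (𝒳 j)]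

/-- The σ-algebra generated by `X_0, …, X_j`. -/
def pastSigma (X : ∀ j, Ω → 𝒳 j) (j : ℕ) : MeasurableSpace Ω :=
  ⨆ i ∈ Finset.range (j + 1), MeasurableSpace.comap (X i) inferInstance

/-- `X` is an inhomogeneous Markov chain (on the probability space `(Ω, μ)`) whose `n`-step
transition probabilities from time `j` are given by the Markov kernels `κ j n`: for every
measurable `Γ`, `ℙ(X_{j+n} ∈ Γ | X_0, …, X_j) = (κ j n) (X j) Γ` a.s. -/
structure IsInhomMarkov (μ : Measure Ω) (X : ∀ j, Ω → 𝒳 j)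
    (κ : ∀ j n, Kernel (𝒳 j) (𝒳 (j + n))) : Prop where
  meas : ∀ j, Measurable (X j)
  isMarkovKernel : ∀ j n, IsMarkovKernel (κ j n)
  cond : ∀ j n (Γ : Set (𝒳 (j + n))), MeasurableSet Γ →
    (μ[(fun ω => Γ.indicator (fun _ => (1 : ℝ)) (X (j + n) ω)) | pastSigma X j])
      =ᵐ[μ] fun ω => (κ j n (X j ω) Γ).toReal

/-- The standard normal distribution function `Φ`. -/
def stdNormalCDF (t : ℝ) : ℝ := (gaussianReal 0 1 (Set.Iic t)).toReal

set_option linter.unusedSectionVars false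
set_option linter.unusedVariables false

namespace BE

def fejK (y : ℝ) : ℝ := 2 * (1 - Real.cos y) / y ^ 2

lemma fejK_nonneg (y : ℝ) : 0 ≤ fejK y := by
  unfold fejK
  have := Real.cos_le_one y
  have : 0 ≤ 1 - Real.cos y := by linarith
  positivity

lemma fejK_le (y : ℝ) : fejK y ≤ 8 * (1 + y ^ 2)⁻¹ := by
  unfold fejK
  rcases eq_or_ne y 0 with rfl | hy
  · simp
  have hy2 : 0 < y ^ 2 := by positivity
  rw [← div_eq_mul_inv, div_le_div_iff₀ hy2 (by positivity)]
  have h1 := Real.one_sub_sq_div_two_le_cos (x := y)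
  have h2 := Real.neg_one_le_cos y
  nlinarith

lemma fejK_meas : Measurable fejK := by
  unfold fejK
  fun_prop

lemma fejK_int : Integrable fejK := by
  refine Integrable.mono' (integrable_inv_one_add_sq.const_mul 8) fejK_meas.aestronglyMeasurable ?_
  refine ae_of_all _ fun y => ?_
  rw [Real.norm_of_nonneg (fejK_nonneg y)]
  exact fejK_le y

lemma fejK_pos : 0 < ∫ y, fejK y := by
  rw [integral_pos_iff_support_of_nonneg fejK_nonneg fejK_int]
  have hsub : Set.Ioo (0 : ℝ) 1 ⊆ Function.support fejK := by
    intro y hy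
    have hc : Real.cos y < 1 := by
      have := Real.cos_lt_cos_of_nonneg_of_le_pi (x := 0) (y := y) le_rfl
        (by linarith [Real.pi_gt_three, hy.2]) hy.1
      simpa using this
    have hy0 : 0 < y := hy.1
    have : 0 < fejK y := by
      unfold fejK
      have : 0 < 1 - Real.cos y := by linarith
      positivity
    exact this.ne'
  refine lt_of_lt_of_le ?_ (measure_mono hsub)
  simp

lemma fejK_real (y : ℝ) (hy : y ≠ 0) :
    ∫ t in (0 : ℝ)..1, (1 - t) * (2 * Real.cos (t * y)) = fejK y := by
  have hd : ∀ t ∈ Set.uIcc (0 : ℝ) 1, HasDerivAt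
      (fun t => 2 * ((1 - t) * Real.sin (t * y) / y - Real.cos (t * y) / y ^ 2))
      ((1 - t) * (2 * Real.cos (t * y))) t := by
    intro t _
    have h1 : HasDerivAt (fun t : ℝ => t * y) y t := by
      simpa using (hasDerivAt_id t).mul_const y
    have h2 := h1.sin
    have h3 := h1.cos
    have h4 : HasDerivAt (fun t : ℝ => 1 - t) (-1) t := by
      simpa using (hasDerivAt_id t).const_sub 1
    have := (((h4.mul h2).div_const y).sub (h3.div_const (y ^ 2))).const_mul 2
    refine this.congr_deriv ?_
    field_simp
    ring
  rw [intervalIntegral.integral_eq_sub_of_hasDerivAt hd]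
  · unfold fejK
    simp
    field_simp
    ring
  · apply Continuous.intervalIntegrable
    fun_prop

lemma fejK_cplx (y : ℝ) (hy : y ≠ 0) :
    ∫ t in (-1 : ℝ)..1, ((1 - |t| : ℝ) : ℂ) * Complex.exp (-(Complex.I * t * y)) = (fejK y : ℂ) := by
  have hc : Continuous fun t : ℝ => ((1 - |t| : ℝ) : ℂ) * Complex.exp (-(Complex.I * t * y)) := by
    fun_prop
  rw [← intervalIntegral.integral_add_adjacent_intervals (b := 0) (hc.intervalIntegrable _ _)
    (hc.intervalIntegrable _ _)]
  have : ∫ t in (-1 : ℝ)..0, ((1 - |t| : ℝ) : ℂ) * Complex.exp (-(Complex.I * t * y))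
    = ∫ t in (0 : ℝ)..1, ((1 - |t| : ℝ) : ℂ) * Complex.exp ((Complex.I * t * y)) := by
    have := intervalIntegral.integral_comp_neg (a := 0) (b := 1)
      (fun t : ℝ => ((1 - |t| : ℝ) : ℂ) * Complex.exp (-(Complex.I * t * y)))
    simp only [neg_zero] at this
    rw [← this]
    simp
  rw [this, ← intervalIntegral.integral_add]
  · rw [← fejK_real y hy, ← intervalIntegral.integral_ofReal]
    refine intervalIntegral.integral_congr fun t ht => ?_
    simp at ht
    simp only [abs_of_nonneg ht.1]
    push_cast
    rw [← mul_add, Complex.cos]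
    congr 1
    rw [show (t : ℂ) * y * Complex.I = Complex.I * t * y by ring,
      show -((t : ℂ) * y) * Complex.I = -(Complex.I * t * y) by ring]
    ring
  · apply Continuous.intervalIntegrable
    fun_prop
  · exact hc.intervalIntegrable _ _

lemma fej_conv (D : ℝ → ℝ) (hD : Integrable D) (x : ℝ) :
    |∫ y, D (x - y) * fejK y| ≤ ∫ t in (-1 : ℝ)..1, ‖∫ u, (D u : ℂ) * Complex.exp (Complex.I * t * u)‖ := by
  have hDx : Integrable (fun y => D (x - y)) := hD.comp_sub_left x
  have e1 : ((∫ y, D (x - y) * fejK y : ℝ) : ℂ)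
      = ∫ y, ∫ t in Set.Ioc (-1 : ℝ) 1, (D (x - y) : ℂ) *
        (((1 - |t| : ℝ) : ℂ) * Complex.exp (-(Complex.I * t * y))) := by
    rw [← integral_complex_ofReal]
    refine integral_congr_ae ?_
    have h0 : ∀ᵐ y : ℝ, y ≠ 0 := by
      simp [ae_iff]
    filter_upwards [h0] with y hy
    rw [integral_const_mul, ← intervalIntegral.integral_of_le (by norm_num), fejK_cplx y hy]
    push_cast; rfl
  have hint : Integrable (Function.uncurry fun (y : ℝ) (t : ℝ) => (D (x - y) : ℂ) *
        (((1 - |t| : ℝ) : ℂ) * Complex.exp (-(Complex.I * t * y))))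
        ((volume : Measure ℝ).prod ((volume : Measure ℝ).restrict (Set.Ioc (-1 : ℝ) 1))) := by
    have hb : Integrable (fun p : ℝ × ℝ => D (x - p.1) * (1 : ℝ))
        ((volume : Measure ℝ).prod ((volume : Measure ℝ).restrict (Set.Ioc (-1 : ℝ) 1))) :=
      hDx.mul_prod (integrable_const 1)
    refine Integrable.mono hb ?_ ?_
    · have h1 : AEStronglyMeasurable (fun p : ℝ × ℝ => ((D (x - p.1) : ℝ) : ℂ))
        ((volume : Measure ℝ).prod ((volume : Measure ℝ).restrict (Set.Ioc (-1 : ℝ) 1))) := by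
        have := hb.aestronglyMeasurable
        simp only [mul_one] at this
        exact Complex.continuous_ofReal.comp_aestronglyMeasurable this
      refine h1.mul (Continuous.aestronglyMeasurable ?_)
      fun_prop
    · have : ∀ᵐ p : ℝ × ℝ ∂((volume : Measure ℝ).prod ((volume : Measure ℝ).restrict (Set.Ioc (-1 : ℝ) 1))),
          p.2 ∈ Set.Ioc (-1 : ℝ) 1 := by
        have := Measure.quasiMeasurePreserving_snd
          (μ := (volume : Measure ℝ)) (ν := ((volume : Measure ℝ).restrict (Set.Ioc (-1 : ℝ) 1)))
        exact this.ae (ae_restrict_mem measurableSet_Ioc)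
      filter_upwards [this] with p hp
      have hp' : |p.2| ≤ 1 := abs_le.2 ⟨hp.1.le, hp.2⟩
      simp only [Function.uncurry, norm_mul, mul_one, Complex.norm_real]
      have h2 : ‖Complex.exp (-(Complex.I * p.2 * p.1))‖ = 1 := by
        rw [Complex.norm_exp]; simp
      rw [h2, mul_one]
      have : ‖1 - |p.2|‖ ≤ 1 := by
        rw [Real.norm_eq_abs, abs_le]; constructor <;> linarith [abs_nonneg p.2]
      calc _ ≤ ‖D (x - p.1)‖ * 1 := by gcongr
        _ = _ := by ring
  rw [integral_integral_swap hint] at e1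
  have e2 : ∀ t : ℝ, ∫ y, (D (x - y) : ℂ) *
        (((1 - |t| : ℝ) : ℂ) * Complex.exp (-(Complex.I * t * y)))
      = ((1 - |t| : ℝ) : ℂ) * Complex.exp (-(Complex.I * t * x)) *
        ∫ u, (D u : ℂ) * Complex.exp (Complex.I * t * u) := by
    intro t
    rw [← integral_const_mul, ← integral_sub_left_eq_self _ volume x]
    congr 1
    ext y
    have : Complex.exp (-(Complex.I * t * (x - y : ℝ))) = Complex.exp (-(Complex.I * t * x)) *
       Complex.exp (Complex.I * t * y) := by
      rw [← Complex.exp_add]; congr 1; push_cast; ring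
    rw [this, sub_sub_cancel]; ring
  simp_rw [e2] at e1
  rw [← Real.norm_eq_abs, ← Complex.norm_real, e1, ← intervalIntegral.integral_of_le (by norm_num)]
  have hcont : Continuous fun t : ℝ => ∫ u, (D u : ℂ) * Complex.exp (Complex.I * t * u) := by
    refine continuous_of_dominated (bound := fun u => ‖D u‖) ?_ ?_ hD.norm ?_
    · intro t
      refine AEStronglyMeasurable.mul ?_ (Continuous.aestronglyMeasurable (by fun_prop))
      exact Complex.continuous_ofReal.comp_aestronglyMeasurable hD.aestronglyMeasurable
    · intro t
      refine ae_of_all _ fun u => ?_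
      rw [norm_mul, Complex.norm_exp]; simp
    · refine ae_of_all _ fun u => ?_
      fun_prop
  refine intervalIntegral.norm_integral_le_of_norm_le (by norm_num) ?_ (hcont.norm.intervalIntegrable _ _)
  refine ae_of_all _ fun t ht => ?_
  have ht' : |t| ≤ 1 := abs_le.2 ⟨ht.1.le, ht.2⟩
  have h2 : ‖Complex.exp (-(Complex.I * t * x))‖ = 1 := by
    rw [Complex.norm_exp]; simp
  rw [norm_mul, norm_mul, h2, mul_one, Complex.norm_real]
  have : ‖1 - |t|‖ ≤ 1 := by
    rw [Real.norm_eq_abs, abs_le]; constructor <;> linarith [abs_nonneg t]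
  exact mul_le_of_le_one_left (norm_nonneg _) this

lemma fej_split : ∃ a : ℝ, 0 < a ∧
    0 < (∫ y in Set.Icc (-a) a, fejK y) - ∫ y in (Set.Icc (-a) a)ᶜ, fejK y := by
  have h := intervalIntegral_tendsto_integral (μ := volume) (f := fejK) fejK_int
    (a := fun a : ℝ => -a) (b := fun a : ℝ => a) tendsto_neg_atTop_atBot tendsto_id
  have h2 := h.eventually (lt_mem_nhds (show (∫ y, fejK y) / 2 < ∫ y, fejK y by linarith [fejK_pos]))
  obtain ⟨a, ha, ha0⟩ := (h2.and (eventually_gt_atTop 0)).exists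
  refine ⟨a, ha0, ?_⟩
  have h3 := integral_add_compl (μ := volume) (s := Set.Icc (-a) a) measurableSet_Icc fejK_int
  rw [intervalIntegral.integral_of_le (by linarith), ← integral_Icc_eq_integral_Ioc] at ha
  linarith

lemma smoothing : ∃ C₀ : ℝ, 0 ≤ C₀ ∧ ∀ (D : ℝ → ℝ) (L B Δ : ℝ), Integrable D → 0 ≤ L →
    (∀ y, |D y| ≤ B) → (∀ y δ, 0 ≤ δ → D (y + δ) ≤ D y + L * δ) →
    (∫ t in (-1 : ℝ)..1, ‖∫ u, (D u : ℂ) * Complex.exp (Complex.I * t * u)‖) ≤ Δ →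
    ∀ x, |D x| ≤ C₀ * (Δ + L) := by
  obtain ⟨a, ha, hab⟩ := fej_split
  set A := ∫ y in Set.Icc (-a) a, fejK y with hA
  set A' := ∫ y in (Set.Icc (-a) a)ᶜ, fejK y with hA'
  have hA'0 : 0 ≤ A' := integral_nonneg fejK_nonneg
  have hA0 : 0 < A := by linarith
  refine ⟨(1 + 2 * a * A) / (A - A'), by positivity, ?_⟩
  intro D L B Δ hD hL hB hLip hΔ
  have hbd : BddAbove (Set.range fun y => |D y|) := ⟨B, by rintro _ ⟨y, rfl⟩; exact hB y⟩
  set η := ⨆ y, |D y| with hη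
  have hle : ∀ y, |D y| ≤ η := fun y => le_ciSup hbd y
  have hI : ∀ x, Integrable (fun y => D (x - y) * fejK y) := by
    intro x
    refine fejK_int.bdd_mul (c := B) ?_ ?_
    · exact (hD.comp_sub_left x).aestronglyMeasurable
    · exact ae_of_all _ fun y => hB _
  have hsplit : ∀ x, (∫ y, D (x - y) * fejK y) = (∫ y in Set.Icc (-a) a, D (x - y) * fejK y)
      + ∫ y in (Set.Icc (-a) a)ᶜ, D (x - y) * fejK y := fun x =>
    (integral_add_compl (μ := volume) (s := Set.Icc (-a) a) measurableSet_Icc (hI x)).symm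
  have hΔ' : ∀ x, |∫ y, D (x - y) * fejK y| ≤ Δ := fun x => (fej_conv D hD x).trans hΔ
  have hout1 : ∀ x, (∫ y in (Set.Icc (-a) a)ᶜ, D (x - y) * fejK y) ≤ η * A' := by
    intro x
    rw [hA', ← integral_const_mul]
    refine integral_mono (hI x).integrableOn (fejK_int.const_mul _).integrableOn fun y => ?_
    exact mul_le_mul_of_nonneg_right ((le_abs_self _).trans (hle _)) (fejK_nonneg y)
  have hout2 : ∀ x, -(η * A') ≤ (∫ y in (Set.Icc (-a) a)ᶜ, D (x - y) * fejK y) := by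
    intro x
    rw [hA', ← integral_const_mul, ← integral_neg]
    refine integral_mono (fejK_int.const_mul _).integrableOn.neg (hI x).integrableOn fun y => ?_
    have := mul_le_mul_of_nonneg_right ((neg_le_abs _).trans (hle (x - y))) (fejK_nonneg y)
    linarith
  have key : ∀ x, |D x| * A ≤ Δ + 2 * L * a * A + η * A' := by
    intro x0
    rcases le_total 0 (D x0) with h0 | h0
    · rw [abs_of_nonneg h0]
      have h1 : (D x0 - 2 * L * a) * A ≤ ∫ y in Set.Icc (-a) a, D ((x0 - a) - y) * fejK y := by
        rw [hA, ← integral_const_mul]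
        refine setIntegral_mono_on (fejK_int.const_mul _).integrableOn (hI _).integrableOn
          measurableSet_Icc fun y hy => ?_
        refine mul_le_mul_of_nonneg_right ?_ (fejK_nonneg y)
        have := hLip (x0 - a - y) (a + y) (by linarith [hy.1])
        rw [show x0 - a - y + (a + y) = x0 by ring] at this
        nlinarith [hy.2]
      have h2 := hΔ' (x0 - a)
      have h3 := hout2 (x0 - a)
      rw [hsplit] at h2
      have := (le_abs_self _).trans h2
      nlinarith
    · rw [abs_of_nonpos h0]
      have h1 : (∫ y in Set.Icc (-a) a, D ((x0 + a) - y) * fejK y) ≤ (D x0 + 2 * L * a) * A := by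
        rw [hA, ← integral_const_mul]
        refine setIntegral_mono_on (hI _).integrableOn (fejK_int.const_mul _).integrableOn
          measurableSet_Icc fun y hy => ?_
        refine mul_le_mul_of_nonneg_right ?_ (fejK_nonneg y)
        have := hLip x0 (a - y) (by linarith [hy.2])
        rw [show x0 + (a - y) = x0 + a - y by ring] at this
        nlinarith [hy.1]
      have h2 := hΔ' (x0 + a)
      have h3 := hout1 (x0 + a)
      rw [hsplit] at h2
      have := (neg_le_abs _).trans h2
      nlinarith
  have hΔ0 : 0 ≤ Δ := (abs_nonneg _).trans (hΔ' 0)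
  have hη2 : η ≤ (Δ + 2 * L * a * A + η * A') / A := ciSup_le fun y => by
    rw [le_div_iff₀ hA0]; exact key y
  rw [le_div_iff₀ hA0] at hη2
  intro x
  refine (hle x).trans ?_
  rw [div_mul_eq_mul_div, le_div_iff₀ hab]
  nlinarith [mul_nonneg (mul_nonneg ha.le hA0.le) hΔ0]

end BE

namespace BE

def tailG (ν : Measure ℝ) (x : ℝ) : ℝ := Real.exp x * ν.real (Set.Ioi x)

lemma tailG_nonneg (ν : Measure ℝ) (x : ℝ) : 0 ≤ tailG ν x := by unfold tailG; positivity

lemma tailG_le (ν : Measure ℝ) [IsProbabilityMeasure ν] (h : Integrable Real.exp ν) (x : ℝ) :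
    tailG ν x ≤ ∫ w, Real.exp w ∂ν := by
  unfold tailG
  have : Real.exp x * ν.real (Set.Ioi x) = ∫ w in Set.Ioi x, Real.exp x ∂ν := by
    simp [mul_comm]
  rw [this]
  calc _ ≤ ∫ w in Set.Ioi x, Real.exp w ∂ν :=
        setIntegral_mono_on (by simp) h.integrableOn measurableSet_Ioi
          fun w hw => Real.exp_le_exp.2 (le_of_lt hw)
    _ ≤ _ := setIntegral_le_integral h (ae_of_all _ fun w => (Real.exp_pos w).le)

lemma tail_prod_int (ν : Measure ℝ) [IsProbabilityMeasure ν] (h : Integrable Real.exp ν) (t : ℝ) :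
    Integrable (fun p : ℝ × ℝ => {p : ℝ × ℝ | p.1 < p.2}.indicator
      (fun p => Complex.exp ((1 + Complex.I * t) * p.1)) p) (volume.prod ν) := by
  have hm : MeasurableSet {p : ℝ × ℝ | p.1 < p.2} := measurableSet_lt measurable_fst measurable_snd
  have hre : 0 < (1 + Complex.I * t).re := by simp
  have e : ∀ w : ℝ, (fun x : ℝ => {p : ℝ × ℝ | p.1 < p.2}.indicator
      (fun p => Complex.exp ((1 + Complex.I * t) * p.1)) (x, w)) =
      (Set.Iio w).indicator (fun x : ℝ => Complex.exp ((1 + Complex.I * t) * x)) := by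
    intro w; ext x; simp [Set.indicator]
  rw [integrable_prod_iff']
  · constructor
    · refine ae_of_all _ fun w => ?_
      rw [e, integrable_indicator_iff measurableSet_Iio]
      exact (integrableOn_exp_mul_complex_Iic hre w).mono_set Set.Iio_subset_Iic_self
    · convert h using 2 with w
      have : (fun x : ℝ => ‖{p : ℝ × ℝ | p.1 < p.2}.indicator
        (fun p => Complex.exp ((1 + Complex.I * t) * p.1)) (x, w)‖) =
        (Set.Iio w).indicator Real.exp := by
        ext x
        have := congrFun (e w) x
        rw [this, Set.indicator, Set.indicator]
        split_ifs
        · rw [Complex.norm_exp]; simp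
        · simp
      rw [this, integral_indicator measurableSet_Iio, ← integral_Iic_eq_integral_Iio,
        integral_exp_Iic]
  · refine (Measurable.indicator ?_ hm).aestronglyMeasurable
    fun_prop

lemma tail_slice (ν : Measure ℝ) [IsProbabilityMeasure ν] (t x : ℝ) :
    ∫ w, {p : ℝ × ℝ | p.1 < p.2}.indicator
      (fun p => Complex.exp ((1 + Complex.I * t) * p.1)) (x, w) ∂ν
    = (tailG ν x : ℂ) * Complex.exp (Complex.I * t * x) := by
  have : (fun w : ℝ => {p : ℝ × ℝ | p.1 < p.2}.indicator
      (fun p => Complex.exp ((1 + Complex.I * t) * p.1)) (x, w)) =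
      (Set.Ioi x).indicator (fun _ : ℝ => Complex.exp ((1 + Complex.I * t) * x)) := by
    ext w; simp [Set.indicator]
  rw [this, integral_indicator measurableSet_Ioi]
  simp only [integral_const, tailG, MeasurableSet.univ, measureReal_restrict_apply, Set.univ_inter]
  rw [add_mul, Complex.exp_add]
  simp only [Complex.real_smul]
  push_cast
  rw [one_mul]; ring

lemma tailG_int (ν : Measure ℝ) [IsProbabilityMeasure ν] (h : Integrable Real.exp ν) :
    Integrable (tailG ν) := by
  have := (tail_prod_int ν h 0).integral_prod_left
  simp_rw [tail_slice] at this
  have := this.re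
  simpa using this

lemma tailG_fourier (ν : Measure ℝ) [IsProbabilityMeasure ν] (h : Integrable Real.exp ν) (t : ℝ) :
    ∫ x, (tailG ν x : ℂ) * Complex.exp (Complex.I * t * x) =
      (∫ w, Complex.exp ((1 + Complex.I * t) * w) ∂ν) / (1 + Complex.I * t) := by
  have hre : 0 < (1 + Complex.I * t).re := by simp
  simp_rw [← tail_slice]
  rw [integral_integral_swap (f := fun x w => {p : ℝ × ℝ | p.1 < p.2}.indicator
      (fun p => Complex.exp ((1 + Complex.I * t) * p.1)) (x, w)) (tail_prod_int ν h t), ← integral_div]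
  congr 1; ext w
  have : (fun x : ℝ => {p : ℝ × ℝ | p.1 < p.2}.indicator
      (fun p => Complex.exp ((1 + Complex.I * t) * p.1)) (x, w)) =
      (Set.Iio w).indicator (fun x : ℝ => Complex.exp ((1 + Complex.I * t) * x)) := by
    ext x; simp [Set.indicator]
  rw [this, integral_indicator measurableSet_Iio, ← integral_Iic_eq_integral_Iio,
    integral_exp_mul_complex_Iic hre]

lemma tailG_lip (ν : Measure ℝ) [IsProbabilityMeasure ν] (h : Integrable Real.exp ν) (M : ℝ)
    (hM : ∫ w, Real.exp w ∂ν ≤ M) (y δ : ℝ) (hδ : 0 ≤ δ) :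
    tailG ν (y + δ) ≤ tailG ν y + 2 * M * δ := by
  have h0 := tailG_nonneg ν y
  have h1 := (tailG_le ν h y).trans hM
  have h2 := (tailG_le ν h (y + δ)).trans hM
  rcases le_total δ 1 with hd | hd
  · have h3 : tailG ν (y + δ) ≤ Real.exp δ * tailG ν y := by
      unfold tailG
      rw [Real.exp_add]
      have : ν.real (Set.Ioi (y + δ)) ≤ ν.real (Set.Ioi y) :=
        measureReal_mono (Set.Ioi_subset_Ioi (by linarith))
      calc _ ≤ Real.exp y * Real.exp δ * ν.real (Set.Ioi y) := by gcongr
        _ = _ := by ring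
    have h4 : Real.exp δ ≤ 1 + 2 * δ := by
      have := Real.abs_exp_sub_one_le (x := δ) (by rw [abs_of_nonneg hδ]; exact hd)
      rw [abs_of_nonneg hδ] at this
      linarith [le_abs_self (Real.exp δ - 1)]
    nlinarith
  · nlinarith

lemma exp_int_gauss : Integrable Real.exp (gaussianReal 0 1) := by
  simpa using integrable_exp_mul_gaussianReal (μ := 0) (v := 1) 1

lemma tailG_gauss_lip (y δ : ℝ) (hδ : 0 ≤ δ) :
    tailG (gaussianReal 0 1) y ≤ tailG (gaussianReal 0 1) (y + δ) + Real.exp 1 * δ := by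
  unfold tailG
  have h1 : (gaussianReal 0 1).real (Set.Ioi y) = (gaussianReal 0 1).real (Set.Ioc y (y + δ)) +
      (gaussianReal 0 1).real (Set.Ioi (y + δ)) := by
    rw [← measureReal_union]
    · rw [Set.Ioc_union_Ioi_eq_Ioi (by linarith)]
    · rw [Set.disjoint_left]; intro a ha hb
      exact absurd ha.2 (not_le.2 hb)
    · exact measurableSet_Ioi
  have h2 : (gaussianReal 0 1).real (Set.Ioc y (y + δ)) ≤ Real.exp (1 - y) * δ := by
    rw [Measure.real, gaussianReal_apply_eq_integral 0 one_ne_zero, ENNReal.toReal_ofReal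
      (setIntegral_nonneg measurableSet_Ioc fun x _ => gaussianPDFReal_nonneg 0 1 x)]
    calc _ ≤ ∫ x in Set.Ioc y (y + δ), Real.exp (1 - y) := by
          refine setIntegral_mono_on (integrable_gaussianPDFReal 0 1).integrableOn
            (by simp) measurableSet_Ioc fun x hx => ?_
          rw [gaussianPDFReal_def]
          have a1 : (√(2 * Real.pi * (1 : ℝ≥0)))⁻¹ ≤ 1 := by
            apply inv_le_one_of_one_le₀
            rw [Real.one_le_sqrt]
            have := Real.pi_gt_three
            push_cast; linarith
          calc _ ≤ 1 * Real.exp (-(x - 0) ^ 2 / (2 * (1 : ℝ≥0))) :=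
              mul_le_mul_of_nonneg_right a1 (Real.exp_pos _).le
            _ ≤ _ := by
              rw [one_mul]
              apply Real.exp_le_exp.2
              push_cast
              nlinarith [sq_nonneg (x - 1), hx.1]
      _ = _ := by simp [hδ, mul_comm]
  have h3 : Real.exp y * (gaussianReal 0 1).real (Set.Ioi (y + δ)) ≤
      Real.exp (y + δ) * (gaussianReal 0 1).real (Set.Ioi (y + δ)) := by
    gcongr; linarith
  have h4 : Real.exp y * (gaussianReal 0 1).real (Set.Ioc y (y + δ)) ≤ Real.exp 1 * δ := by
    calc _ ≤ Real.exp y * (Real.exp (1 - y) * δ) := by gcongr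
      _ = Real.exp (y + (1 - y)) * δ := by rw [Real.exp_add]; ring
      _ = _ := by ring_nf
  rw [h1, mul_add]
  linarith

lemma gauss_cexp (z : ℂ) : ∫ w, Complex.exp (z * w) ∂(gaussianReal 0 1) = Complex.exp (z ^ 2 / 2) := by
  have := complexMGF_id_gaussianReal (μ := 0) (v := 1) z
  simp only [complexMGF, id] at this
  rw [this]; simp

lemma tail_compare : ∃ C₀ : ℝ, 0 ≤ C₀ ∧ ∀ (ν : Measure ℝ) (_ : IsProbabilityMeasure ν)
    (M T Δ : ℝ), Integrable Real.exp ν → ∫ w, Real.exp w ∂ν ≤ M → 0 < T →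
    (∫ t in (-T)..T, ‖(∫ w, Complex.exp ((1 + Complex.I * t) * w) ∂ν)
      - Complex.exp ((1 + Complex.I * t) ^ 2 / 2)‖) ≤ Δ →
    ∀ x, Real.exp x * |ν.real (Set.Ioi x) - (gaussianReal 0 1).real (Set.Ioi x)|
      ≤ C₀ * (Δ + (2 * M + Real.exp 1) / T) := by
  obtain ⟨C₀, hC, H⟩ := smoothing
  refine ⟨C₀, hC, ?_⟩
  intro ν _ M T Δ hexp hM hT hΔ x
  set D : ℝ → ℝ := fun y => tailG ν y - tailG (gaussianReal 0 1) y with hDdef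
  have hM0 : 0 ≤ M := (integral_nonneg fun w => (Real.exp_pos w).le).trans hM
  have hDint : Integrable D := (tailG_int ν hexp).sub (tailG_int _ exp_int_gauss)
  have hDf : ∀ t : ℝ, ∫ u, (D u : ℂ) * Complex.exp (Complex.I * t * u) =
      ((∫ w, Complex.exp ((1 + Complex.I * t) * w) ∂ν)
      - Complex.exp ((1 + Complex.I * t) ^ 2 / 2)) / (1 + Complex.I * t) := by
    intro t
    have hi : ∀ ν : Measure ℝ, IsProbabilityMeasure ν → Integrable Real.exp ν →
        Integrable (fun u : ℝ => (tailG ν u : ℂ) * Complex.exp (Complex.I * t * u)) := by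
      intro ν _ hν
      have := (tail_prod_int ν hν t).integral_prod_left
      simp_rw [tail_slice] at this
      exact this
    have : (fun u : ℝ => (D u : ℂ) * Complex.exp (Complex.I * t * u)) = fun u : ℝ =>
      (tailG ν u : ℂ) * Complex.exp (Complex.I * t * u) -
      (tailG (gaussianReal 0 1) u : ℂ) * Complex.exp (Complex.I * t * u) := by
      ext u; simp only [hDdef]; push_cast; ring
    rw [this, integral_sub (hi _ inferInstance hexp) (hi _ inferInstance exp_int_gauss),
      tailG_fourier _ hexp, tailG_fourier _ exp_int_gauss, gauss_cexp, sub_div]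
  have hDfc : Continuous fun t : ℝ => ∫ u, (D u : ℂ) * Complex.exp (Complex.I * t * u) := by
    refine continuous_of_dominated (bound := fun u => ‖D u‖) ?_ ?_ hDint.norm ?_
    · intro t
      refine AEStronglyMeasurable.mul ?_ (Continuous.aestronglyMeasurable (by fun_prop))
      exact Complex.continuous_ofReal.comp_aestronglyMeasurable hDint.aestronglyMeasurable
    · intro t
      refine ae_of_all _ fun u => ?_
      rw [norm_mul, Complex.norm_exp]; simp
    · refine ae_of_all _ fun u => ?_
      fun_prop
  have hne : ∀ t : ℝ, (1 + Complex.I * t : ℂ) ≠ 0 := by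
    intro t h
    have := congrArg Complex.re h
    simp at this
  have hone : ∀ t : ℝ, 1 ≤ ‖(1 + Complex.I * t : ℂ)‖ := by
    intro t
    have := Complex.abs_re_le_norm (1 + Complex.I * t)
    simpa using this
  have hmain := H (fun y => D (y / T)) ((2 * M + Real.exp 1) / T)
    (M + ∫ w, Real.exp w ∂(gaussianReal 0 1)) Δ (hDint.comp_div hT.ne') (by positivity) ?_ ?_ ?_ (x * T)
  · rw [mul_div_cancel_right₀ _ hT.ne'] at hmain
    refine le_trans (le_of_eq ?_) hmain
    rw [hDdef]
    simp only [tailG]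
    rw [← mul_sub, abs_mul, abs_of_pos (Real.exp_pos x)]
  · intro y
    have a1 := tailG_nonneg ν (y / T)
    have a2 := tailG_le ν hexp (y / T)
    have a3 := tailG_nonneg (gaussianReal 0 1) (y / T)
    have a4 := tailG_le _ exp_int_gauss (y / T)
    simp only [hDdef]
    rw [abs_le]; constructor <;> linarith
  · intro y δ hδ
    have hδ' : 0 ≤ δ / T := by positivity
    have a1 := tailG_lip ν hexp M hM (y / T) (δ / T) hδ'
    have a2 := tailG_gauss_lip (y / T) (δ / T) hδ'
    simp only [hDdef, add_div]
    have : (2 * M / T + Real.exp 1 / T) * δ = 2 * M * (δ / T) + Real.exp 1 * (δ / T) := by ring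
    linarith
  · have e1 : ∀ t : ℝ, ∫ u, ((D (u / T) : ℝ) : ℂ) * Complex.exp (Complex.I * t * u) =
        (T : ℂ) * ∫ u, (D u : ℂ) * Complex.exp (Complex.I * (t * T : ℝ) * u) := by
      intro t
      have := Measure.integral_comp_div
        (fun v : ℝ => (D v : ℂ) * Complex.exp (Complex.I * (t * T : ℝ) * v)) T
      rw [abs_of_pos hT] at this
      simp only [Complex.real_smul] at this
      rw [← this]
      congr 1; ext u
      congr 2
      push_cast
      have : (T : ℂ) ≠ 0 := by exact_mod_cast hT.ne'
      field_simp
    simp_rw [e1, norm_mul, Complex.norm_real, Real.norm_of_nonneg hT.le]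
    rw [intervalIntegral.integral_const_mul, intervalIntegral.integral_comp_mul_right
      (fun s : ℝ => ‖∫ u, (D u : ℂ) * Complex.exp (Complex.I * s * u)‖) hT.ne']
    rw [smul_eq_mul, ← mul_assoc, mul_inv_cancel₀ hT.ne', one_mul, neg_one_mul, one_mul]
    refine le_trans ?_ hΔ
    have hc2 : Continuous fun t : ℝ => ‖(∫ w, Complex.exp ((1 + Complex.I * t) * w) ∂ν)
      - Complex.exp ((1 + Complex.I * t) ^ 2 / 2)‖ := by
      have : (fun t : ℝ => ‖(∫ w, Complex.exp ((1 + Complex.I * t) * w) ∂ν)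
        - Complex.exp ((1 + Complex.I * t) ^ 2 / 2)‖) = fun t : ℝ =>
        ‖(1 + Complex.I * t : ℂ) * ∫ u, (D u : ℂ) * Complex.exp (Complex.I * t * u)‖ := by
        ext t; rw [hDf, mul_div_cancel₀ _ (hne t)]
      rw [this]
      exact ((by fun_prop : Continuous fun t : ℝ => (1 + Complex.I * t : ℂ)).mul hDfc).norm
    refine intervalIntegral.integral_mono_on (by linarith) (hDfc.norm.intervalIntegrable _ _)
      (hc2.intervalIntegrable _ _) fun t _ => ?_
    rw [hDf, norm_div]
    exact div_le_self (norm_nonneg _) (hone t)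

end BE

namespace BE

def halfP (g : ℝ → ℝ) (w : ℝ) : ℝ := ∫ x in Set.Ioi 0, {p : ℝ × ℝ | p.1 < p.2}.indicator
      (fun p => g p.1) (x, w)

lemma tail_le_exp (ν : Measure ℝ) [IsProbabilityMeasure ν] (h : Integrable Real.exp ν) (x : ℝ) :
    ν.real (Set.Ioi x) ≤ (∫ w, Real.exp w ∂ν) * Real.exp (-x) := by
  have := tailG_le ν h x
  unfold tailG at this
  rw [Real.exp_neg, ← div_eq_mul_inv, le_div_iff₀ (Real.exp_pos x)]
  linarith

lemma half_slice (_ν : Measure ℝ) (g : ℝ → ℝ) (x : ℝ) :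
    (fun w : ℝ => {p : ℝ × ℝ | p.1 < p.2}.indicator (fun p => g p.1) (x, w)) =
      (Set.Ioi x).indicator (fun _ : ℝ => g x) := by
  ext w; simp [Set.indicator]

lemma half_int1 (ν : Measure ℝ) [IsProbabilityMeasure ν] (h : Integrable Real.exp ν)
    (g : ℝ → ℝ) (hg : Measurable g) (hgi : IntegrableOn (fun x => |g x| * Real.exp (-x)) (Set.Ioi 0)) :
    IntegrableOn (fun x => g x * ν.real (Set.Ioi x)) (Set.Ioi 0) := by
  have hanti : Antitone fun x => ν.real (Set.Ioi x) := fun a b hab =>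
    measureReal_mono (Set.Ioi_subset_Ioi hab)
  refine Integrable.mono' (hgi.const_mul (∫ w, Real.exp w ∂ν)) ?_ ?_
  · exact (hg.mul hanti.measurable).aestronglyMeasurable
  · refine ae_of_all _ fun x => ?_
    rw [norm_mul, Real.norm_eq_abs, Real.norm_of_nonneg measureReal_nonneg]
    calc _ ≤ |g x| * ((∫ w, Real.exp w ∂ν) * Real.exp (-x)) := by
          gcongr; exact tail_le_exp ν h x
      _ = _ := by ring

lemma half_formula (ν : Measure ℝ) [IsProbabilityMeasure ν] (h : Integrable Real.exp ν)
    (g : ℝ → ℝ) (hg : Measurable g) (hgi : IntegrableOn (fun x => |g x| * Real.exp (-x)) (Set.Ioi 0)) :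
    Integrable (halfP g) ν ∧
    ∫ w, halfP g w ∂ν = ∫ x in Set.Ioi 0, g x * ν.real (Set.Ioi x) := by
  have hm : MeasurableSet {p : ℝ × ℝ | p.1 < p.2} := measurableSet_lt measurable_fst measurable_snd
  have hprod : Integrable (fun p : ℝ × ℝ => {p : ℝ × ℝ | p.1 < p.2}.indicator
      (fun p => g p.1) p) ((volume.restrict (Set.Ioi 0)).prod ν) := by
    rw [integrable_prod_iff]
    · constructor
      · refine ae_of_all _ fun x => ?_
        rw [half_slice ν, integrable_indicator_iff measurableSet_Ioi]
        simp
      · have : (fun x => ∫ w, ‖{p : ℝ × ℝ | p.1 < p.2}.indicator (fun p => g p.1) (x, w)‖ ∂ν)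
            = fun x => ‖g x * ν.real (Set.Ioi x)‖ := by
          ext x
          have e : (fun w : ℝ => ‖{p : ℝ × ℝ | p.1 < p.2}.indicator (fun p => g p.1) (x, w)‖) =
            (Set.Ioi x).indicator (fun _ : ℝ => ‖g x‖) := by
            ext w
            rw [congrFun (half_slice ν g x) w, norm_indicator_eq_indicator_norm]
          rw [e, integral_indicator measurableSet_Ioi]
          simp [mul_comm, abs_of_nonneg (measureReal_nonneg (μ := ν) (s := Set.Ioi x))]
        rw [this]
        exact (half_int1 ν h g hg hgi).norm
    · refine (Measurable.indicator ?_ hm).aestronglyMeasurable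
      fun_prop
  refine ⟨hprod.integral_prod_right, ?_⟩
  unfold halfP
  rw [← integral_integral_swap (f := fun x w => {p : ℝ × ℝ | p.1 < p.2}.indicator
      (fun p => g p.1) (x, w)) hprod]
  congr 1; ext x
  rw [half_slice ν, integral_indicator measurableSet_Ioi]
  simp [mul_comm]

lemma halfP_eq (g : ℝ → ℝ) (w : ℝ) : halfP g w = ∫ x in Set.Ioo 0 w, g x := by
  unfold halfP
  have : (fun x : ℝ => {p : ℝ × ℝ | p.1 < p.2}.indicator (fun p => g p.1) (x, w)) =
      (Set.Iio w).indicator g := by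
    ext x; simp [Set.indicator]
  rw [this, integral_indicator measurableSet_Iio, Measure.restrict_restrict measurableSet_Iio]
  congr 2
  ext x; simp [and_comm]

lemma h_decomp (h h' : ℝ → ℝ) (hh : ∀ x y : ℝ, h y - h x = ∫ t in x..y, h' t) (w : ℝ) :
    h w = h 0 + halfP h' w - halfP (fun x => h' (-x)) (-w) := by
  rw [halfP_eq, halfP_eq]
  rcases le_total 0 w with hw | hw
  · have h1 := hh 0 w
    rw [intervalIntegral.integral_of_le hw, integral_Ioc_eq_integral_Ioo] at h1
    have : Set.Ioo 0 (-w) = ∅ := Set.Ioo_eq_empty (by linarith)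
    rw [this]; simp; linarith
  · have h1 := hh 0 w
    have : Set.Ioo 0 w = ∅ := Set.Ioo_eq_empty (by linarith)
    rw [this]
    have h2 := intervalIntegral.integral_comp_neg (a := 0) (b := -w) h'
    rw [intervalIntegral.integral_of_le (by linarith), integral_Ioc_eq_integral_Ioo] at h2
    rw [h2, neg_neg, neg_zero, intervalIntegral.integral_symm]
    simp; linarith

lemma h_formula (ν : Measure ℝ) [IsProbabilityMeasure ν] (hp : Integrable Real.exp ν)
    (hn : Integrable Real.exp (ν.map Neg.neg)) (h h' : ℝ → ℝ) (hm : Measurable h')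
    (hh : ∀ x y : ℝ, h y - h x = ∫ t in x..y, h' t)
    (h1 : IntegrableOn (fun x => |h' x| * Real.exp (-x)) (Set.Ioi 0))
    (h2 : IntegrableOn (fun x => |h' (-x)| * Real.exp (-x)) (Set.Ioi 0)) :
    ∫ w, h w ∂ν = h 0 + (∫ x in Set.Ioi 0, h' x * ν.real (Set.Ioi x))
      - ∫ x in Set.Ioi 0, h' (-x) * (ν.map Neg.neg).real (Set.Ioi x) := by
  have : IsProbabilityMeasure (ν.map Neg.neg) := Measure.isProbabilityMeasure_map (by fun_prop)
  obtain ⟨a1, a2⟩ := half_formula ν hp h' hm h1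
  obtain ⟨b1, b2⟩ := half_formula (ν.map Neg.neg) hn (fun x => h' (-x)) (by fun_prop) h2
  have b1' := b1.comp_measurable (measurable_neg)
  rw [integral_map (by fun_prop) b1.aestronglyMeasurable] at b2
  rw [← a2, ← b2]
  have : h = fun w => h 0 + halfP h' w - halfP (fun x => h' (-x)) (-w) := by
    ext w; exact h_decomp h h' hh w
  conv_lhs => rw [this]
  have e1 := integral_sub (μ := ν) (f := fun w => h 0 + halfP h' w)
    (g := fun w => halfP (fun x => h' (-x)) (-w)) ((integrable_const _).add a1) b1'
  have e2 := integral_add (μ := ν) (f := fun _ => h 0) (g := fun w => halfP h' w)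
    (integrable_const _) a1
  rw [e1, e2]
  simp

lemma weight_bd (s : ℝ) (hs : 0 ≤ s) : ∃ c : ℝ, 0 ≤ c ∧ ∀ x : ℝ, 0 ≤ x → Real.exp (-x) ≤ c * (1 + x ^ s)⁻¹ := by
  obtain ⟨N, hN⟩ := exists_nat_ge s
  refine ⟨2 + (N.factorial : ℝ), by positivity, fun x hx => ?_⟩
  have hp : 0 ≤ x ^ s := Real.rpow_nonneg hx s
  rw [← div_eq_mul_inv, le_div_iff₀ (by positivity), Real.exp_neg, inv_mul_le_iff₀ (Real.exp_pos x)]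
  have h1 : 1 ≤ Real.exp x := Real.one_le_exp hx
  have h2 : x ^ N / N.factorial ≤ Real.exp x := Real.pow_div_factorial_le_exp x hx N
  rw [div_le_iff₀ (by positivity)] at h2
  have h3 : x ^ s ≤ 1 + x ^ N := by
    rcases le_total x 1 with hx1 | hx1
    · have := Real.rpow_le_one hx hx1 hs
      have : 0 ≤ x ^ N := by positivity
      linarith
    · have := Real.rpow_le_rpow_of_exponent_le hx1 hN
      rw [Real.rpow_natCast] at this
      linarith
  nlinarith

lemma smooth_compare (s : ℝ) (hs : 0 ≤ s) : ∃ c : ℝ, 0 ≤ c ∧ ∀ (ν : Measure ℝ) (_ : IsProbabilityMeasure ν)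
    (E : ℝ), Integrable Real.exp ν → Integrable Real.exp (ν.map Neg.neg) →
    (∀ x, Real.exp x * |ν.real (Set.Ioi x) - (gaussianReal 0 1).real (Set.Ioi x)| ≤ E) →
    (∀ x, Real.exp x * |(ν.map Neg.neg).real (Set.Ioi x) - (gaussianReal 0 1).real (Set.Ioi x)| ≤ E) →
    ∀ h h' : ℝ → ℝ, Measurable h' → (∀ x y : ℝ, h y - h x = ∫ t in x..y, h' t) →
      Integrable (fun x => |h' x| / (1 + |x| ^ s)) volume →
      |(∫ w, h w ∂ν) - ∫ x, h x ∂(gaussianReal 0 1)| ≤ c * E * ∫ x, |h' x| / (1 + |x| ^ s) := by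
  obtain ⟨c, hc, hw⟩ := weight_bd s hs
  refine ⟨c, hc, ?_⟩
  intro ν _ E hp hn hE1 hE2 h h' hm hh hI
  have : IsProbabilityMeasure (ν.map Neg.neg) := Measure.isProbabilityMeasure_map (by fun_prop)
  have hE0 : 0 ≤ E := (by positivity : (0:ℝ) ≤ _).trans (hE1 0)
  have gneg : (gaussianReal 0 1).map Neg.neg = gaussianReal 0 1 := by
    have := gaussianReal_map_neg (μ := 0) (v := 1)
    simpa using this
  set W : ℝ → ℝ := fun x => |h' x| / (1 + |x| ^ s) with hW
  have wb : ∀ x : ℝ, 0 < x → ∀ y, |y| = x → |h' y| * Real.exp (-x) ≤ c * W y := by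
    intro x hx y hy
    have := hw x hx.le
    simp only [hW, hy, div_eq_mul_inv]
    calc _ ≤ |h' y| * (c * (1 + x ^ s)⁻¹) := by gcongr
      _ = _ := by ring
  have hI' : Integrable (fun x => W (-x)) := hI.comp_neg
  have h1 : IntegrableOn (fun x => |h' x| * Real.exp (-x)) (Set.Ioi 0) := by
    refine Integrable.mono' (hI.const_mul c).integrableOn
      (by fun_prop : Measurable _).aestronglyMeasurable ?_
    filter_upwards [ae_restrict_mem measurableSet_Ioi] with x hx
    rw [Real.norm_of_nonneg (by positivity)]
    exact wb x hx x (abs_of_pos hx)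
  have h2 : IntegrableOn (fun x => |h' (-x)| * Real.exp (-x)) (Set.Ioi 0) := by
    refine Integrable.mono' (hI'.const_mul c).integrableOn
      (by fun_prop : Measurable _).aestronglyMeasurable ?_
    filter_upwards [ae_restrict_mem measurableSet_Ioi] with x hx
    rw [Real.norm_of_nonneg (by positivity)]
    exact wb x hx (-x) (by rw [abs_neg]; exact abs_of_pos hx)
  rw [h_formula ν hp hn h h' hm hh h1 h2, h_formula (gaussianReal 0 1) exp_int_gauss
    (by rw [gneg]; exact exp_int_gauss) h h' hm hh h1 h2, gneg]
  have key : ∀ (ν : Measure ℝ) (_ : IsProbabilityMeasure ν) (_ : Integrable Real.exp ν)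
      (_ : ∀ x, Real.exp x * |ν.real (Set.Ioi x) - (gaussianReal 0 1).real (Set.Ioi x)| ≤ E)
      (g V : ℝ → ℝ) (_ : Measurable g) (_ : Integrable V)
      (_ : ∀ x : ℝ, 0 < x → |g x| * Real.exp (-x) ≤ c * V x)
      (_ : IntegrableOn (fun x => |g x| * Real.exp (-x)) (Set.Ioi 0)),
      |(∫ x in Set.Ioi 0, g x * ν.real (Set.Ioi x)) -
        ∫ x in Set.Ioi 0, g x * (gaussianReal 0 1).real (Set.Ioi x)| ≤
      c * E * ∫ x in Set.Ioi 0, V x := by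
    intro ν _ hν hE g V hg hV hgV hgi
    rw [← integral_sub (half_int1 ν hν g hg hgi) (half_int1 _ exp_int_gauss g hg hgi),
      ← integral_const_mul, ← Real.norm_eq_abs]
    refine norm_integral_le_of_norm_le (hV.const_mul _).integrableOn ?_
    filter_upwards [ae_restrict_mem measurableSet_Ioi] with x hx
    rw [← mul_sub, norm_mul, Real.norm_eq_abs, Real.norm_eq_abs]
    have a1 := hE x
    have a2 := hgV x hx
    have a3 : |ν.real (Set.Ioi x) - (gaussianReal 0 1).real (Set.Ioi x)| ≤ E * Real.exp (-x) := by
      rw [Real.exp_neg, ← div_eq_mul_inv, le_div_iff₀ (Real.exp_pos x)]; linarith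
    calc _ ≤ |g x| * (E * Real.exp (-x)) := by gcongr
      _ = E * (|g x| * Real.exp (-x)) := by ring
      _ ≤ E * (c * V x) := by gcongr
      _ = _ := by ring
  have k1 := key ν inferInstance hp hE1 h' W hm hI (fun x hx => wb x hx x (abs_of_pos hx)) h1
  have k2 := key (ν.map Neg.neg) inferInstance hn hE2 (fun x => h' (-x)) (fun x => W (-x))
    (by fun_prop) hI' (fun x hx => wb x hx (-x) (by rw [abs_neg]; exact abs_of_pos hx)) h2
  have e : ∫ x, W x = (∫ x in Set.Ioi 0, W x) + ∫ x in Set.Ioi 0, W (-x) := by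
    rw [integral_comp_neg_Ioi, neg_zero, ← integral_add_compl (measurableSet_Ioi (a := (0 : ℝ))) hI,
      Set.compl_Ioi]
  rw [e, mul_add]
  rw [abs_le] at k1 k2 ⊢
  constructor <;> linarith [k1.1, k1.2, k2.1, k2.2]

end BE

namespace BE

/-- strongly measurable w.r.t. a sub-sigma-algebra and a.e. bounded -/
structure Bdd {α E : Type*} [NormedAddCommGroup E] {m0 : MeasurableSpace α} (μ : Measure α)
    (m : MeasurableSpace α) (f : α → E) : Prop where
  sm : StronglyMeasurable[m] f
  bd : ∃ R : ℝ, ∀ᵐ ω ∂μ, ‖f ω‖ ≤ R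

section
variable {α E : Type*} [NormedAddCommGroup E] {m m' : MeasurableSpace α} {m0 : MeasurableSpace α}
  {μ : Measure α}

lemma Bdd.mono {f : α → E} (h : Bdd μ m f) (hm : m ≤ m') : Bdd μ m' f := ⟨h.sm.mono hm, h.bd⟩

lemma Bdd.const (c : E) : Bdd μ m (fun _ => c) :=
  ⟨stronglyMeasurable_const, ‖c‖, ae_of_all _ fun _ => le_rfl⟩

lemma Bdd.add {f g : α → E} (hf : Bdd μ m f) (hg : Bdd μ m g) : Bdd μ m (fun ω => f ω + g ω) := by
  obtain ⟨R, hR⟩ := hf.bd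
  obtain ⟨R', hR'⟩ := hg.bd
  refine ⟨hf.sm.add hg.sm, R + R', ?_⟩
  filter_upwards [hR, hR'] with ω h1 h2
  exact (norm_add_le _ _).trans (add_le_add h1 h2)

lemma Bdd.sub {f g : α → E} (hf : Bdd μ m f) (hg : Bdd μ m g) : Bdd μ m (fun ω => f ω - g ω) := by
  obtain ⟨R, hR⟩ := hf.bd
  obtain ⟨R', hR'⟩ := hg.bd
  refine ⟨hf.sm.sub hg.sm, R + R', ?_⟩
  filter_upwards [hR, hR'] with ω h1 h2
  exact (norm_sub_le _ _).trans (add_le_add h1 h2)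

lemma Bdd.mul {𝕜 : Type*} [RCLike 𝕜] {f g : α → 𝕜} (hf : Bdd μ m f) (hg : Bdd μ m g) :
    Bdd μ m (fun ω => f ω * g ω) := by
  obtain ⟨R, hR⟩ := hf.bd
  obtain ⟨R', hR'⟩ := hg.bd
  refine ⟨hf.sm.mul hg.sm, R * R', ?_⟩
  filter_upwards [hR, hR'] with ω h1 h2
  rw [norm_mul]
  exact mul_le_mul h1 h2 (norm_nonneg _) ((norm_nonneg _).trans h1)

lemma Bdd.ofReal {f : α → ℝ} (hf : Bdd μ m f) : Bdd μ m (fun ω => (f ω : ℂ)) := by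
  obtain ⟨R, hR⟩ := hf.bd
  refine ⟨Complex.continuous_ofReal.comp_stronglyMeasurable hf.sm, R, ?_⟩
  filter_upwards [hR] with ω h1
  simpa using h1

lemma Bdd.cexp {f : α → ℂ} (hf : Bdd μ m f) : Bdd μ m (fun ω => Complex.exp (f ω)) := by
  obtain ⟨R, hR⟩ := hf.bd
  refine ⟨Complex.continuous_exp.comp_stronglyMeasurable hf.sm, Real.exp R, ?_⟩
  filter_upwards [hR] with ω h1
  exact (Complex.norm_exp_le_exp_norm _).trans (Real.exp_le_exp.2 h1)

lemma Bdd.sum {ι : Type*} {f : ι → α → E} (s : Finset ι) (hf : ∀ i, Bdd μ m (f i)) :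
    Bdd μ m (fun ω => ∑ i ∈ s, f i ω) := by
  classical
  induction s using Finset.induction_on with
  | empty => simpa using Bdd.const (0 : E)
  | insert a s ha ih =>
    simp only [Finset.sum_insert ha]
    exact (hf a).add ih

variable [IsProbabilityMeasure μ]

lemma Bdd.memLp {f : α → E} (hf : Bdd μ m f) (hm : m ≤ m0) (p : ℝ≥0∞) : MemLp f p μ := by
  obtain ⟨R, hR⟩ := hf.bd
  exact MemLp.of_bound (hf.sm.mono hm).aestronglyMeasurable R hR

lemma Bdd.integrable {f : α → E} (hf : Bdd μ m f) (hm : m ≤ m0) : Integrable f μ :=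
  memLp_one_iff_integrable.1 (hf.memLp hm 1)

lemma Bdd.condExp [NormedSpace ℝ E] [CompleteSpace E] {f : α → E} (hf : ∃ R : ℝ, ∀ᵐ ω ∂μ, ‖f ω‖ ≤ R) :
    Bdd μ m (μ[f|m]) := by
  obtain ⟨R, hR⟩ := hf
  exact ⟨stronglyMeasurable_condExp, R, ae_bdd_norm_condExp_of_ae_bdd_norm hR⟩

lemma condExp_mulC {f g : α → ℂ} (hm : m ≤ m0) (hm' : m' ≤ m0) (hf : Bdd μ m f) (hg : Bdd μ m' g) :
    μ[fun ω => f ω * g ω|m] =ᵐ[μ] fun ω => f ω * (μ[g|m]) ω := by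
  have h1 : Bdd μ m0 (fun ω => f ω * g ω) := (hf.mono hm).mul (hg.mono hm')
  exact condExp_bilin_of_stronglyMeasurable_left (ContinuousLinearMap.mul ℝ ℂ) hf.sm
    (h1.integrable le_rfl) (hg.integrable hm')

/-- L2 norm -/
abbrev n2 (μ : Measure α) (f : α → E) : ℝ := lpNorm f 2 μ

lemma n2_sq {f : α → E} (hf : AEStronglyMeasurable f μ) : n2 μ f ^ 2 = ∫ ω, ‖f ω‖^2 ∂μ := by
  rw [n2, lpNorm_eq_integral_norm_rpow_toReal (by simp) (by simp) hf, ← Real.rpow_natCast,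
    ← Real.rpow_mul (integral_nonneg fun _ => by positivity)]
  simp

lemma n2_nonneg (f : α → E) : 0 ≤ n2 μ f := lpNorm_nonneg

lemma n2_const (c : E) : n2 μ (fun _ : α => c) = ‖c‖ := by
  rw [n2, lpNorm_const' (by simp) (by simp)]; simp

lemma n2_congr {f g : α → E} (h : f =ᵐ[μ] g) : n2 μ f = n2 μ g := by
  by_cases hf : AEStronglyMeasurable f μ
  · rw [n2, n2, ← toReal_eLpNorm hf, ← toReal_eLpNorm (hf.congr h), eLpNorm_congr_ae h]
  · rw [n2, n2, lpNorm_of_not_aestronglyMeasurable hf,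
      lpNorm_of_not_aestronglyMeasurable fun hg => hf (hg.congr h.symm)]

lemma n2_le_of_sq {f : α → E} (hf : AEStronglyMeasurable f μ) {g : α → ℝ} (hg : Integrable g μ)
    (h : ∀ᵐ ω ∂μ, ‖f ω‖^2 ≤ g ω) {r : ℝ} (hr : 0 ≤ r) (hgr : ∫ ω, g ω ∂μ ≤ r^2) : n2 μ f ≤ r := by
  refine le_of_sq_le_sq ?_ hr
  rw [n2_sq hf]
  refine le_trans (integral_mono_of_nonneg (ae_of_all _ fun _ => by positivity) hg h) hgr

lemma n2_mono_mul {F' : Type*} [NormedAddCommGroup F'] {f : α → E} {g : α → F'} (hf : AEStronglyMeasurable f μ) (hg : MemLp g 2 μ)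
    {c : ℝ} (hc : 0 ≤ c) (h : ∀ᵐ ω ∂μ, ‖f ω‖ ≤ c * ‖g ω‖) : n2 μ f ≤ c * n2 μ g := by
  have hi : Integrable (fun ω => ‖g ω‖^2) μ := hg.integrable_norm_pow (by norm_num)
  refine n2_le_of_sq hf (g := fun ω => c^2 * ‖g ω‖^2) (hi.const_mul _) ?_
    (mul_nonneg hc (n2_nonneg _)) ?_
  · filter_upwards [h] with ω hω
    rw [← mul_pow]
    exact pow_le_pow_left₀ (norm_nonneg _) hω 2
  · rw [integral_const_mul, mul_pow, n2_sq hg.aestronglyMeasurable]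

lemma n2_add_le {f g : α → E} (hf : MemLp f 2 μ) (_hg : MemLp g 2 μ) :
    n2 μ (fun ω => f ω + g ω) ≤ n2 μ f + n2 μ g :=
  lpNorm_add_le hf (by norm_num)

lemma n2_condExp_le [NormedSpace ℝ E] [CompleteSpace E] {f : α → E} (hf : MemLp f 2 μ) :
    n2 μ (μ[f|m]) ≤ n2 μ f := hf.lpNorm_condExp_le_lpNorm (by norm_num)

lemma integral_mul_le_n2 {f g : α → ℂ} (hf : MemLp f 2 μ) (hg : MemLp g 2 μ) :
    ‖∫ ω, f ω * g ω ∂μ‖ ≤ n2 μ f * n2 μ g := by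
  have h1 := integral_mul_norm_le_Lp_mul_Lq (μ := μ) (p := 2) (q := 2) (f := f) (g := g)
    (by constructor <;> norm_num) (by simpa using hf) (by simpa using hg)
  refine (norm_integral_le_integral_norm _).trans ?_
  simp only [norm_mul]
  refine h1.trans (le_of_eq ?_)
  rw [n2, n2, lpNorm_eq_integral_norm_rpow_toReal (by simp) (by simp) hf.1,
    lpNorm_eq_integral_norm_rpow_toReal (by simp) (by simp) hg.1]
  simp

end

lemma backrec {β : Type*} (Φ : ℕ → β → β) (a : β) (n : ℕ) :
    ∃ w : ℕ → β, (∀ k, n ≤ k → w k = a) ∧ ∀ k, k < n → w k = Φ k (w (k+1)) := by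
  refine ⟨fun k => Nat.rec a (fun i x => Φ (n - 1 - i) x) (n - k), fun k hk => ?_, fun k hk => ?_⟩
  · simp [Nat.sub_eq_zero_of_le hk]
  · have h1 : n - k = (n - (k+1)) + 1 := by omega
    have h2 : n - 1 - (n - (k+1)) = k := by omega
    simp only [h1]
    rw [h2]

/-- backward strong induction -/
lemma back_ind (n : ℕ) (P : ℕ → Prop) (h0 : ∀ k, n ≤ k → P k) (h1 : ∀ k, k < n → (∀ j, k < j → P j) → P k)
    (k : ℕ) : P k := by
  have : ∀ i k, n - k ≤ i → P k := by
    intro i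
    induction i with
    | zero => intro k hk; exact h0 k (by omega)
    | succ i ih =>
      intro k hk
      by_cases hkn : n ≤ k
      · exact h0 k hkn
      · exact h1 k (by omega) fun j hj => ih j (by omega)
  exact this _ k le_rfl
end BE

namespace BE

structure Chain {α : Type*} {m0 : MeasurableSpace α} (μ : Measure α) (F G : ℕ → MeasurableSpace α)
    (N : ℕ) (q ρ : ℝ) : Prop where
  mono : Monotone F
  le : ∀ k, F k ≤ m0
  GF : ∀ k, G k ≤ F k
  F0 : F 0 = ⊥
  mR : ∀ k (g : α → ℝ), Bdd μ (G (k+1)) g → μ[g|F k] =ᵐ[μ] μ[g|G k]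
  mC : ∀ k (g : α → ℂ), Bdd μ (G (k+1)) g → μ[g|F k] =ᵐ[μ] μ[g|G k]
  dinf : ∀ k (g : α → ℝ) (c R : ℝ), Bdd μ (G (k+N)) g → (∀ᵐ ω ∂μ, |g ω - c| ≤ R) →
    ∃ b : ℝ, ∀ᵐ ω ∂μ, |(μ[g|F k]) ω - b| ≤ q * R
  d2 : ∀ k (g : α → ℂ), Bdd μ (G (k+N)) g → ∫ ω, g ω ∂μ = 0 →
    n2 μ (μ[g|F k]) ≤ ρ * n2 μ g

section
variable {α : Type*} {m0 : MeasurableSpace α} {μ : Measure α} [IsProbabilityMeasure μ]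
  {F G : ℕ → MeasurableSpace α} {N : ℕ} {q ρ : ℝ}

lemma Chain.Gle (h : Chain μ F G N q ρ) (k : ℕ) : G k ≤ m0 := (h.GF k).trans (h.le k)

lemma condExp_near {m m0 : MeasurableSpace α} {μ : Measure α} [IsProbabilityMeasure μ] (hm : m ≤ m0) {g : α → ℝ}
    (hg : Integrable g μ) {c R : ℝ}
    (h : ∀ᵐ ω ∂μ, |g ω - c| ≤ R) : ∀ᵐ ω ∂μ, |(μ[g|m]) ω - c| ≤ R := by
  have h1 := ae_bdd_norm_condExp_of_ae_bdd_norm (m := m) (μ := μ) (f := fun ω => g ω - c) (R := R)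
    (by simpa using h)
  have h2 : μ[fun ω => g ω - c|m] =ᵐ[μ] μ[g|m] - μ[fun _ => c|m] :=
    condExp_sub hg (integrable_const c) m
  rw [condExp_const hm] at h2
  filter_upwards [h1, h2] with ω a b
  rw [b] at a
  simpa using a

lemma mart_decomp (hc : Chain μ F G N q ρ) (hN : 0 < N) (hq : q < 1) (n : ℕ) (Y : ℕ → α → ℝ)
    (C : ℝ) (hC : 0 ≤ C) (hY : ∀ k, Bdd μ (G (k+1)) (Y k)) (hYC : ∀ k, ∀ᵐ ω ∂μ, |Y k ω| ≤ C)
    (hY0 : ∀ k, n ≤ k → Y k = 0) :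
    ∃ B : ℕ → α → ℝ, (∀ k, Bdd μ (G k) (B k)) ∧ (∀ k, n ≤ k → B k = 0) ∧
      (∀ k, B k =ᵐ[μ] μ[fun ω => Y k ω + B (k+1) ω|F k]) ∧
      ∀ k, ∀ᵐ ω ∂μ, |Y k ω + B (k+1) ω - B k ω| ≤ 2 * (C + N * C / (1 - q)) := by
  obtain ⟨B, hB0, hB1⟩ := backrec (fun k b => μ[fun ω => Y k ω + b ω|G k]) (0 : α → ℝ) n
  have hBd : ∀ k, Bdd μ (G k) (B k) := by
    refine back_ind n _ (fun k hk => ?_) fun k hk ih => ?_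
    · rw [hB0 k hk]; exact Bdd.const 0
    · rw [hB1 k hk]
      exact Bdd.condExp ((hY k).add (ih (k+1) (by omega))).bd
  have hBF : ∀ k, B k =ᵐ[μ] μ[fun ω => Y k ω + B (k+1) ω|F k] := by
    intro k
    by_cases hk : k < n
    · rw [hB1 k hk]
      exact (hc.mR k _ ((hY k).add (hBd (k+1)))).symm
    · rw [hB0 k (by omega), hB0 (k+1) (by omega), hY0 k (by omega)]
      simp only [Pi.zero_apply, add_zero]
      have := condExp_const (μ := μ) (hc.le k) (0:ℝ)
      rw [this]; rfl
  have hstep : ∀ k j, ∀ᵐ ω ∂μ, |B k ω - (μ[B (k+j)|F k]) ω| ≤ j * C := by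
    intro k j
    induction j with
    | zero =>
      have : μ[B (k+0)|F k] = B k :=
        condExp_of_stronglyMeasurable (hc.le k) ((hBd k).sm.mono (hc.GF k)) ((hBd k).integrable (hc.Gle k))
      rw [this]; simp
    | succ j ih =>
      have i1 : Integrable (B (k+j)) μ := (hBd (k+j)).integrable (hc.Gle _)
      have i2 : Integrable (B (k+j+1)) μ := (hBd (k+j+1)).integrable (hc.Gle _)
      have i3 : Integrable (Y (k+j)) μ := (hY (k+j)).integrable (hc.Gle _)
      -- E[B (k+j) | F k] = E[Y + B(k+j+1) | F k]
      have e1 : μ[B (k+j)|F k] =ᵐ[μ] μ[fun ω => Y (k+j) ω + B (k+j+1) ω|F k] :=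
        (condExp_congr_ae (hBF (k+j))).trans (condExp_condExp_of_le (hc.mono (by omega)) (hc.le _))
      have e2 : μ[fun ω => Y (k+j) ω + B (k+j+1) ω|F k] =ᵐ[μ] μ[Y (k+j)|F k] + μ[B (k+j+1)|F k] :=
        condExp_add i3 i2 _
      have e3 : ∀ᵐ ω ∂μ, ‖(μ[Y (k+j)|F k]) ω‖ ≤ C :=
        ae_bdd_norm_condExp_of_ae_bdd_norm (by simpa using hYC (k+j))
      filter_upwards [ih, e1, e2, e3] with ω a b c d
      rw [b, c] at a
      rw [show k + (j+1) = k+j+1 by omega]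
      simp only [Pi.add_apply, Real.norm_eq_abs] at a d
      push_cast
      rw [abs_le] at *
      constructor <;> nlinarith
  set R : ℝ := N * C / (1 - q) with hR
  have hR0 : 0 ≤ R := by
    have : 0 < 1 - q := by linarith
    positivity
  have hosc : ∀ k, ∃ b : ℝ, ∀ᵐ ω ∂μ, |B k ω - b| ≤ R := by
    refine back_ind n _ (fun k hk => ⟨0, ?_⟩) fun k hk ih => ?_
    · rw [hB0 k hk]; simp [hR0]
    · obtain ⟨c, hcc⟩ := ih (k+N) (by omega)
      obtain ⟨b, hb⟩ := hc.dinf k _ c R (hBd (k+N)) hcc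
      refine ⟨b, ?_⟩
      filter_upwards [hb, hstep k N] with ω h1 h2
      have h3 : q * R + N * C = R := by
        have hq' : (1 - q) ≠ 0 := by linarith
        rw [hR]; field_simp; ring
      calc _ ≤ |B k ω - (μ[B (k+N)|F k]) ω| + |(μ[B (k+N)|F k]) ω - b| := abs_sub_le _ _ _
        _ ≤ R := by linarith
  refine ⟨B, hBd, hB0, hBF, fun k => ?_⟩
  obtain ⟨b, hb⟩ := hosc (k+1)
  have h1 : ∀ᵐ ω ∂μ, |Y k ω + B (k+1) ω - b| ≤ C + R := by
    filter_upwards [hb, hYC k] with ω h1 h2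
    calc _ = |Y k ω + (B (k+1) ω - b)| := by ring_nf
      _ ≤ _ := (abs_add_le _ _).trans (add_le_add h2 h1)
  have h2 := condExp_near (hc.le k) (((hY k).add (hBd (k+1))).integrable (hc.Gle _)) h1
  filter_upwards [h1, h2, hBF k] with ω a c d
  rw [← d] at c
  calc _ ≤ |Y k ω + B (k+1) ω - b| + |b - B k ω| := abs_sub_le _ _ _
    _ ≤ _ := by rw [abs_sub_comm b]; linarith
end
end BE

namespace BE

lemma cexp3 {x : ℂ} (hx : ‖x‖ ≤ 1) : ‖Complex.exp x - 1 - x - x^2/2‖ ≤ ‖x‖^3 := by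
  have h := Complex.exp_bound hx (n := 3) (by norm_num)
  have e : Complex.exp x - ∑ m ∈ Finset.range 3, x ^ m / (m.factorial : ℂ) = Complex.exp x - 1 - x - x^2/2 := by
    simp [Finset.sum_range_succ, Nat.factorial]; ring
  rw [e] at h
  refine h.trans ?_
  have : 0 ≤ ‖x‖^3 := by positivity
  norm_num [Nat.factorial]
  nlinarith

section
variable {α : Type*} {m m0 : MeasurableSpace α} {μ : Measure α} [IsProbabilityMeasure μ]

lemma n2_ofReal {ξ : α → ℝ} (h : AEStronglyMeasurable ξ μ) : n2 μ (fun ω => (ξ ω : ℂ)) = n2 μ ξ := by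
  have h1 := lpNorm_norm (p := 2) (f := fun ω => (ξ ω : ℂ)) (μ := μ)
    (Complex.continuous_ofReal.comp_aestronglyMeasurable h)
  have h2 := lpNorm_norm h 2
  rw [n2, ← h1, n2, ← h2]; simp

lemma condExp_ofReal_zero {ξ : α → ℝ} (h : Bdd μ m0 ξ) (h0 : μ[ξ|m] =ᵐ[μ] 0) :
    μ[fun ω => (ξ ω : ℂ)|m] =ᵐ[μ] 0 := by
  have hi := h.integrable le_rfl
  have := Complex.ofRealCLM.comp_condExp_comm (μ := μ) (m := m) hi
  have e : (fun ω => (ξ ω : ℂ)) = Complex.ofRealCLM ∘ ξ := rfl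
  rw [e]
  refine this.symm.trans ?_
  filter_upwards [h0] with ω hω
  simp [hω]

lemma local_step (hm : m ≤ m0) {ξ : α → ℝ} {w : α → ℂ} {K : ℝ} {z : ℂ}
    (hξ : Bdd μ m0 ξ) (hK : ∀ᵐ ω ∂μ, |ξ ω| ≤ K) (hξ0 : μ[ξ|m] =ᵐ[μ] 0)
    (hw : Bdd μ m0 w) (hw1 : ∫ ω, w ω ∂μ = 1) (hR : n2 μ (fun ω => w ω - 1) ≤ 1)
    (hK0 : 0 ≤ K) (hε : ‖z‖ * K ≤ 1/16) :
    ‖(∫ ω, Complex.exp (z * ξ ω) * w ω ∂μ) - 1 - z^2 * (n2 μ ξ)^2/2‖ ≤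
        ‖z‖^3 * K * (n2 μ ξ)^2 + 2 * ‖z‖ * n2 μ ξ * n2 μ (fun ω => w ω - 1) ∧
    ‖(∫ ω, Complex.exp (z * ξ ω) * w ω ∂μ) - 1‖ ≤ 3 * (‖z‖ * K) ∧
    n2 μ (fun ω => (∫ ω, Complex.exp (z * ξ ω) * w ω ∂μ)⁻¹ *
        (μ[fun ω => Complex.exp (z * ξ ω) * w ω|m]) ω - 1 - (μ[fun ω => w ω - 1|m]) ω)
      ≤ 4 * (‖z‖ * K) * ‖z‖ * n2 μ ξ + 14 * (‖z‖ * K) * n2 μ (fun ω => w ω - 1) := by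
  set r : α → ℂ := fun ω => w ω - 1 with hr
  set R := n2 μ r with hRdef
  set s := n2 μ ξ with hs
  set lam := ∫ ω, Complex.exp (z * ξ ω) * w ω ∂μ with hlam
  set ε := ‖z‖ * K with hεd
  have hε0 : 0 ≤ ε := by positivity
  have hs0 : 0 ≤ s := n2_nonneg _
  have hR0 : 0 ≤ R := n2_nonneg _
  have bξ : Bdd μ m0 (fun ω => (ξ ω : ℂ)) := hξ.ofReal
  have bzξ : Bdd μ m0 (fun ω => z * (ξ ω : ℂ)) := (Bdd.const z).mul bξ
  have be : Bdd μ m0 (fun ω => Complex.exp (z * ξ ω)) := bzξ.cexp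
  have br : Bdd μ m0 r := hw.sub (Bdd.const 1)
  have bt : Bdd μ m0 (fun ω => Complex.exp (z * ξ ω) - 1) := be.sub (Bdd.const 1)
  have bt2 : Bdd μ m0 (fun ω => Complex.exp (z * ξ ω) - 1 - z * ξ ω) := bt.sub bzξ
  have bq : Bdd μ m0 (fun ω => (z * ξ ω)^2/2) := by
    have := (bzξ.mul bzξ).mul (Bdd.const (m := m0) (μ := μ) (1/2 : ℂ))
    refine (congrArg (Bdd μ m0) ?_).mp this
    ext ω; ring
  have bu : Bdd μ m0 (fun ω => Complex.exp (z * ξ ω) - 1 - z * ξ ω - (z * ξ ω)^2/2) := bt2.sub bq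
  have mξ : MemLp ξ 2 μ := hξ.memLp le_rfl 2
  have hsq : s^2 = ∫ ω, (ξ ω)^2 ∂μ := by
    rw [hs, n2_sq mξ.1]; simp
  have hi2 : Integrable (fun ω => (ξ ω)^2) μ := by simpa using mξ.integrable_sq
  have hzx : ∀ᵐ ω ∂μ, ‖z * (ξ ω : ℂ)‖ ≤ ε := by
    filter_upwards [hK] with ω h
    rw [norm_mul, Complex.norm_real]
    exact mul_le_mul_of_nonneg_left h (norm_nonneg _)
  have hsK : s ≤ K := by
    have : n2 μ ξ ≤ K * n2 μ (fun _ : α => (1:ℝ)) := by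
      refine n2_mono_mul mξ.1 (memLp_const _) hK0 ?_
      filter_upwards [hK] with ω h
      simpa using h
    rw [n2_const] at this; simpa using this
  have hξint : ∫ ω, (ξ ω : ℂ) ∂μ = 0 := by
    rw [integral_complex_ofReal, ← integral_condExp hm, integral_congr_ae hξ0]; simp
  have hrint : ∫ ω, r ω ∂μ = 0 := by
    rw [hr, integral_sub (hw.integrable le_rfl) (integrable_const _), hw1]; simp
  -- lambda expansion
  have hexp : lam - 1 - z^2 * s^2/2 = (∫ ω, (Complex.exp (z * ξ ω) - 1 - z * ξ ω - (z * ξ ω)^2/2) ∂μ)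
      + ∫ ω, (Complex.exp (z * ξ ω) - 1) * r ω ∂μ := by
    have e1 : ∀ ω, Complex.exp (z * ξ ω) * w ω = (Complex.exp (z * ξ ω) - 1 - z * ξ ω - (z * ξ ω)^2/2)
      + (Complex.exp (z * ξ ω) - 1) * r ω + (1 + z * ξ ω + (z * ξ ω)^2/2 + r ω) := by
      intro ω; simp only [hr]; ring
    have i1 := bu.integrable le_rfl
    have i2 := (bt.mul br).integrable le_rfl
    have i4 : Integrable (fun ω => 1 + z * (ξ ω : ℂ)) μ := ((Bdd.const 1).add bzξ).integrable le_rfl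
    have i3 := (((Bdd.const 1).add bzξ).add bq).integrable le_rfl
    have e2 : ∫ ω, (1 + z * (ξ ω : ℂ) + (z * ξ ω)^2/2 + r ω) ∂μ = 1 + z^2 * s^2/2 := by
      rw [integral_add i3 (br.integrable le_rfl), hrint, integral_add i4 (bq.integrable le_rfl),
        integral_add (integrable_const _) (bzξ.integrable le_rfl), integral_const_mul, hξint]
      have : ∀ ω, (z * (ξ ω : ℂ))^2/2 = z^2/2 * (((ξ ω)^2 : ℝ) : ℂ) := by
        intro ω; push_cast; ring
      simp_rw [this]
      rw [integral_const_mul, integral_complex_ofReal, ← hsq]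
      simp; ring
    rw [hlam]
    simp_rw [e1]
    rw [integral_add ((bu.add (bt.mul br)).integrable le_rfl) ((((Bdd.const 1).add bzξ).add bq).add br |>.integrable le_rfl), integral_add i1 i2, e2]
    ring
  have hu : ‖∫ ω, (Complex.exp (z * ξ ω) - 1 - z * ξ ω - (z * ξ ω)^2/2) ∂μ‖ ≤ ‖z‖^3 * K * s^2 := by
    rw [hsq, ← integral_const_mul]
    refine norm_integral_le_of_norm_le (hi2.const_mul _) ?_
    filter_upwards [hzx, hK] with ω h1 h2
    refine (cexp3 (by linarith)).trans ?_
    rw [norm_mul, Complex.norm_real, mul_pow, Real.norm_eq_abs, pow_succ |ξ ω|, sq_abs, mul_assoc,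
      mul_comm K]
    gcongr
  have hbt : n2 μ (fun ω => Complex.exp (z * ξ ω) - 1) ≤ 2 * ‖z‖ * s := by
    refine n2_mono_mul (bt.memLp le_rfl 2).1 mξ (by positivity) ?_
    filter_upwards [hzx] with ω h1
    have := Complex.norm_exp_sub_one_le (x := z * ξ ω) (by linarith)
    rw [norm_mul, Complex.norm_real] at this
    linarith
  have htr : ‖∫ ω, (Complex.exp (z * ξ ω) - 1) * r ω ∂μ‖ ≤ 2 * ‖z‖ * s * R :=
    (integral_mul_le_n2 (bt.memLp le_rfl 2) (br.memLp le_rfl 2)).trans (by gcongr)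
  have ha : ‖lam - 1 - z^2 * s^2/2‖ ≤ ‖z‖^3 * K * s^2 + 2 * ‖z‖ * s * R := by
    rw [hexp]
    exact (norm_add_le _ _).trans (add_le_add hu htr)
  have hz0 := norm_nonneg z
  have hzs : ‖z‖ * s ≤ ε := mul_le_mul_of_nonneg_left hsK hz0
  have hzs0 : 0 ≤ ‖z‖ * s := by positivity
  have hl2 : ‖lam - 1‖ ≤ ε * (‖z‖ * s) + 2 * ε * R := by
    have e : lam - 1 = (lam - 1 - z^2 * s^2/2) + z^2 * s^2/2 := by ring
    have n1 : ‖z^2 * (s:ℂ)^2/2‖ = (‖z‖*s)^2/2 := by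
      rw [norm_div, norm_mul, norm_pow, norm_pow, Complex.norm_real, Real.norm_eq_abs, abs_of_nonneg hs0]
      simp; ring
    rw [e]
    refine (norm_add_le _ _).trans ?_
    rw [n1]
    have : ‖z‖^3 * K * s^2 = ε * (‖z‖*s)^2 := by rw [hεd]; ring
    rw [this] at ha
    have h2 : 2 * ‖z‖ * s * R ≤ 2 * ε * R := by nlinarith
    have h3 : (‖z‖*s)^2 ≤ ε * (‖z‖*s) := by nlinarith
    have h4 : ε * (‖z‖*s)^2 ≤ 1/16 * (ε * (‖z‖*s)) := by nlinarith
    nlinarith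
  have hb : ‖lam - 1‖ ≤ 3 * ε := by
    have h1 : ε * (‖z‖ * s) ≤ ε * 1 := by gcongr; linarith
    have h2 : ε * R ≤ ε * 1 := by gcongr
    linarith
  refine ⟨ha, hb, ?_⟩
  have hlam2 : 1/2 ≤ ‖lam‖ := by
    have : ‖(1:ℂ)‖ ≤ ‖lam‖ + ‖lam - 1‖ := by
      have := norm_sub_le lam (lam - 1); simpa using this
    simp at this; linarith
  have hlam0 : lam ≠ 0 := fun h => by rw [h] at hlam2; simp at hlam2; linarith
  -- the function inside
  set p : α → ℂ := fun ω => (Complex.exp (z * ξ ω) - 1 - z * ξ ω) + (1 - lam) + (Complex.exp (z * ξ ω) - lam) * r ω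
    with hp
  have bp1 : Bdd μ m0 (fun ω => (Complex.exp (z * ξ ω) - 1 - z * ξ ω) + (1 - lam)) := bt2.add (Bdd.const _)
  have bp2 : Bdd μ m0 (fun ω => (Complex.exp (z * ξ ω) - lam) * r ω) := (be.sub (Bdd.const _)).mul br
  have bp : Bdd μ m0 p := bp1.add bp2
  have hpw : μ[p|m] =ᵐ[μ] fun ω => (μ[fun ω => Complex.exp (z * ξ ω) * w ω|m]) ω - lam - lam * (μ[r|m]) ω := by
    have e1 : p = (fun ω => Complex.exp (z * ξ ω) * w ω) - (fun ω => lam) - (lam • r) - (z • fun ω => (ξ ω : ℂ)) := by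
      ext ω; simp only [hp, hr, Pi.sub_apply, Pi.smul_apply, smul_eq_mul]; ring
    have bew := (be.mul hw).integrable le_rfl
    have i0 : Integrable (fun _ : α => lam) μ := integrable_const _
    have i1 : Integrable (lam • r) μ := (br.integrable le_rfl).smul lam
    have i2 : Integrable (z • fun ω => (ξ ω : ℂ)) μ := (bξ.integrable le_rfl).smul z
    have h1 := condExp_sub (bew.sub i0 |>.sub i1) i2 m
    have h2 := condExp_sub (bew.sub i0) i1 m
    have h3 := condExp_sub bew i0 m
    have h4 := condExp_smul (μ := μ) lam r m
    have h5 := condExp_smul (μ := μ) z (fun ω => (ξ ω : ℂ)) m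
    have h6 := condExp_ofReal_zero hξ hξ0
    have h7 := condExp_const (μ := μ) hm lam
    rw [e1]
    filter_upwards [h1, h2, h3, h4, h5, h6] with ω a b c d e f
    rw [a, Pi.sub_apply, b, Pi.sub_apply, c, Pi.sub_apply, d, e, Pi.smul_apply, Pi.smul_apply, f, h7]
    simp
  have heq : (fun ω => lam⁻¹ * (μ[fun ω => Complex.exp (z * ξ ω) * w ω|m]) ω - 1 - (μ[r|m]) ω)
      =ᵐ[μ] fun ω => lam⁻¹ * (μ[p|m]) ω := by
    filter_upwards [hpw] with ω h
    rw [h]; field_simp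
  rw [n2_congr heq]
  have bcp : Bdd μ m (μ[p|m]) := Bdd.condExp bp.bd
  have s1 : n2 μ (fun ω => lam⁻¹ * (μ[p|m]) ω) ≤ 2 * n2 μ p := by
    refine le_trans (n2_mono_mul (c := 2) ?_ (bcp.memLp hm 2) (by norm_num) ?_) ?_
    · exact (((Bdd.const lam⁻¹).mul bcp).memLp hm 2).1
    · refine ae_of_all _ fun ω => ?_
      rw [norm_mul, norm_inv]
      gcongr
      rw [inv_le_comm₀ (by linarith) (by norm_num)]; linarith
    · gcongr
      exact n2_condExp_le (bp.memLp le_rfl 2)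
  have s2 : n2 μ p ≤ n2 μ (fun ω => Complex.exp (z * ξ ω) - 1 - z * ξ ω) + ‖1 - lam‖
      + n2 μ (fun ω => (Complex.exp (z * ξ ω) - lam) * r ω) := by
    refine (n2_add_le (bp1.memLp le_rfl 2) (bp2.memLp le_rfl 2)).trans ?_
    gcongr
    refine (n2_add_le (bt2.memLp le_rfl 2) (memLp_const _)).trans ?_
    rw [n2_const]
  have s3 : n2 μ (fun ω => Complex.exp (z * ξ ω) - 1 - z * ξ ω) ≤ (ε * ‖z‖) * s := by
    refine n2_mono_mul (bt2.memLp le_rfl 2).1 mξ (by positivity) ?_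
    filter_upwards [hzx] with ω h1
    have := Complex.norm_exp_sub_one_sub_id_le (x := z * ξ ω) (by linarith)
    refine this.trans ?_
    rw [pow_two]
    nth_rw 2 [norm_mul]
    rw [Complex.norm_real, mul_assoc ε]
    gcongr
  have s4 : n2 μ (fun ω => (Complex.exp (z * ξ ω) - lam) * r ω) ≤ (5 * ε) * R := by
    refine n2_mono_mul (bp2.memLp le_rfl 2).1 (br.memLp le_rfl 2) (by positivity) ?_
    filter_upwards [hzx] with ω h1
    rw [norm_mul]
    gcongr
    have := Complex.norm_exp_sub_one_le (x := z * ξ ω) (by linarith)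
    have e : Complex.exp (z * ξ ω) - lam = (Complex.exp (z * ξ ω) - 1) - (lam - 1) := by ring
    rw [e]
    refine (norm_sub_le _ _).trans ?_
    linarith
  rw [norm_sub_rev] at s2
  have : ε * (‖z‖ * s) = ε * ‖z‖ * s := by ring
  nlinarith
end
end BE

namespace BE
section
variable {α : Type*} {m0 : MeasurableSpace α} {μ : Measure α} [IsProbabilityMeasure μ]
  {F G : ℕ → MeasurableSpace α} {N : ℕ} {q ρ : ℝ}

lemma tele (hc : Chain μ F G N q ρ) (r : ℕ → α → ℂ) (d : ℕ → ℝ) (k : ℕ)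
    (hr : ∀ j, k ≤ j → Bdd μ (G j) (r j))
    (hd : ∀ j, k ≤ j → n2 μ (fun ω => r j ω - (μ[r (j+1)|F j]) ω) ≤ d j) (j : ℕ) :
    n2 μ (fun ω => r k ω - (μ[r (k+j)|F k]) ω) ≤ ∑ i ∈ Finset.range j, d (k+i) := by
  induction j with
  | zero =>
    have : μ[r (k+0)|F k] = r k :=
      condExp_of_stronglyMeasurable (hc.le k) ((hr k le_rfl).sm.mono (hc.GF k))
        ((hr k le_rfl).integrable (hc.Gle k))
    rw [this]; simp
  | succ j ih =>
    rw [Finset.sum_range_succ]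
    have b1 := hr (k+j) (by omega)
    have b2 := hr (k+j+1) (by omega)
    have bc : Bdd μ (F (k+j)) (μ[r (k+j+1)|F (k+j)]) := Bdd.condExp b2.bd
    have bk := (hr k le_rfl).mono (hc.GF k)
    have bck : Bdd μ (F k) (μ[r (k+j)|F k]) := Bdd.condExp b1.bd
    have bdf : Bdd μ (F (k+j)) (fun ω => r (k+j) ω - (μ[r (k+j+1)|F (k+j)]) ω) :=
      (b1.mono (hc.GF _)).sub bc
    have e1 : μ[fun ω => r (k+j) ω - (μ[r (k+j+1)|F (k+j)]) ω|F k] =ᵐ[μ]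
        fun ω => (μ[r (k+j)|F k]) ω - (μ[r (k+j+1)|F k]) ω := by
      refine (condExp_sub (b1.integrable (hc.Gle _)) integrable_condExp (F k)).trans ?_
      filter_upwards [condExp_condExp_of_le (f := r (k+j+1)) (μ := μ) (hc.mono (show k ≤ k+j by omega)) (hc.le _)] with ω h
      rw [Pi.sub_apply, h]
    have e2 : (fun ω => r k ω - (μ[r (k+(j+1))|F k]) ω) =ᵐ[μ]
        fun ω => (r k ω - (μ[r (k+j)|F k]) ω) + (μ[fun ω => r (k+j) ω - (μ[r (k+j+1)|F (k+j)]) ω|F k]) ω := by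
      filter_upwards [e1] with ω h
      rw [h, show k + (j+1) = k+j+1 by omega]; ring
    have bdc : Bdd μ (F k) (μ[fun ω => r (k+j) ω - (μ[r (k+j+1)|F (k+j)]) ω|F k]) := Bdd.condExp bdf.bd
    rw [n2_congr e2]
    refine (n2_add_le ((bk.sub bck).memLp (hc.le _) 2) (bdc.memLp (hc.le _) 2)).trans ?_
    exact add_le_add ih ((n2_condExp_le (bdf.memLp (hc.le _) 2)).trans (hd _ (by omega)))

lemma w_exists (hc : Chain μ F G N q ρ) (hN : 0 < N) (hρ0 : 0 ≤ ρ) (hρ : ρ < 1) (n : ℕ) (A B : ℕ → α → ℝ)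
    (hA : ∀ k, Bdd μ (G (k+1)) (A k)) (hB : ∀ k, Bdd μ (G k) (B k))
    (hA0 : ∀ k, n ≤ k → A k = 0) (hB0 : ∀ k, n ≤ k → B k = 0)
    (hBF : ∀ k, B k =ᵐ[μ] μ[A k|F k]) (K : ℝ) (hK0 : 0 ≤ K)
    (hK : ∀ k, ∀ᵐ ω ∂μ, |A k ω - B k ω| ≤ K) (z : ℂ) (hz : ‖z‖ * K ≤ (1 - ρ) / (40 * N)) :
    ∃ (w : ℕ → α → ℂ), (∀ k, n ≤ k → w k = fun _ => 1) ∧ (∀ k, Bdd μ (G k) (w k)) ∧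
      (∀ k, ∫ ω, w k ω ∂μ = 1) ∧ (∀ k, n2 μ (fun ω => w k ω - 1) ≤ 1) ∧
      (∀ k, μ[fun ω => Complex.exp (z * (A k ω - B k ω : ℝ)) * w (k+1) ω|F k] =ᵐ[μ]
        fun ω => (∫ ω, Complex.exp (z * (A k ω - B k ω : ℝ)) * w (k+1) ω ∂μ) * w k ω) ∧
      (∀ k, n2 μ (fun ω => w k ω - 1) ≤ ρ * n2 μ (fun ω => w (k+N) ω - 1) + ∑ i ∈ Finset.range N,
        (4 * (‖z‖ * K) * ‖z‖ * n2 μ (fun ω => A (k+i) ω - B (k+i) ω)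
          + 14 * (‖z‖ * K) * n2 μ (fun ω => w (k+i+1) ω - 1))) := by
  have hN1 : (1:ℝ) ≤ N := by exact_mod_cast hN
  have hε0 : 0 ≤ ‖z‖ * K := by positivity
  have hεN : N * (40 * (‖z‖ * K)) ≤ 1 - ρ := by
    rw [le_div_iff₀ (by positivity)] at hz; linarith
  have hε : ‖z‖ * K ≤ 1/40 := by nlinarith
  obtain ⟨w, hw0, hw1⟩ := backrec (fun k (u : α → ℂ) =>
    (fun ω => (∫ ω, Complex.exp (z * (A k ω - B k ω : ℝ)) * u ω ∂μ)⁻¹ * (Complex.exp (-z * B k ω) *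
      (μ[fun ω => Complex.exp (z * A k ω) * u ω|G k]) ω))) (fun _ => (1:ℂ)) n
  have hwall : ∀ k, w k = fun ω => (∫ ω, Complex.exp (z * (A k ω - B k ω : ℝ)) * w (k+1) ω ∂μ)⁻¹ *
      (Complex.exp (-z * B k ω) * (μ[fun ω => Complex.exp (z * A k ω) * w (k+1) ω|G k]) ω) := by
    intro k
    by_cases hk : k < n
    · exact hw1 k hk
    · rw [hw0 k (by omega), hw0 (k+1) (by omega), hA0 k (by omega), hB0 k (by omega)]
      have := condExp_const (μ := μ) (hc.Gle k) (1:ℂ)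
      simp [this]
  have hξ : ∀ k, Bdd μ m0 (fun ω => A k ω - B k ω) := fun k =>
    ((hA k).mono (hc.Gle _)).sub ((hB k).mono (hc.Gle _))
  have hξ0 : ∀ k, μ[fun ω => A k ω - B k ω|F k] =ᵐ[μ] 0 := by
    intro k
    have h1 := condExp_sub (μ := μ) ((hA k).integrable (hc.Gle _)) ((hB k).integrable (hc.Gle _)) (F k)
    have h2 : μ[B k|F k] = B k := condExp_of_stronglyMeasurable (hc.le k)
      ((hB k).sm.mono (hc.GF k)) ((hB k).integrable (hc.Gle k))
    refine h1.trans ?_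
    filter_upwards [hBF k] with ω h
    rw [Pi.sub_apply, h2, h]; simp
  set lam : ℕ → ℂ := fun k => ∫ ω, Complex.exp (z * (A k ω - B k ω : ℝ)) * w (k+1) ω ∂μ with hlam
  set d : ℕ → ℝ := fun k => 4 * (‖z‖ * K) * ‖z‖ * n2 μ (fun ω => A k ω - B k ω)
          + 14 * (‖z‖ * K) * n2 μ (fun ω => w (k+1) ω - 1) with hd
  -- one step
  have hone : ∀ k, (Bdd μ (G (k+1)) (w (k+1)) ∧ ∫ ω, w (k+1) ω ∂μ = 1 ∧ n2 μ (fun ω => w (k+1) ω - 1) ≤ 1) →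
      Bdd μ (G k) (w k) ∧ ∫ ω, w k ω ∂μ = 1 ∧
      (μ[fun ω => Complex.exp (z * (A k ω - B k ω : ℝ)) * w (k+1) ω|F k] =ᵐ[μ] fun ω => lam k * w k ω) ∧
      n2 μ (fun ω => (w k ω - 1) - (μ[fun ω => w (k+1) ω - 1|F k]) ω) ≤ d k := by
    rintro k ⟨p1, p2, p3⟩
    obtain ⟨-, h2, h3⟩ := local_step (hc.le k) (hξ k) (hK k) (hξ0 k) (p1.mono (hc.Gle _)) p2 p3 hK0
      (z := z) (by linarith)
    have hl0 : lam k ≠ 0 := by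
      intro h0
      change ‖lam k - 1‖ ≤ _ at h2
      rw [h0] at h2; simp at h2; linarith
    have bA : Bdd μ (G (k+1)) (fun ω => Complex.exp (z * A k ω) * w (k+1) ω) :=
      (((Bdd.const z).mul (hA k).ofReal).cexp).mul p1
    have bB : Bdd μ (G k) (fun ω => Complex.exp (-z * B k ω)) :=
      ((Bdd.const (-z)).mul (hB k).ofReal).cexp
    have bw : Bdd μ (G k) (w k) := by
      rw [hwall k]
      exact (Bdd.const _).mul (bB.mul (Bdd.condExp bA.bd))
    have heq : μ[fun ω => Complex.exp (z * (A k ω - B k ω : ℝ)) * w (k+1) ω|F k] =ᵐ[μ] fun ω => lam k * w k ω := by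
      have e1 : (fun ω => Complex.exp (z * (A k ω - B k ω : ℝ)) * w (k+1) ω) =
          fun ω => Complex.exp (-z * B k ω) * (Complex.exp (z * A k ω) * w (k+1) ω) := by
        ext ω
        rw [← mul_assoc, ← Complex.exp_add]
        congr 2; push_cast; ring
      rw [e1]
      refine (condExp_mulC (hc.le k) (hc.Gle _) (bB.mono (hc.GF k)) bA).trans ?_
      filter_upwards [hc.mC k _ bA] with ω h
      rw [h, hwall k]
      change _ = lam k * ((lam k)⁻¹ * _)
      rw [mul_inv_cancel_left₀ hl0]
    have hmean : ∫ ω, w k ω ∂μ = 1 := by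
      have h4 := integral_congr_ae heq
      rw [integral_condExp (hc.le k), integral_const_mul] at h4
      change lam k = _ at h4
      have : lam k * 1 = lam k * ∫ ω, w k ω ∂μ := by rw [mul_one]; exact h4
      exact (mul_left_cancel₀ hl0 this).symm
    refine ⟨bw, hmean, heq, ?_⟩
    have e5 : (fun ω => (w k ω - 1) - (μ[fun ω => w (k+1) ω - 1|F k]) ω) =ᵐ[μ]
      (fun ω => (lam k)⁻¹ * (μ[fun ω => Complex.exp (z * (A k ω - B k ω : ℝ)) * w (k+1) ω|F k]) ω - 1
        - (μ[fun ω => w (k+1) ω - 1|F k]) ω) := by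
      filter_upwards [heq] with ω h
      rw [h, inv_mul_cancel_left₀ hl0]
    rw [n2_congr e5]
    exact h3
  have hrec : ∀ k, (∀ j, k < j → (Bdd μ (G j) (w j) ∧ ∫ ω, w j ω ∂μ = 1 ∧ n2 μ (fun ω => w j ω - 1) ≤ 1)) →
      n2 μ (fun ω => w k ω - 1) ≤ ρ * n2 μ (fun ω => w (k+N) ω - 1) + ∑ i ∈ Finset.range N, d (k+i) := by
    intro k ih
    have hb : ∀ j, k ≤ j → Bdd μ (G j) (fun ω => w j ω - 1) := fun j hj =>
      (hone j (ih (j+1) (by omega))).1.sub (Bdd.const 1)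
    have ht := tele hc (fun k ω => w k ω - 1) d k hb
      (fun j hj => (hone j (ih (j+1) (by omega))).2.2.2) N
    have bN := hb (k+N) (by omega)
    have h2 := hc.d2 k _ bN (by
      rw [integral_sub ((hone (k+N) (ih _ (by omega))).1.integrable (hc.Gle _)) (integrable_const _),
        (ih (k+N) (by omega)).2.1]
      simp)
    have bc : Bdd μ (F k) (μ[fun ω => w (k+N) ω - 1|F k]) := Bdd.condExp bN.bd
    have e : (fun ω => w k ω - 1) = fun ω => (μ[fun ω => w (k+N) ω - 1|F k]) ω +
      ((w k ω - 1) - (μ[fun ω => w (k+N) ω - 1|F k]) ω) := by ext ω; ring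
    rw [e]
    refine (n2_add_le (bc.memLp (hc.le _) 2) ((((hb k le_rfl).mono (hc.GF k)).sub bc).memLp (hc.le _) 2)).trans ?_
    exact add_le_add h2 ht
  have hsK : ∀ k, n2 μ (fun ω => A k ω - B k ω) ≤ K := by
    intro k
    have : n2 μ (fun ω => A k ω - B k ω) ≤ K * n2 μ (fun _ : α => (1:ℝ)) := by
      refine n2_mono_mul ((hξ k).memLp le_rfl 2).1 (memLp_const _) hK0 ?_
      filter_upwards [hK k] with ω h
      simpa using h
    rw [n2_const] at this; simpa using this
  have hP : ∀ k, Bdd μ (G k) (w k) ∧ ∫ ω, w k ω ∂μ = 1 ∧ n2 μ (fun ω => w k ω - 1) ≤ 1 := by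
    refine back_ind n _ (fun k hk => ?_) fun k hk ih => ?_
    · rw [hw0 k hk]
      refine ⟨Bdd.const 1, by simp, by simp⟩
    · have h1 := hone k (ih (k+1) (by omega))
      refine ⟨h1.1, h1.2.1, (hrec k ih).trans ?_⟩
      have h3 : ∑ i ∈ Finset.range N, d (k+i) ≤ ∑ i ∈ Finset.range N, 18 * (‖z‖ * K) := by
        refine Finset.sum_le_sum fun i _ => ?_
        have a1 := hsK (k+i)
        have a2 := (ih (k+i+1) (by omega)).2.2
        have a3 : ‖z‖ * n2 μ (fun ω => A (k+i) ω - B (k+i) ω) ≤ 1 := by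
          have : ‖z‖ * n2 μ (fun ω => A (k+i) ω - B (k+i) ω) ≤ ‖z‖ * K := by gcongr
          linarith
        have a4 := n2_nonneg (μ := μ) (fun ω => w (k+i+1) ω - 1)
        simp only [hd]
        have b1 : 4 * (‖z‖ * K) * (‖z‖ * n2 μ (fun ω => A (k+i) ω - B (k+i) ω)) ≤ 4 * (‖z‖*K) * 1 := by gcongr
        have b2 : 14 * (‖z‖ * K) * n2 μ (fun ω => w (k+i+1) ω - 1) ≤ 14 * (‖z‖*K) * 1 := by gcongr
        linarith
      rw [Finset.sum_const, Finset.card_range, nsmul_eq_mul] at h3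
      have h4 : ρ * n2 μ (fun ω => w (k+N) ω - 1) ≤ ρ * 1 := by
        gcongr; exact (ih (k+N) (by omega)).2.2
      nlinarith
  exact ⟨w, hw0, fun k => (hP k).1, fun k => (hP k).2.1, fun k => (hP k).2.2,
    fun k => (hone k (hP (k+1))).2.2.1, fun k => hrec k fun j _ => hP j⟩

lemma char_prod (hc : Chain μ F G N q ρ) (A B : ℕ → α → ℝ)
    (hA : ∀ k, Bdd μ (G (k+1)) (A k)) (hB : ∀ k, Bdd μ (G k) (B k)) (z : ℂ)
    (w : ℕ → α → ℂ) (lam : ℕ → ℂ) (hw : ∀ k, Bdd μ (G k) (w k)) (hw0 : ∫ ω, w 0 ω ∂μ = 1)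
    (heq : ∀ k, μ[fun ω => Complex.exp (z * (A k ω - B k ω : ℝ)) * w (k+1) ω|F k] =ᵐ[μ]
        fun ω => lam k * w k ω) (j : ℕ) :
    ∫ ω, Complex.exp (z * ((∑ i ∈ Finset.range j, (A i ω - B i ω) : ℝ) : ℂ)) * w j ω ∂μ
      = ∏ i ∈ Finset.range j, lam i := by
  have hS : ∀ j, Bdd μ (F j) (fun ω => ∑ i ∈ Finset.range j, (A i ω - B i ω)) := by
    intro j
    induction j with
    | zero => simpa using Bdd.const (0:ℝ)
    | succ j ih =>
      simp only [Finset.sum_range_succ]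
      exact (ih.mono (hc.mono (by omega))).add
        (((hA j).mono (hc.GF _)).sub ((hB j).mono ((hc.GF _).trans (hc.mono (by omega)))))
  induction j with
  | zero => simpa using hw0
  | succ j ih =>
    have bE : Bdd μ (F j) (fun ω => Complex.exp (z * ((∑ i ∈ Finset.range j, (A i ω - B i ω) : ℝ) : ℂ))) :=
      ((Bdd.const z).mul (hS j).ofReal).cexp
    have bX : Bdd μ m0 (fun ω => Complex.exp (z * (A j ω - B j ω : ℝ)) * w (j+1) ω) :=
      (((Bdd.const z).mul ((((hA j).mono (hc.Gle _)).sub ((hB j).mono (hc.Gle _))).ofReal)).cexp).mul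
        ((hw (j+1)).mono (hc.Gle _))
    have e1 : (fun ω => Complex.exp (z * ((∑ i ∈ Finset.range (j+1), (A i ω - B i ω) : ℝ) : ℂ)) * w (j+1) ω) =
      fun ω => Complex.exp (z * ((∑ i ∈ Finset.range j, (A i ω - B i ω) : ℝ) : ℂ)) *
        (Complex.exp (z * (A j ω - B j ω : ℝ)) * w (j+1) ω) := by
      ext ω
      rw [← mul_assoc, ← Complex.exp_add, Finset.sum_range_succ]
      congr 2; push_cast; ring
    have h1 := condExp_mulC (hc.le j) le_rfl bE bX
    rw [e1, ← integral_condExp (hc.le j), integral_congr_ae h1, Finset.prod_range_succ, ← ih, mul_comm _ (lam j),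
      ← integral_const_mul]
    refine integral_congr_ae ?_
    filter_upwards [heq j] with ω h
    rw [h]; ring
end
end BE

namespace BE

lemma sum_shift {f : ℕ → ℝ} {n : ℕ} (h0 : ∀ k, 0 ≤ f k) (hn : ∀ k, n ≤ k → f k = 0) (i : ℕ) :
    ∑ k ∈ Finset.range n, f (k+i) ≤ ∑ k ∈ Finset.range n, f k := by
  induction i with
  | zero => simp
  | succ i ih =>
    refine le_trans ?_ ih
    have h1 := Finset.sum_range_succ' (fun k => f (k+i)) n
    have h2 := Finset.sum_range_succ (fun k => f (k+i)) n
    have h3 := hn (n+i) (by omega)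
    have h4 := h0 (0+i)
    have h5 : ∑ k ∈ Finset.range n, f (k+(i+1)) = ∑ k ∈ Finset.range n, f (k+1+i) :=
      Finset.sum_congr rfl fun k _ => by congr 1; omega
    linarith

lemma sum_R {R s : ℕ → ℝ} {n N : ℕ} {ρ ε a : ℝ} (hN : 0 < N) (hρ0 : 0 ≤ ρ) (hρ : ρ < 1)
    (hR : ∀ k, 0 ≤ R k) (hs : ∀ k, 0 ≤ s k) (hRn : ∀ k, n ≤ k → R k = 0) (hsn : ∀ k, n ≤ k → s k = 0)
    (ha : 0 ≤ a) (hε0 : 0 ≤ ε) (hε : ε ≤ (1-ρ)/(40*N))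
    (hrec : ∀ k, R k ≤ ρ * R (k+N) + ∑ i ∈ Finset.range N, (a * s (k+i) + 14 * ε * R (k+i+1))) :
    ∑ k ∈ Finset.range n, (R k)^2 ≤ (2 * N * a / (1-ρ))^2 * ∑ k ∈ Finset.range n, (s k)^2 := by
  have hN1 : (1:ℝ) ≤ N := by exact_mod_cast hN
  have hεN : 40 * (N * ε) ≤ 1 - ρ := by
    rw [le_div_iff₀ (by positivity)] at hε; linarith
  set p := 1 - ρ with hp
  have hp0 : 0 < p := by linarith
  set SR := ∑ k ∈ Finset.range n, (R k)^2 with hSR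
  set SV := ∑ k ∈ Finset.range n, (s k)^2 with hSV
  have hSR0 : 0 ≤ SR := Finset.sum_nonneg fun _ _ => by positivity
  have hSV0 : 0 ≤ SV := Finset.sum_nonneg fun _ _ => by positivity
  have hk : ∀ k, p * (R k)^2 ≤ p * ρ * (R (k+N))^2 + N * ∑ i ∈ Finset.range N, (2 * a^2 * (s (k+i))^2 + 392 * ε^2 * (R (k+i+1))^2) := by
    intro k
    set b := ∑ i ∈ Finset.range N, (a * s (k+i) + 14 * ε * R (k+i+1)) with hb
    have hb0 : 0 ≤ b := Finset.sum_nonneg fun i _ => by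
      have := hs (k+i); have := hR (k+i+1); positivity
    have h1 : b^2 ≤ N * ∑ i ∈ Finset.range N, (a * s (k+i) + 14 * ε * R (k+i+1))^2 := by
      have := sq_sum_le_card_mul_sum_sq (s := Finset.range N) (f := fun i => a * s (k+i) + 14 * ε * R (k+i+1))
      simpa using this
    have h2 : ∑ i ∈ Finset.range N, (a * s (k+i) + 14 * ε * R (k+i+1))^2 ≤
       ∑ i ∈ Finset.range N, (2 * a^2 * (s (k+i))^2 + 392 * ε^2 * (R (k+i+1))^2) := by
      refine Finset.sum_le_sum fun i _ => ?_
      nlinarith [sq_nonneg (a * s (k+i) - 14 * ε * R (k+i+1))]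
    have h3 : (R k)^2 ≤ (ρ * R (k+N) + b)^2 := pow_le_pow_left₀ (hR k) (hrec k) 2
    have h4 : p * (ρ * R (k+N) + b)^2 ≤ p * ρ * (R (k+N))^2 + b^2 := by
      have : p * ρ * (R (k+N))^2 + b^2 - p * (ρ * R (k+N) + b)^2 = ρ * (p * R (k+N) - b)^2 := by
        rw [hp]; ring
      nlinarith [mul_nonneg hρ0 (sq_nonneg (p * R (k+N) - b))]
    calc p * (R k)^2 ≤ p * (ρ * R (k+N) + b)^2 := by gcongr
      _ ≤ _ := h4
      _ ≤ _ := by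
        have : b^2 ≤ N * ∑ i ∈ Finset.range N, (2 * a^2 * (s (k+i))^2 + 392 * ε^2 * (R (k+i+1))^2) :=
          h1.trans (by gcongr)
        linarith
  have hsum := Finset.sum_le_sum fun k (_ : k ∈ Finset.range n) => hk k
  rw [← Finset.mul_sum, Finset.sum_add_distrib, ← Finset.mul_sum, ← Finset.mul_sum, Finset.sum_comm] at hsum
  have hA : ∑ k ∈ Finset.range n, (R (k+N))^2 ≤ SR :=
    sum_shift (f := fun k => (R k)^2) (fun _ => by positivity) (fun k hk => by simp [hRn k hk]) N
  have hB : ∑ i ∈ Finset.range N, ∑ k ∈ Finset.range n, (2 * a^2 * (s (k+i))^2 + 392 * ε^2 * (R (k+i+1))^2)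
      ≤ ∑ i ∈ Finset.range N, (2 * a^2 * SV + 392 * ε^2 * SR) := by
    refine Finset.sum_le_sum fun i _ => ?_
    rw [Finset.sum_add_distrib, ← Finset.mul_sum, ← Finset.mul_sum]
    gcongr
    · exact sum_shift (f := fun k => (s k)^2) (fun _ => by positivity) (fun k hk => by simp [hsn k hk]) i
    · exact sum_shift (f := fun k => (R k)^2) (fun _ => by positivity) (fun k hk => by simp [hRn k hk]) (i+1)
  rw [Finset.sum_const, Finset.card_range, nsmul_eq_mul] at hB
  have h5 : p * SR ≤ p * ρ * SR + N * (N * (2 * a^2 * SV + 392 * ε^2 * SR)) := by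
    refine hsum.trans ?_
    gcongr
  have h6 : 392 * (N * ε)^2 ≤ p^2/2 := by
    have : 0 ≤ N * ε := by positivity
    nlinarith
  have h7 : p^2 * SR ≤ 4 * (N*a)^2 * SV := by
    have e : p * ρ = p - p^2 := by rw [hp]; ring
    rw [e] at h5
    nlinarith [mul_le_mul_of_nonneg_right h6 hSR0]
  have h8 : (2 * N * a / p)^2 * SV = (4 * (N*a)^2 * SV) / p^2 := by field_simp; ring
  rw [h8, le_div_iff₀ (by positivity)]
  linarith

lemma prod_conclude {lam : ℕ → ℂ} {R s : ℕ → ℝ} {n N : ℕ} {ρ K : ℝ} {z : ℂ} (hN : 0 < N) (hρ0 : 0 ≤ ρ) (hρ : ρ < 1)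
    (hR : ∀ k, 0 ≤ R k) (hs : ∀ k, 0 ≤ s k) (hRn : ∀ k, n ≤ k → R k = 0)
    (hK0 : 0 ≤ K) (hsK : ∀ k, s k ≤ K) (hε : ‖z‖ * K ≤ 1)
    (hsum : ∑ k ∈ Finset.range n, (R k)^2 ≤ (2 * N * (4 * (‖z‖ * K) * ‖z‖) / (1-ρ))^2 * ∑ k ∈ Finset.range n, (s k)^2)
    (hl : ∀ k, ‖lam k - 1 - z^2 * (s k)^2/2‖ ≤ ‖z‖^3 * K * (s k)^2 + 2 * ‖z‖ * s k * R (k+1)) :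
    ‖(∏ k ∈ Finset.range n, lam k) - Complex.exp (z^2 * ((∑ k ∈ Finset.range n, (s k)^2 : ℝ) : ℂ)/2)‖ ≤
      ‖Complex.exp (z^2 * ((∑ k ∈ Finset.range n, (s k)^2 : ℝ) : ℂ)/2)‖ *
       (((6 + 48 * N / (1-ρ)) * K * ‖z‖^3 * ∑ k ∈ Finset.range n, (s k)^2) *
        Real.exp ((6 + 48 * N / (1-ρ)) * K * ‖z‖^3 * ∑ k ∈ Finset.range n, (s k)^2)) := by
  have hp0 : 0 < 1 - ρ := by linarith
  set V := ∑ k ∈ Finset.range n, (s k)^2 with hV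
  have hV0 : 0 ≤ V := Finset.sum_nonneg fun _ _ => by positivity
  have hz0 := norm_nonneg z
  set a : ℕ → ℂ := fun k => z^2 * (s k)^2/2 with ha
  set η : ℕ → ℂ := fun k => lam k * Complex.exp (-a k) - 1 with hη
  have hηb : ∀ k, ‖η k‖ ≤ 3 * (2 * ‖z‖^3 * K * (s k)^2 + 2 * ‖z‖ * (s k * R (k+1))) := by
    intro k
    have hsz : ‖z‖ * s k ≤ ‖z‖ * K := by gcongr; exact hsK k
    have hsz0 : 0 ≤ ‖z‖ * s k := mul_nonneg hz0 (hs k)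
    have na : ‖a k‖ = (‖z‖ * s k)^2/2 := by
      simp only [ha]
      rw [norm_div, norm_mul, norm_pow, norm_pow, Complex.norm_real, Real.norm_eq_abs, abs_of_nonneg (hs k)]
      simp; ring
    have na1 : ‖a k‖ ≤ 1 := by rw [na]; nlinarith
    have n3 : ‖Complex.exp (-a k)‖ ≤ 3 := by
      refine (Complex.norm_exp_le_exp_norm _).trans ?_
      rw [norm_neg]
      refine (Real.exp_le_exp.2 na1).trans ?_
      have := Real.exp_one_lt_d9; linarith
    have e : η k = Complex.exp (-a k) * ((lam k - 1 - a k) - (Complex.exp (a k) - 1 - a k)) := by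
      simp only [hη]
      have : Complex.exp (-a k) * Complex.exp (a k) = 1 := by rw [← Complex.exp_add]; simp
      linear_combination this
    rw [e, norm_mul]
    have h1 : ‖(lam k - 1 - a k) - (Complex.exp (a k) - 1 - a k)‖ ≤
        (‖z‖^3 * K * (s k)^2 + 2 * ‖z‖ * s k * R (k+1)) + ‖a k‖^2 :=
      (norm_sub_le _ _).trans (add_le_add (hl k) (Complex.norm_exp_sub_one_sub_id_le na1))
    have h2 : ‖a k‖^2 ≤ ‖z‖^3 * K * (s k)^2 := by
      rw [na]
      have e1 : ((‖z‖ * s k)^2/2)^2 = (‖z‖ * s k)^2 * (‖z‖ * s k)^2 / 4 := by ring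
      have e2 : ‖z‖^3 * K * (s k)^2 = (‖z‖ * s k)^2 * (‖z‖ * K) := by ring
      rw [e1, e2]
      have : (‖z‖ * s k)^2 ≤ ‖z‖ * K := by nlinarith
      nlinarith [sq_nonneg (‖z‖ * s k)]
    calc _ ≤ 3 * ((‖z‖^3 * K * (s k)^2 + 2 * ‖z‖ * s k * R (k+1)) + ‖a k‖^2) := by gcongr
      _ ≤ _ := by nlinarith
  set D := 8 * N / (1-ρ) with hD
  have hD0 : 0 ≤ D := by positivity
  have hcs : ∑ k ∈ Finset.range n, s k * R (k+1) ≤ D * ‖z‖^2 * K * V := by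
    refine le_of_sq_le_sq ?_ (by positivity)
    calc _ ≤ V * ∑ k ∈ Finset.range n, (R (k+1))^2 := Finset.sum_mul_sq_le_sq_mul_sq _ _ _
      _ ≤ V * ∑ k ∈ Finset.range n, (R k)^2 := by
        refine mul_le_mul_of_nonneg_left ?_ hV0
        exact sum_shift (f := fun k => (R k)^2) (fun _ => by positivity) (fun k hk => by simp [hRn k hk]) 1
      _ ≤ V * ((2 * N * (4 * (‖z‖ * K) * ‖z‖) / (1-ρ))^2 * V) := by gcongr
      _ = _ := by rw [hD]; ring
  have hsumη : ∑ k ∈ Finset.range n, ‖η k‖ ≤ (6 + 48 * N / (1-ρ)) * K * ‖z‖^3 * V := by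
    refine (Finset.sum_le_sum fun k _ => hηb k).trans ?_
    rw [← Finset.mul_sum, Finset.sum_add_distrib, ← Finset.mul_sum, ← Finset.mul_sum, ← hV]
    have e : 48 * N / (1-ρ) = 6 * D := by rw [hD]; ring
    rw [e]
    have : 2 * ‖z‖ * ∑ k ∈ Finset.range n, s k * R (k+1) ≤ 2 * ‖z‖ * (D * ‖z‖^2 * K * V) := by gcongr
    nlinarith
  set τ := (6 + 48 * N / (1-ρ)) * K * ‖z‖^3 * V with hτ
  have hprod : ∏ k ∈ Finset.range n, lam k = Complex.exp (z^2 * (V : ℂ)/2) * ∏ k ∈ Finset.range n, (1 + η k) := by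
    have h1 : Complex.exp (z^2 * (V : ℂ)/2) = ∏ k ∈ Finset.range n, Complex.exp (a k) := by
      rw [← Complex.exp_sum]
      congr 1
      simp only [ha, hV]
      push_cast
      rw [Finset.mul_sum, Finset.sum_div]
    rw [h1, ← Finset.prod_mul_distrib]
    refine Finset.prod_congr rfl fun k _ => ?_
    simp only [hη]
    have : Complex.exp (a k) * Complex.exp (-a k) = 1 := by rw [← Complex.exp_add]; simp
    linear_combination -(lam k) * this
  have h1 := Finset.norm_prod_one_add_sub_one_le (Finset.range n) η
  have h2 : Complex.exp (z^2 * (V : ℂ)/2) * ∏ k ∈ Finset.range n, (1 + η k) - Complex.exp (z^2 * (V : ℂ)/2) =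
    Complex.exp (z^2 * (V : ℂ)/2) * ((∏ k ∈ Finset.range n, (1 + η k)) - 1) := by ring
  rw [hprod, h2, norm_mul]
  gcongr
  refine h1.trans ?_
  have hx : Real.exp (∑ i ∈ Finset.range n, ‖η i‖) ≤ Real.exp τ := Real.exp_le_exp.2 hsumη
  have h3 : Real.exp τ - 1 ≤ τ * Real.exp τ := by
    have := Real.add_one_le_exp (-τ)
    have h4 : Real.exp τ * Real.exp (-τ) = 1 := by rw [← Real.exp_add]; simp
    nlinarith [Real.exp_pos τ]
  linarith

section
variable {α : Type*} {m0 : MeasurableSpace α} {μ : Measure α} [IsProbabilityMeasure μ]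
  {F G : ℕ → MeasurableSpace α} {N : ℕ} {q ρ : ℝ}

theorem core (hc : Chain μ F G N q ρ) (hN : 0 < N) (hq : q < 1) (hρ0 : 0 ≤ ρ) (hρ : ρ < 1) (n : ℕ) (Y : ℕ → α → ℝ)
    (C : ℝ) (hC : 0 ≤ C) (hY : ∀ k, Bdd μ (G (k+1)) (Y k)) (hYC : ∀ k, ∀ᵐ ω ∂μ, |Y k ω| ≤ C)
    (z : ℂ) (hz : ‖z‖ * (2 * (C + N * C / (1 - q))) ≤ (1 - ρ) / (40 * N)) :
    ‖(∫ ω, Complex.exp (z * ((∑ k ∈ Finset.range n, Y k ω) - ∫ ω', ∑ k ∈ Finset.range n, Y k ω' ∂μ : ℝ)) ∂μ)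
      - Complex.exp (z^2 * (variance (fun ω => ∑ k ∈ Finset.range n, Y k ω) μ : ℝ)/2)‖ ≤
     ‖Complex.exp (z^2 * (variance (fun ω => ∑ k ∈ Finset.range n, Y k ω) μ : ℝ)/2)‖ *
      (((6 + 48 * N / (1-ρ)) * (2 * (C + N * C / (1 - q))) * ‖z‖^3 * variance (fun ω => ∑ k ∈ Finset.range n, Y k ω) μ)
       * Real.exp ((6 + 48 * N / (1-ρ)) * (2 * (C + N * C / (1 - q))) * ‖z‖^3 *
          variance (fun ω => ∑ k ∈ Finset.range n, Y k ω) μ)) := by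
  set K := 2 * (C + N * C / (1 - q)) with hKd
  have hK0 : 0 ≤ K := by
    have : 0 < 1 - q := by linarith
    positivity
  set Y' : ℕ → α → ℝ := fun k => if k < n then Y k else 0 with hY'
  have hY'b : ∀ k, Bdd μ (G (k+1)) (Y' k) := by
    intro k; simp only [hY']; split_ifs
    · exact hY k
    · exact Bdd.const 0
  obtain ⟨B, hB, hB0, hBF, hξK⟩ := mart_decomp hc hN hq n Y' C hC hY'b (by
      intro k; simp only [hY']; split_ifs
      · exact hYC k
      · simp [hC]) (fun k hk => by simp [hY', not_lt.2 hk])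
  set A : ℕ → α → ℝ := fun k ω => Y' k ω + B (k+1) ω with hAd
  have hA : ∀ k, Bdd μ (G (k+1)) (A k) := fun k => (hY'b k).add (hB (k+1))
  have hA0 : ∀ k, n ≤ k → A k = 0 := fun k hk => by
    ext ω; simp [hAd, hY', not_lt.2 hk, hB0 (k+1) (by omega)]
  have hξb : ∀ k, Bdd μ m0 (fun ω => A k ω - B k ω) := fun k =>
    ((hA k).mono (hc.Gle _)).sub ((hB k).mono (hc.Gle _))
  have hξF : ∀ k, Bdd μ (F (k+1)) (fun ω => A k ω - B k ω) := fun k =>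
    ((hA k).mono (hc.GF _)).sub ((hB k).mono ((hc.GF _).trans (hc.mono (by omega))))
  have hξ0 : ∀ k, μ[fun ω => A k ω - B k ω|F k] =ᵐ[μ] 0 := by
    intro k
    have h1 := condExp_sub (μ := μ) ((hA k).integrable (hc.Gle _)) ((hB k).integrable (hc.Gle _)) (F k)
    have h2 : μ[B k|F k] = B k := condExp_of_stronglyMeasurable (hc.le k)
      ((hB k).sm.mono (hc.GF k)) ((hB k).integrable (hc.Gle k))
    refine h1.trans ?_
    filter_upwards [hBF k] with ω h
    rw [Pi.sub_apply, h2, h]; simp [hAd]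
  have hξm : ∀ k, ∫ ω, (A k ω - B k ω) ∂μ = 0 := by
    intro k
    rw [← integral_condExp (hc.le k), integral_congr_ae (hξ0 k)]; simp
  -- telescoping
  have htel : ∀ j ω, ∑ i ∈ Finset.range j, (A i ω - B i ω) = ∑ i ∈ Finset.range j, Y' i ω + B j ω - B 0 ω := by
    intro j ω
    induction j with
    | zero => simp
    | succ j ih => rw [Finset.sum_range_succ, Finset.sum_range_succ, ih]; simp only [hAd]; ring
  have hYY : ∀ ω, ∑ i ∈ Finset.range n, Y' i ω = ∑ i ∈ Finset.range n, Y i ω := fun ω =>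
    Finset.sum_congr rfl fun i hi => by simp [hY', Finset.mem_range.1 hi]
  obtain ⟨b0, hb0⟩ : ∃ b : ℝ, B 0 = fun _ => b := by
    have h0 : G 0 = ⊥ := le_antisymm ((hc.GF 0).trans hc.F0.le) bot_le
    have := (hB 0).sm
    rw [h0] at this
    exact stronglyMeasurable_bot_iff.1 this
  set S : α → ℝ := fun ω => ∑ k ∈ Finset.range n, Y k ω with hS
  have hSb : Bdd μ m0 S := Bdd.sum _ fun i => (hY i).mono (hc.Gle _)
  have hM : ∀ ω, ∑ i ∈ Finset.range n, (A i ω - B i ω) = S ω - b0 := by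
    intro ω; rw [htel, hYY, hB0 n le_rfl, hb0]; simp [hS]
  have hES : ∫ ω, S ω ∂μ = b0 := by
    have h1 : ∫ ω, ∑ i ∈ Finset.range n, (A i ω - B i ω) ∂μ = 0 := by
      rw [integral_finsetSum _ fun i _ => (hξb i).integrable le_rfl]
      simp [hξm]
    simp_rw [hM] at h1
    rw [integral_sub (hSb.integrable le_rfl) (integrable_const _)] at h1
    simp at h1; linarith
  set s : ℕ → ℝ := fun k => n2 μ (fun ω => A k ω - B k ω) with hs
  -- variance
  have hvar : variance S μ = ∑ k ∈ Finset.range n, (s k)^2 := by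
    have hMb : ∀ j, Bdd μ (F j) (fun ω => ∑ i ∈ Finset.range j, (A i ω - B i ω)) := by
      intro j
      induction j with
      | zero => simpa using Bdd.const (0:ℝ)
      | succ j ih =>
        simp only [Finset.sum_range_succ]
        exact (ih.mono (hc.mono (by omega))).add (hξF j)
    have hsq : ∀ j, ∫ ω, (∑ i ∈ Finset.range j, (A i ω - B i ω))^2 ∂μ = ∑ k ∈ Finset.range j, (s k)^2 := by
      intro j
      induction j with
      | zero => simp
      | succ j ih =>
        simp only [Finset.sum_range_succ]
        have b1 := hMb j
        have b1' := b1.mono (hc.le j)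
        have b2 := hξb j
        have cross : ∫ ω, (∑ i ∈ Finset.range j, (A i ω - B i ω)) * (A j ω - B j ω) ∂μ = 0 := by
          have := condExp_mul_of_stronglyMeasurable_left (μ := μ) b1.sm ((b1'.mul b2).integrable le_rfl) (b2.integrable le_rfl)
          rw [← integral_condExp (hc.le j)]
          refine integral_eq_zero_of_ae ?_
          refine this.trans ?_
          filter_upwards [hξ0 j] with ω h
          simp [h]
        have e : ∀ ω, (∑ i ∈ Finset.range j, (A i ω - B i ω) + (A j ω - B j ω))^2 =
          ((∑ i ∈ Finset.range j, (A i ω - B i ω)) * (∑ i ∈ Finset.range j, (A i ω - B i ω)) + 2 * ((∑ i ∈ Finset.range j, (A i ω - B i ω)) * (A j ω - B j ω)))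
           + (A j ω - B j ω) * (A j ω - B j ω) := fun ω => by ring
        simp_rw [e]
        rw [integral_add (((b1'.mul b1').add ((Bdd.const 2).mul (b1'.mul b2))).integrable le_rfl) ((b2.mul b2).integrable le_rfl),
          integral_add ((b1'.mul b1').integrable le_rfl) (((Bdd.const 2).mul (b1'.mul b2)).integrable le_rfl),
          integral_const_mul, cross]
        have h2 : (s j)^2 = ∫ ω, (A j ω - B j ω) * (A j ω - B j ω) ∂μ := by
          simp only [hs]
          rw [n2_sq (b2.memLp le_rfl 2).1]
          simp [pow_two]
        rw [h2, ← ih]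
        simp [pow_two]
    rw [variance_eq_integral (hSb.memLp le_rfl 2).1.aemeasurable, hES, ← hsq n]
    simp_rw [hM]
  have hN1 : (1:ℝ) ≤ N := by exact_mod_cast hN
  have hε0 : 0 ≤ ‖z‖ * K := by positivity
  have hεN : N * (40 * (‖z‖ * K)) ≤ 1 - ρ := by
    have hz := hz
    rw [le_div_iff₀ (by positivity)] at hz; linarith
  have hε : ‖z‖ * K ≤ 1/40 := by nlinarith
  obtain ⟨w, hw0, hwb, hw1, hwR, hweq, hwrec⟩ := w_exists hc hN hρ0 hρ n A B hA hB hA0 hB0 hBF K hK0 hξK z hz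
  set R : ℕ → ℝ := fun k => n2 μ (fun ω => w k ω - 1) with hR
  set lam : ℕ → ℂ := fun k => ∫ ω, Complex.exp (z * (A k ω - B k ω : ℝ)) * w (k+1) ω ∂μ with hlam
  have hch := char_prod hc A B hA hB z w lam hwb (hw1 0) hweq n
  have hRn : ∀ k, n ≤ k → R k = 0 := fun k hk => by simp [hR, hw0 k hk]
  have hsn : ∀ k, n ≤ k → s k = 0 := fun k hk => by simp [hs, hA0 k hk, hB0 k hk]
  have hsumR := sum_R (R := R) (s := s) hN hρ0 hρ (fun k => n2_nonneg _) (fun k => n2_nonneg _) hRn hsn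
    (a := 4 * (‖z‖ * K) * ‖z‖) (by positivity) hε0 hz hwrec
  have hsK : ∀ k, s k ≤ K := by
    intro k
    have : n2 μ (fun ω => A k ω - B k ω) ≤ K * n2 μ (fun _ : α => (1:ℝ)) := by
      refine n2_mono_mul ((hξb k).memLp le_rfl 2).1 (memLp_const _) hK0 ?_
      filter_upwards [hξK k] with ω h
      simpa using h
    rw [n2_const] at this; simpa using this
  have hfin := prod_conclude (lam := lam) (R := R) (s := s) (n := n) (K := K) (z := z) hN hρ0 hρ (fun k => n2_nonneg _)
    (fun k => n2_nonneg _) hRn hK0 hsK (by linarith) hsumR (fun k =>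
      (local_step (hc.le k) (hξb k) (hξK k) (hξ0 k) ((hwb (k+1)).mono (hc.Gle _)) (hw1 (k+1)) (hwR (k+1)) hK0
      (z := z) (by linarith)).1)
  rw [← hvar, ← hch, hw0 n le_rfl] at hfin
  simp only [hM, mul_one] at hfin
  rw [hES]
  exact hfin
end
end BE

namespace BE

section meas
variable {B : Type*} [MeasurableSpace B]

lemma minor_split {ν m : Measure B} [IsProbabilityMeasure ν] [IsProbabilityMeasure m] {γ : ℝ}
    (hγ : 0 < γ) (hγ1 : γ < 1) (hD : ∀ Γ, MeasurableSet Γ → ENNReal.ofReal γ * m Γ ≤ ν Γ) :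
    ∃ τ : Measure B, IsFiniteMeasure τ ∧ τ ≤ ν ∧ τ.real Set.univ = 1 - γ ∧
      ∀ {E : Type} [NormedAddCommGroup E] [NormedSpace ℝ E] (g : B → E) , StronglyMeasurable g →
        (∃ R, ∀ y, ‖g y‖ ≤ R) → ∫ y, g y ∂ν = ∫ y, g y ∂τ + γ • ∫ y, g y ∂m := by
  have hle : ENNReal.ofReal γ • m ≤ ν := by
    refine Measure.le_iff.2 fun s hs => ?_
    simpa using hD s hs
  have : IsFiniteMeasure (ENNReal.ofReal γ • m) := isFiniteMeasure_of_le ν hle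
  have hadd : ν - ENNReal.ofReal γ • m + ENNReal.ofReal γ • m = ν :=
    Measure.sub_add_cancel_of_le hle
  have hτ : ν - ENNReal.ofReal γ • m ≤ ν := Measure.sub_le
  have hf : IsFiniteMeasure (ν - ENNReal.ofReal γ • m) := isFiniteMeasure_of_le ν hτ
  refine ⟨_, hf, hτ, ?_, ?_⟩
  · have h1 : (ν - ENNReal.ofReal γ • m + ENNReal.ofReal γ • m).real Set.univ = 1 := by
      rw [hadd]; simp
    rw [measureReal_add_apply] at h1
    simp [hγ.le] at h1
    linarith
  · intro E _ _ g hg ⟨R, hR⟩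
    have hi : ∀ (ρ : Measure B) [IsFiniteMeasure ρ], Integrable g ρ := fun ρ _ =>
      Integrable.of_bound hg.aestronglyMeasurable R (ae_of_all _ hR)
    conv_lhs => rw [← hadd]
    rw [integral_add_measure (hi _) (hi _), integral_smul_measure, ENNReal.toReal_ofReal hγ.le]

lemma minor_inf {ν m : Measure B} [IsProbabilityMeasure ν] [IsProbabilityMeasure m] {γ : ℝ}
    (hγ : 0 < γ) (hγ1 : γ < 1) (hD : ∀ Γ, MeasurableSet Γ → ENNReal.ofReal γ * m Γ ≤ ν Γ)
    {g : B → ℝ} (hg : StronglyMeasurable g) {c R : ℝ} (hR : ∀ y, |g y - c| ≤ R) :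
    |(∫ y, g y ∂ν) - (γ * ∫ y, g y ∂m + (1-γ)*c)| ≤ (1-γ) * R := by
  obtain ⟨τ, hτ, hle, hτ1, h⟩ := minor_split hγ hγ1 hD
  have hb : ∀ y, ‖g y‖ ≤ |c| + R := fun y => by
    have := abs_add_le (g y - c) c
    rw [sub_add_cancel] at this
    rw [Real.norm_eq_abs]; linarith [hR y]
  rw [h g hg ⟨_, hb⟩]
  have hi : Integrable g τ := Integrable.of_bound hg.aestronglyMeasurable _ (ae_of_all _ hb)
  have h2 : ∫ y, (g y - c) ∂τ = ∫ y, g y ∂τ - (1-γ)*c := by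
    rw [integral_sub hi (integrable_const _)]; simp [hτ1]
  have h3 := norm_integral_le_of_norm_le_const (μ := τ) (f := fun y => g y - c) (ae_of_all _ hR)
  rw [h2, hτ1] at h3
  rw [Real.norm_eq_abs] at h3
  rw [smul_eq_mul]
  calc _ = |∫ y, g y ∂τ - (1-γ)*c| := by congr 1; ring
    _ ≤ _ := by linarith

lemma minor_two {ν m : Measure B} [IsProbabilityMeasure ν] [IsProbabilityMeasure m] {γ : ℝ}
    (hγ : 0 < γ) (hγ1 : γ < 1) (hD : ∀ Γ, MeasurableSet Γ → ENNReal.ofReal γ * m Γ ≤ ν Γ)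
    {g : B → ℂ} (hg : StronglyMeasurable g) {R : ℝ} (hR : ∀ y, ‖g y‖ ≤ R) :
    ‖(∫ y, g y ∂ν) - γ • ∫ y, g y ∂m‖^2 ≤ (1-γ) * ∫ y, ‖g y‖^2 ∂ν := by
  obtain ⟨τ, hτ, hle, hτ1, h⟩ := minor_split hγ hγ1 hD
  rw [h g hg ⟨_, hR⟩, add_sub_cancel_right]
  have hi : Integrable (fun y => ‖g y‖) τ :=
    Integrable.of_bound hg.norm.aestronglyMeasurable R (ae_of_all _ (by simpa using hR))
  have hi2 : ∀ (ρ : Measure B) [IsFiniteMeasure ρ], Integrable (fun y => ‖g y‖^2) ρ := fun ρ _ =>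
    Integrable.of_bound (hg.norm.pow 2).aestronglyMeasurable (R^2) (ae_of_all _ fun y => by
      simp only [norm_pow, norm_norm]
      exact pow_le_pow_left₀ (norm_nonneg _) (hR y) 2)
  set a := ∫ y, ‖g y‖ ∂τ with ha
  have h1 : ‖∫ y, g y ∂τ‖ ≤ a := norm_integral_le_integral_norm _
  have hp : 0 < 1 - γ := by linarith
  have h0 : 0 ≤ ∫ y, (‖g y‖ - a/(1-γ))^2 ∂τ := integral_nonneg fun y => sq_nonneg _
  have h2 : ∫ y, (‖g y‖ - a/(1-γ))^2 ∂τ = ∫ y, ‖g y‖^2 ∂τ - a^2/(1-γ) := by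
    have : ∀ y, (‖g y‖ - a/(1-γ))^2 = ‖g y‖^2 - (2*(a/(1-γ))) * ‖g y‖ + (a/(1-γ))^2 := fun y => by ring
    simp_rw [this]
    have i1 : Integrable (fun y => ‖g y‖^2 - (2*(a/(1-γ))) * ‖g y‖) τ := (hi2 τ).sub (hi.const_mul _)
    rw [integral_add i1 (integrable_const _),
      integral_sub (hi2 τ) (hi.const_mul _), integral_const_mul, ← ha]
    simp only [integral_const, hτ1, smul_eq_mul]
    field_simp
    ring
  have h3 : ∫ y, ‖g y‖^2 ∂τ ≤ ∫ y, ‖g y‖^2 ∂ν :=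
    integral_mono_measure hle (ae_of_all _ fun y => by positivity) (hi2 ν)
  have h4 : a^2/(1-γ) ≤ ∫ y, ‖g y‖^2 ∂ν := by linarith
  rw [div_le_iff₀ hp] at h4
  have := pow_le_pow_left₀ (norm_nonneg _) h1 2
  linarith

end meas

section ker
variable {α A B : Type*} {mF : MeasurableSpace α} {m0 : MeasurableSpace α} [MeasurableSpace A] [mB : MeasurableSpace B]
  {μ : Measure α} [IsProbabilityMeasure μ] {X : α → A} {Y : α → B} {κ : Kernel A B} [IsMarkovKernel κ]
  
lemma condExp_kernel {E : Type} [NormedAddCommGroup E] [NormedSpace ℝ E] [CompleteSpace E]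
    (hF : mF ≤ m0) (hX : Measurable[mF] X) (hY : Measurable Y)
    (hc : ∀ Γ, MeasurableSet Γ → μ[fun ω => Γ.indicator (fun _ => (1:ℝ)) (Y ω)|mF] =ᵐ[μ]
      fun ω => (κ (X ω) Γ).toReal)
    {g : B → E} (hg : StronglyMeasurable g) {R : ℝ} (hR : ∀ y, ‖g y‖ ≤ R) :
    μ[fun ω => g (Y ω)|mF] =ᵐ[μ] fun ω => ∫ y, g y ∂κ (X ω) := by
  have hX0 : Measurable X := hX.mono hF le_rfl
  have hP : StronglyMeasurable (fun x => ∫ y, g y ∂κ x) := hg.integral_kernel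
  have hPb : ∀ x, ‖∫ y, g y ∂κ x‖ ≤ R := fun x => by
    have := norm_integral_le_of_norm_le_const (μ := κ x) (ae_of_all _ hR)
    simpa using this
  refine (ae_eq_condExp_of_forall_setIntegral_eq hF ?_ ?_ ?_ ?_).symm
  · exact Integrable.of_bound (hg.comp_measurable hY).aestronglyMeasurable R (ae_of_all _ fun ω => hR _)
  · intro s hs _
    exact Integrable.of_bound (hP.comp_measurable hX0).aestronglyMeasurable R (ae_of_all _ fun ω => hPb _)
  · intro s hs _
    have key : (μ.restrict s).map Y = ((μ.restrict s).map X).bind κ := by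
      have hfin : IsFiniteMeasure ((μ.restrict s).map X) := inferInstance
      ext Γ hΓ
      rw [Measure.bind_apply hΓ κ.aemeasurable, lintegral_map (κ.measurable_coe hΓ) hX0,
        Measure.map_apply hY hΓ]
      have h1 : ∫ ω in s, Γ.indicator (fun _ => (1:ℝ)) (Y ω) ∂μ = ∫ ω in s, (κ (X ω) Γ).toReal ∂μ := by
        rw [← setIntegral_condExp hF _ hs]
        · exact integral_congr_ae (ae_restrict_of_ae (hc Γ hΓ))
        · exact Integrable.of_bound ((stronglyMeasurable_const.indicator hΓ).comp_measurable hY).aestronglyMeasurable 1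
            (ae_of_all _ fun ω => by
              by_cases h : Y ω ∈ Γ <;> simp [h])
      have h2 : ∫ ω in s, Γ.indicator (fun _ => (1:ℝ)) (Y ω) ∂μ = ((μ.restrict s) (Y ⁻¹' Γ)).toReal := by
        have := integral_indicator_const (μ := μ.restrict s) (1:ℝ) (hY hΓ)
        rw [smul_eq_mul, mul_one] at this
        rw [← measureReal_def, ← this]
        rfl
      rw [h2, integral_toReal (f := fun ω => κ (X ω) Γ) ((κ.measurable_coe hΓ).comp hX0).aemeasurable
        (ae_of_all _ fun ω => measure_lt_top _ _)] at h1
      refine (ENNReal.toReal_eq_toReal_iff' (measure_ne_top _ _) ?_).1 h1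
      refine ne_of_lt (lt_of_le_of_lt (lintegral_mono fun ω => (prob_le_one : κ (X ω) Γ ≤ 1)) ?_)
      simp
    have h1 : ∫ ω in s, g (Y ω) ∂μ = ∫ y, g y ∂((μ.restrict s).map Y) :=
      (integral_map hY.aemeasurable hg.aestronglyMeasurable).symm
    have h2 : ∫ ω in s, ∫ y, g y ∂κ (X ω) ∂μ = ∫ x, ∫ y, g y ∂κ x ∂((μ.restrict s).map X) :=
      (integral_map hX0.aemeasurable hP.aestronglyMeasurable).symm
    rw [h1, h2]
    have hint : Integrable g ((μ.restrict s).map Y) :=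
      Integrable.of_bound hg.aestronglyMeasurable R (ae_of_all _ hR)
    rw [key] at hint ⊢
    rw [Measure.comp_eq_comp_const_apply] at hint ⊢
    rw [Kernel.integral_comp hint]
    simp
  · exact (hP.comp_measurable hX).aestronglyMeasurable

lemma factor {E : Type} [NormedAddCommGroup E] [CompleteSpace E] {g : α → E}
    (hg : Bdd μ (mB.comap Y) g) : ∃ (h : B → E) (R : ℝ), StronglyMeasurable h ∧ (∀ y, ‖h y‖ ≤ R) ∧
      g =ᵐ[μ] fun ω => h (Y ω) := by
  classical
  obtain ⟨h, hh, rfl⟩ := hg.sm.exists_eq_measurable_comp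
  obtain ⟨R, hR⟩ := hg.bd
  have hs : MeasurableSet {y | ‖h y‖ ≤ R} := measurableSet_le hh.norm.measurable measurable_const
  refine ⟨Set.indicator {y | ‖h y‖ ≤ R} h, max R 0, hh.indicator hs, fun y => ?_, ?_⟩
  · by_cases hy : ‖h y‖ ≤ R
    · rw [Set.indicator_of_mem (show y ∈ {y | ‖h y‖ ≤ R} from hy)]; exact le_max_of_le_left hy
    · rw [Set.indicator_of_notMem (show y ∉ {y | ‖h y‖ ≤ R} from hy)]; simp
  · filter_upwards [hR] with ω hω
    rw [Set.indicator_of_mem (show Y ω ∈ {y | ‖h y‖ ≤ R} from hω)]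
    rfl

lemma ker_markov {E : Type} [NormedAddCommGroup E] [NormedSpace ℝ E] [CompleteSpace E] {mA : MeasurableSpace A} {X : α → A} {κ : Kernel A B} [IsMarkovKernel κ]
    (hF : mF ≤ m0) (hX : Measurable[mF] X) (hY : Measurable Y)
    (hc : ∀ Γ, MeasurableSet Γ → μ[fun ω => Γ.indicator (fun _ => (1:ℝ)) (Y ω)|mF] =ᵐ[μ]
      fun ω => (κ (X ω) Γ).toReal) {g : α → E} (hg : Bdd μ (mB.comap Y) g) :
    μ[g|mF] =ᵐ[μ] μ[g|mA.comap X] := by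
  obtain ⟨h, R, hh, hR, hgh⟩ := factor hg
  have h1 := (condExp_congr_ae hgh).trans (condExp_kernel hF hX hY hc hh hR)
  have hP : StronglyMeasurable (fun x => ∫ y, h y ∂κ x) := hh.integral_kernel
  have hle : mA.comap X ≤ mF := hX.comap_le
  have hle0 := hle.trans hF
  have hPX : StronglyMeasurable[mA.comap X] (fun ω => ∫ y, h y ∂κ (X ω)) :=
    hP.comp_measurable (comap_measurable X)
  have h2 := condExp_congr_ae (m := mA.comap X) h1
  have h3 := condExp_condExp_of_le (μ := μ) (f := g) hle hF
  rw [condExp_of_stronglyMeasurable hle0 hPX (integrable_condExp.congr h1)] at h2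
  exact h1.trans (h2.symm.trans h3)

variable {γ : ℝ} {m : Measure B} [IsProbabilityMeasure m]

lemma ker_inf (hF : mF ≤ m0) (hX : Measurable[mF] X) (hY : Measurable Y)
    (hc : ∀ Γ, MeasurableSet Γ → μ[fun ω => Γ.indicator (fun _ => (1:ℝ)) (Y ω)|mF] =ᵐ[μ]
      fun ω => (κ (X ω) Γ).toReal) (hγ : 0 < γ) (hγ1 : γ < 1)
    (hD : ∀ x Γ, MeasurableSet Γ → ENNReal.ofReal γ * m Γ ≤ κ x Γ)
    {g : α → ℝ} {c R : ℝ} (hg : Bdd μ (mB.comap Y) g) (hR : ∀ᵐ ω ∂μ, |g ω - c| ≤ R) :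
    ∃ b : ℝ, ∀ᵐ ω ∂μ, |(μ[g|mF]) ω - b| ≤ (1-γ) * R := by
  classical
  obtain ⟨h, R', hh, hR', hgh⟩ := factor hg
  have hR0 : 0 ≤ R := by
    obtain ⟨ω, hω⟩ := hR.exists
    exact (abs_nonneg _).trans hω
  have hs : MeasurableSet {y | |h y - c| ≤ R} :=
    measurableSet_le ((hh.sub stronglyMeasurable_const).norm.measurable) measurable_const
  set k : B → ℝ := fun y => if |h y - c| ≤ R then h y else c with hk
  have hkm : StronglyMeasurable k := StronglyMeasurable.ite hs hh stronglyMeasurable_const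
  have hkR : ∀ y, |k y - c| ≤ R := fun y => by
    by_cases hy : |h y - c| ≤ R
    · simp [hk, hy]
    · simp [hk, hy, hR0]
  have hgk : g =ᵐ[μ] fun ω => k (Y ω) := by
    filter_upwards [hgh, hR] with ω h1 h2
    rw [h1] at h2 ⊢
    simp [hk, h2]
  have hb : ∀ y, ‖k y‖ ≤ |c| + R := fun y => by
    have := abs_add_le (k y - c) c
    rw [sub_add_cancel] at this
    rw [Real.norm_eq_abs]; linarith [hkR y]
  have h1 := (condExp_congr_ae hgk).trans (condExp_kernel hF hX hY hc hkm hb)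
  refine ⟨γ * ∫ y, k y ∂m + (1-γ)*c, ?_⟩
  filter_upwards [h1] with ω hω
  rw [hω]
  exact minor_inf hγ hγ1 (hD (X ω)) hkm hkR

lemma ker_two (hF : mF ≤ m0) (hX : Measurable[mF] X) (hY : Measurable Y)
    (hc : ∀ Γ, MeasurableSet Γ → μ[fun ω => Γ.indicator (fun _ => (1:ℝ)) (Y ω)|mF] =ᵐ[μ]
      fun ω => (κ (X ω) Γ).toReal) (hγ : 0 < γ) (hγ1 : γ < 1)
    (hD : ∀ x Γ, MeasurableSet Γ → ENNReal.ofReal γ * m Γ ≤ κ x Γ)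
    {g : α → ℂ} (hg : Bdd μ (mB.comap Y) g) (h0 : ∫ ω, g ω ∂μ = 0) :
    n2 μ (μ[g|mF]) ≤ Real.sqrt (1-γ) * n2 μ g := by
  have hX0 : Measurable X := hX.mono hF le_rfl
  obtain ⟨h, R, hh, hR, hgh⟩ := factor hg
  have h1 := (condExp_congr_ae hgh).trans (condExp_kernel hF hX hY hc hh hR)
  have hR2 : ∀ y, ‖‖h y‖^2‖ ≤ R^2 := fun y => by
    simp only [norm_pow, norm_norm]
    exact pow_le_pow_left₀ (norm_nonneg _) (hR y) 2
  have h2 := condExp_kernel hF hX hY hc (g := fun y => ‖h y‖^2) (hh.norm.pow 2) hR2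
  have hgm : AEStronglyMeasurable g μ := (hg.sm.mono (hY.comap_le)).aestronglyMeasurable
  have h3 : ∫ ω, ∫ y, ‖h y‖^2 ∂κ (X ω) ∂μ = n2 μ g ^ 2 := by
    rw [n2_sq hgm, ← integral_congr_ae h2]
    refine (integral_condExp hF).trans ?_
    refine integral_congr_ae ?_
    filter_upwards [hgh] with ω hω
    simp [hω]
  have hP : StronglyMeasurable (fun x => ∫ y, h y ∂κ x) := hh.integral_kernel
  set P : α → ℂ := fun ω => ∫ y, h y ∂κ (X ω) with hPd
  set b : ℂ := γ • ∫ y, h y ∂m with hb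
  have hPm : StronglyMeasurable P := hP.comp_measurable hX0
  have hPb : ∀ ω, ‖P ω‖ ≤ R := fun ω => by
    have := norm_integral_le_of_norm_le_const (μ := κ (X ω)) (ae_of_all _ hR)
    simpa using this
  have hPi : Integrable P μ := Integrable.of_bound hPm.aestronglyMeasurable R (ae_of_all _ hPb)
  have hP0 : ∫ ω, P ω ∂μ = 0 := by
    rw [← integral_congr_ae h1, integral_condExp hF, h0]
  have hQ : Integrable (fun ω => ∫ y, ‖h y‖^2 ∂κ (X ω)) μ := integrable_condExp.congr h2
  rw [n2_congr h1]
  refine n2_le_of_sq hPm.aestronglyMeasurable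
    (g := fun ω => (1-γ) * (∫ y, ‖h y‖^2 ∂κ (X ω)) + 2 * (P ω * (starRingEnd ℂ) b).re - ‖b‖^2) ?_ ?_ ?_ ?_
  · exact ((hQ.const_mul _).add (((hPi.mul_const _).re).const_mul 2)).sub (integrable_const _)
  · refine ae_of_all _ fun ω => ?_
    have := minor_two hγ hγ1 (hD (X ω)) hh hR
    rw [← hb] at this
    change ‖P ω - b‖^2 ≤ _ at this
    have e : ‖P ω - b‖^2 = ‖P ω‖^2 - 2 * (P ω * (starRingEnd ℂ) b).re + ‖b‖^2 := by
      rw [← Complex.normSq_eq_norm_sq, ← Complex.normSq_eq_norm_sq, ← Complex.normSq_eq_norm_sq, Complex.normSq_sub]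
      ring
    linarith
  · exact mul_nonneg (Real.sqrt_nonneg _) (n2_nonneg _)
  · have hre : ∫ ω, (P ω * (starRingEnd ℂ) b).re ∂μ = 0 := by
      have := integral_re (𝕜 := ℂ) (hPi.mul_const ((starRingEnd ℂ) b))
      refine this.trans ?_
      rw [integral_mul_const, hP0]; simp
    have i1 := hQ.const_mul (1-γ)
    have i2 : Integrable (fun ω => 2 * (P ω * (starRingEnd ℂ) b).re) μ := ((hPi.mul_const _).re).const_mul 2
    have i3 : Integrable (fun ω => (1-γ) * (∫ y, ‖h y‖^2 ∂κ (X ω)) + 2 * (P ω * (starRingEnd ℂ) b).re) μ := i1.add i2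
    rw [integral_sub i3 (integrable_const _), integral_add i1 i2, integral_const_mul,
      integral_const_mul, hre, h3, mul_pow, Real.sq_sqrt (by linarith)]
    simp
end ker
end BE

namespace BE

/-- past filtration, shifted -/
def FF (X : ∀ j, Ω → 𝒳 j) : ℕ → MeasurableSpace Ω
  | 0 => ⊥
  | j+1 => pastSigma X j

/-- present sigma-algebras, shifted -/
def GG (X : ∀ j, Ω → 𝒳 j) : ℕ → MeasurableSpace Ω
  | 0 => ⊥
  | j+1 => MeasurableSpace.comap (X j) inferInstance

lemma comap_le_past (X : ∀ j, Ω → 𝒳 j) (j : ℕ) :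
    MeasurableSpace.comap (X j) inferInstance ≤ pastSigma X j :=
  le_iSup₂_of_le (f := fun i (_ : i ∈ Finset.range (j+1)) => MeasurableSpace.comap (X i) inferInstance)
    j (by simp) le_rfl

lemma past_mono (X : ∀ j, Ω → 𝒳 j) (j : ℕ) : pastSigma X j ≤ pastSigma X (j+1) := by
  refine iSup₂_le fun i hi => ?_
  refine le_iSup₂_of_le (f := fun i (_ : i ∈ Finset.range (j+1+1)) => MeasurableSpace.comap (X i) inferInstance)
    i ?_ le_rfl
  simp at hi ⊢
  omega

lemma condExp_bot_eq {E : Type} [NormedAddCommGroup E] [NormedSpace ℝ E] [CompleteSpace E]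
    (μ : Measure Ω) [IsProbabilityMeasure μ] (g : Ω → E) : μ[g|⊥] = fun _ => ∫ ω, g ω ∂μ :=
  condExp_bot g

lemma chain_of_markov (μ : Measure Ω) [IsProbabilityMeasure μ]
    (X : ∀ j, Ω → 𝒳 j) (κ : ∀ j n, Kernel (𝒳 j) (𝒳 (j + n)))
    (hMarkov : IsInhomMarkov μ X κ)
    (n₀ : ℕ) (hn₀ : 0 < n₀) (γ : ℝ) (hγ : γ ∈ Set.Ioo (0 : ℝ) 1)
    (m : ∀ j, Measure (𝒳 j)) (hm : ∀ j, IsProbabilityMeasure (m j))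
    (hDoeblin : ∀ j (x : 𝒳 j) (Γ : Set (𝒳 (j + n₀))), MeasurableSet Γ →
      ENNReal.ofReal γ * m (j + n₀) Γ ≤ κ j n₀ x Γ) :
    Chain μ (FF X) (GG X) n₀ (1-γ) (Real.sqrt (1-γ)) := by
  have hpl : ∀ j, pastSigma X j ≤ (inferInstance : MeasurableSpace Ω) := fun j =>
    iSup₂_le fun i _ => (hMarkov.meas i).comap_le
  have hXp : ∀ j, Measurable[pastSigma X j] (X j) := fun j =>
    Measurable.mono (comap_measurable (X j)) (comap_le_past X j) le_rfl
  have hK := hMarkov.isMarkovKernel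
  refine ⟨?_, ?_, ?_, rfl, ?_, ?_, ?_, ?_⟩
  · refine monotone_nat_of_le_succ fun k => ?_
    cases k with
    | zero => exact bot_le
    | succ j => exact past_mono X j
  · intro k
    cases k with
    | zero => exact bot_le
    | succ j => exact hpl j
  · intro k
    cases k with
    | zero => exact bot_le
    | succ j => exact comap_le_past X j
  · intro k g hg
    cases k with
    | zero => exact EventuallyEq.rfl
    | succ j => 
      have := hK j 1
      exact ker_markov (κ := κ j 1) (Y := X (j+1)) (hpl j) (hXp j) (hMarkov.meas (j+1))
        (hMarkov.cond j 1) hg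
  · intro k g hg
    cases k with
    | zero => exact EventuallyEq.rfl
    | succ j => 
      have := hK j 1
      exact ker_markov (κ := κ j 1) (Y := X (j+1)) (hpl j) (hXp j) (hMarkov.meas (j+1))
        (hMarkov.cond j 1) hg
  · intro k g c R hg hR
    cases k with
    | zero =>
      refine ⟨∫ ω, g ω ∂μ, ae_of_all _ fun ω => ?_⟩
      have hR0 : 0 ≤ R := by
        obtain ⟨ω, hω⟩ := hR.exists
        exact (abs_nonneg _).trans hω
      have : μ[g|FF X 0] = fun _ => ∫ ω, g ω ∂μ := condExp_bot_eq μ g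
      rw [this]
      simpa using mul_nonneg (by linarith [hγ.2]) hR0
    | succ j => 
      have := hK j n₀
      rw [show j + 1 + n₀ = (j + n₀) + 1 by omega] at hg
      exact ker_inf (κ := κ j n₀) (Y := X (j+n₀)) (m := m (j+n₀)) (hpl j) (hXp j) (hMarkov.meas (j+n₀))
        (hMarkov.cond j n₀) hγ.1 hγ.2 (hDoeblin j) hg hR
  · intro k g hg h0
    cases k with
    | zero =>
      have : μ[g|FF X 0] = fun _ => ∫ ω, g ω ∂μ := condExp_bot_eq μ g
      rw [this, h0, n2_const]
      simpa using mul_nonneg (Real.sqrt_nonneg _) (n2_nonneg _)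
    | succ j => 
      have := hK j n₀
      rw [show j + 1 + n₀ = (j + n₀) + 1 by omega] at hg
      exact ker_two (κ := κ j n₀) (Y := X (j+n₀)) (m := m (j+n₀)) (hpl j) (hXp j) (hMarkov.meas (j+n₀))
        (hMarkov.cond j n₀) hγ.1 hγ.2 (hDoeblin j) hg h0

end BE

namespace BE

section
variable {α : Type*} {m0 : MeasurableSpace α} {μ : Measure α} [IsProbabilityMeasure μ]
  {F G : ℕ → MeasurableSpace α} {N : ℕ} {q ρ : ℝ}

/-- the law of the normalised sum -/
def lawW (μ : Measure α) (Y : ℕ → α → ℝ) (n : ℕ) (σ : ℝ) : Measure ℝ :=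
  μ.map (fun ω => ((∑ k ∈ Finset.range n, Y k ω) - ∫ ω', ∑ k ∈ Finset.range n, Y k ω' ∂μ) / σ)

lemma poly_exp (t : ℝ) : (1+|t|)*(1+t^2) * Real.exp (3/4 - t^2/4)
    ≤ 512 * Real.exp (3/4) * Real.exp (-(1/8)*t^2) := by
  have h1 : 1 + t^2 ≤ 16 * Real.exp (t^2/16) := by
    have := Real.add_one_le_exp (t^2/16)
    nlinarith [sq_nonneg t]
  have h2 : 1 + |t| ≤ 2*(1+t^2) := by
    have := sq_abs t
    nlinarith [sq_nonneg (|t| - 1), sq_nonneg t]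
  have h3 : (1+t^2)^2 ≤ 256 * Real.exp (t^2/8) := by
    calc (1+t^2)^2 ≤ (16 * Real.exp (t^2/16))^2 := pow_le_pow_left₀ (by positivity) h1 2
      _ = 256 * Real.exp (t^2/8) := by
        rw [mul_pow, ← Real.exp_nat_mul]; norm_num; ring
  have h4 : (1+|t|)*(1+t^2) ≤ 512 * Real.exp (t^2/8) := by
    have : (1+|t|)*(1+t^2) ≤ 2*(1+t^2)*(1+t^2) := mul_le_mul_of_nonneg_right h2 (by positivity)
    nlinarith
  calc _ ≤ 512 * Real.exp (t^2/8) * Real.exp (3/4 - t^2/4) :=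
        mul_le_mul_of_nonneg_right h4 (Real.exp_nonneg _)
    _ = _ := by
      rw [mul_assoc, mul_assoc, ← Real.exp_add, ← Real.exp_add]; congr 2; ring

lemma sum_bdd (hc : Chain μ F G N q ρ) {Y : ℕ → α → ℝ} (hY : ∀ k, Bdd μ (G (k+1)) (Y k)) (n : ℕ) :
    Bdd μ m0 (fun ω => ∑ k ∈ Finset.range n, Y k ω) :=
  Bdd.sum _ fun k => (hY k).mono (hc.Gle _)

lemma W_bdd (hc : Chain μ F G N q ρ) {Y : ℕ → α → ℝ} (hY : ∀ k, Bdd μ (G (k+1)) (Y k)) (n : ℕ) (σ : ℝ) :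
    Bdd μ m0 (fun ω => ((∑ k ∈ Finset.range n, Y k ω) - ∫ ω', ∑ k ∈ Finset.range n, Y k ω' ∂μ) / σ) := by
  have := ((sum_bdd hc hY n).sub (Bdd.const (∫ ω', ∑ k ∈ Finset.range n, Y k ω' ∂μ))).mul (Bdd.const (σ⁻¹))
  simpa [div_eq_mul_inv] using this

lemma law_prob (hc : Chain μ F G N q ρ) {Y : ℕ → α → ℝ} (hY : ∀ k, Bdd μ (G (k+1)) (Y k)) (n : ℕ) (σ : ℝ) :
    IsProbabilityMeasure (lawW μ Y n σ) :=
  Measure.isProbabilityMeasure_map (W_bdd hc hY n σ).sm.measurable.aemeasurable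

lemma law_exp (hc : Chain μ F G N q ρ) {Y : ℕ → α → ℝ} (hY : ∀ k, Bdd μ (G (k+1)) (Y k)) (n : ℕ) (σ : ℝ) :
    Integrable Real.exp (lawW μ Y n σ) := by
  have hW := W_bdd hc hY n σ
  rw [lawW, integrable_map_measure Real.continuous_exp.aestronglyMeasurable hW.sm.measurable.aemeasurable]
  obtain ⟨R, hR⟩ := hW.bd
  refine Integrable.of_bound (Real.continuous_exp.comp_stronglyMeasurable hW.sm).aestronglyMeasurable (Real.exp R) ?_
  filter_upwards [hR] with ω hω
  simp only [Function.comp, Real.norm_eq_abs, Real.abs_exp]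
  exact Real.exp_le_exp.2 ((le_abs_self _).trans hω)

lemma law_neg (hc : Chain μ F G N q ρ) {Y : ℕ → α → ℝ} (hY : ∀ k, Bdd μ (G (k+1)) (Y k)) (n : ℕ) (σ : ℝ) :
    (lawW μ Y n σ).map Neg.neg = lawW μ (fun k ω => - Y k ω) n σ := by
  rw [lawW, lawW, Measure.map_map measurable_neg (W_bdd hc hY n σ).sm.measurable]
  congr 1
  ext ω
  simp only [Function.comp, Finset.sum_neg_distrib, integral_neg]
  ring

lemma neg_bdd {m : MeasurableSpace α} {f : α → ℝ} (h : Bdd μ m f) : Bdd μ m (fun ω => - f ω) := by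
  simpa using (Bdd.const (μ := μ) (0:ℝ)).sub h

lemma pt_bound (hc : Chain μ F G N q ρ) (hN : 0 < N) (hq : q < 1) (hρ0 : 0 ≤ ρ) (hρ : ρ < 1) (n : ℕ)
    (Y : ℕ → α → ℝ) (C : ℝ) (hC : 0 ≤ C) (hY : ∀ k, Bdd μ (G (k+1)) (Y k))
    (hYC : ∀ k, ∀ᵐ ω ∂μ, |Y k ω| ≤ C) (A B L c : ℝ) (hA : A = 2*(C + N*C/(1-q)))
    (hB : B = (1-ρ)/(40*N)) (hL : L = (6 + 48*N/(1-ρ)) * (2*(C + N*C/(1-q)))) (hL0 : 0 ≤ L) (hA0 : 0 ≤ A)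
    (hc0 : 0 < c) (hcA : 2*c*A ≤ B) (hcL : 2*c*L ≤ 1/4) (σ : ℝ) (hσ : 1/c ≤ σ)
    (hv : variance (fun ω => ∑ k ∈ Finset.range n, Y k ω) μ = σ^2) (t : ℝ) (ht : |t| ≤ c*σ) :
    ‖(∫ w, Complex.exp ((1 + Complex.I * t) * w) ∂(lawW μ Y n σ)) - Complex.exp ((1 + Complex.I * t)^2/2)‖
      ≤ L/σ * (512 * Real.exp (3/4) * Real.exp (-(1/8)*t^2)) := by
  have hσ0 : 0 < σ := lt_of_lt_of_le (by positivity) hσ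
  have hσC : (σ:ℂ) ≠ 0 := by exact_mod_cast hσ0.ne'
  set z : ℂ := (1 + Complex.I * t)/σ with hz
  have hn1 : ‖(1 + Complex.I * t : ℂ)‖ ≤ 1 + |t| := by
    refine (norm_add_le _ _).trans ?_
    simp
  have hn2 : ‖(1 + Complex.I * t : ℂ)‖^2 = 1 + t^2 := by
    rw [← Complex.normSq_eq_norm_sq, Complex.normSq_apply]; simp; ring
  have hzn : ‖z‖ = ‖(1 + Complex.I * t : ℂ)‖/σ := by
    rw [hz, norm_div, Complex.norm_real, Real.norm_of_nonneg hσ0.le]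
  have hz1 : ‖z‖ ≤ (1+|t|)/σ := by
    rw [hzn]; gcongr
  have hz2 : ‖z‖ ≤ 2*c := by
    refine hz1.trans ?_
    rw [div_le_iff₀ hσ0]
    rw [div_le_iff₀ hc0] at hσ
    linarith
  have hzs : ‖z‖^2 * σ^2 = 1 + t^2 := by
    rw [hzn, div_pow, hn2]; field_simp
  have hlt : L * ‖z‖^3 * σ^2 = L * ‖z‖ * (1+t^2) := by rw [← hzs]; ring
  have hle1 : L * ‖z‖ * (1+t^2) ≤ 1/4 * (1+t^2) := by
    refine mul_le_mul_of_nonneg_right ?_ (by positivity)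
    nlinarith
  have hle2 : L * ‖z‖ * (1+t^2) ≤ L/σ * ((1+|t|)*(1+t^2)) := by
    have : L * ‖z‖ ≤ L * ((1+|t|)/σ) := mul_le_mul_of_nonneg_left hz1 hL0
    calc _ ≤ L * ((1+|t|)/σ) * (1+t^2) := mul_le_mul_of_nonneg_right this (by positivity)
      _ = _ := by ring
  have hcore := core hc hN hq hρ0 hρ n Y C hC hY hYC z (by
    rw [← hA, ← hB]
    exact (mul_le_mul_of_nonneg_right hz2 hA0).trans hcA)
  rw [← hL, hv, hlt] at hcore
  have e1 : z^2 * ((σ^2 : ℝ) : ℂ)/2 = (1 + Complex.I * t)^2/2 := by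
    rw [hz]; push_cast; field_simp
  rw [e1] at hcore
  have e2 : ‖Complex.exp ((1 + Complex.I * t)^2/2)‖ = Real.exp ((1 - t^2)/2) := by
    rw [Complex.norm_exp]
    congr 1
    have : ((1 + Complex.I * t)^2/2 : ℂ) = (((1 - t^2)/2 : ℝ) : ℂ) + ((t:ℝ):ℂ) * Complex.I := by
      push_cast
      linear_combination (t^2/2 : ℂ) * Complex.I_sq
    rw [this, Complex.add_re, Complex.ofReal_re]; simp
  have e3 : ∫ w, Complex.exp ((1 + Complex.I * t) * w) ∂(lawW μ Y n σ) =
      ∫ ω, Complex.exp (z * ((∑ k ∈ Finset.range n, Y k ω) - ∫ ω', ∑ k ∈ Finset.range n, Y k ω' ∂μ : ℝ)) ∂μ := by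
    rw [lawW, integral_map (W_bdd hc hY n σ).sm.measurable.aemeasurable
      (by fun_prop)]
    refine integral_congr_ae (ae_of_all _ fun ω => ?_)
    simp only
    congr 1
    rw [hz, Complex.ofReal_div]
    ring
  rw [e3]
  refine hcore.trans ?_
  rw [e2]
  calc Real.exp ((1 - t^2)/2) * (L * ‖z‖ * (1+t^2) * Real.exp (L * ‖z‖ * (1+t^2)))
      ≤ Real.exp ((1 - t^2)/2) * (L/σ * ((1+|t|)*(1+t^2)) * Real.exp (1/4 * (1+t^2))) := by
        refine mul_le_mul_of_nonneg_left ?_ (Real.exp_nonneg _)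
        exact mul_le_mul hle2 (Real.exp_le_exp.2 hle1) (Real.exp_nonneg _) (by positivity)
    _ = L/σ * ((1+|t|)*(1+t^2) * Real.exp (3/4 - t^2/4)) := by
        have : Real.exp (3/4 - t^2/4) = Real.exp ((1 - t^2)/2) * Real.exp (1/4 * (1+t^2)) := by
          rw [← Real.exp_add]; congr 1; ring
        rw [this]; ring
    _ ≤ _ := mul_le_mul_of_nonneg_left (poly_exp t) (by positivity)

lemma tail_rate (hc : Chain μ F G N q ρ) (hN : 0 < N) (hq : q < 1) (hρ0 : 0 ≤ ρ) (hρ : ρ < 1)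
    (C : ℝ) (hC : 0 ≤ C) : ∃ K σ₀ : ℝ, 0 ≤ K ∧ 0 < σ₀ ∧ ∀ (n : ℕ)
    (Y : ℕ → α → ℝ) (σ : ℝ), (∀ k, Bdd μ (G (k+1)) (Y k)) →
    (∀ k, ∀ᵐ ω ∂μ, |Y k ω| ≤ C) → σ₀ ≤ σ →
    variance (fun ω => ∑ k ∈ Finset.range n, Y k ω) μ = σ^2 → ∀ x : ℝ,
    Real.exp x * |(lawW μ Y n σ).real (Set.Ioi x) - (gaussianReal 0 1).real (Set.Ioi x)| ≤ K/σ := by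
  obtain ⟨C₀, hC₀, htc⟩ := tail_compare
  have h1q : 0 < 1 - q := by linarith
  have h1ρ : 0 < 1 - ρ := by linarith
  have hN' : (0:ℝ) < N := by exact_mod_cast hN
  obtain ⟨A, hA⟩ : ∃ A, A = 2*(C + N*C/(1-q)) := ⟨_, rfl⟩
  obtain ⟨B, hB⟩ : ∃ B, B = (1-ρ)/(40*N) := ⟨_, rfl⟩
  obtain ⟨L, hL⟩ : ∃ L, L = (6 + 48*N/(1-ρ)) * (2*(C + N*C/(1-q))) := ⟨_, rfl⟩
  have hA0 : 0 ≤ A := by rw [hA]; positivity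
  have hB0 : 0 < B := by rw [hB]; positivity
  have hL0 : 0 ≤ L := by rw [hL]; positivity
  set d := 1 + 2*A/B + 8*L with hd
  have hd0 : 0 < d := by positivity
  have hcA : 2*(1/d)*A ≤ B := by
    have e : 2*(1/d)*A = 2*A/d := by ring
    rw [e, div_le_iff₀ hd0, hd]
    have : B * (1 + 2*A/B + 8*L) = B + 2*A + 8*L*B := by field_simp
    rw [this]; nlinarith [mul_nonneg hL0 hB0.le]
  have hcL : 2*(1/d)*L ≤ 1/4 := by
    have e : 2*(1/d)*L = 2*L/d := by ring
    rw [e, div_le_iff₀ hd0, hd]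
    have : 0 ≤ 2*A/B := by positivity
    linarith
  set c := 1/d with hcd
  have hc0 : 0 < c := by positivity
  set P := 512 * Real.exp (3/4) with hP
  have hP0 : 0 ≤ P := by positivity
  set I1 := ∫ t : ℝ, Real.exp (-(1/8)*t^2) with hI1
  have hI10 : 0 ≤ I1 := integral_nonneg fun _ => (Real.exp_nonneg _)
  set M := Real.exp (1/2) + L*c*P with hM
  refine ⟨C₀ * (L*P*I1 + (2*M + Real.exp 1)/c), 1/c, by positivity, by positivity, ?_⟩
  intro n Y σ hY hYC hσ hv x
  have hσ0 : 0 < σ := lt_of_lt_of_le (by positivity) hσ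
  have hpt := pt_bound hc hN hq hρ0 hρ n Y C hC hY hYC A B L c hA hB hL hL0 hA0 hc0 hcA hcL σ hσ hv
  have hprob := law_prob hc hY n σ
  have hexp := law_exp hc hY n σ
  have hσc : 1/σ ≤ c := by
    rw [div_le_iff₀ hσ0]; rw [div_le_iff₀ hc0] at hσ; linarith
  have hMb : ∫ w, Real.exp w ∂(lawW μ Y n σ) ≤ M := by
    have h0 := hpt 0 (by simp; positivity)
    have e1 : ∫ w : ℝ, Complex.exp ((1 + Complex.I * (0:ℝ)) * w) ∂(lawW μ Y n σ) =
        ((∫ w, Real.exp w ∂(lawW μ Y n σ) : ℝ) : ℂ) := by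
      rw [← integral_complex_ofReal]
      refine integral_congr_ae (ae_of_all _ fun w => ?_)
      simp
    have e2 : Complex.exp ((1 + Complex.I * (0:ℝ))^2/2) = ((Real.exp (1/2) : ℝ) : ℂ) := by
      push_cast; congr 1; simp
    rw [e1, e2, ← Complex.ofReal_sub, Complex.norm_real, Real.norm_eq_abs] at h0
    have h1 := (le_abs_self _).trans h0
    have h2 : L/σ * (P * Real.exp (-(1/8)*0^2)) ≤ L*c*P := by
      simp only [ne_eq, OfNat.ofNat_ne_zero, not_false_eq_true, zero_pow, mul_zero, Real.exp_zero, mul_one]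
      refine mul_le_mul_of_nonneg_right ?_ hP0
      calc L/σ = L*(1/σ) := by ring
        _ ≤ L*c := mul_le_mul_of_nonneg_left hσc hL0
    rw [hM]; linarith
  have hgi : Integrable (fun t : ℝ => L/σ * (P * Real.exp (-(1/8)*t^2))) :=
    ((integrable_exp_neg_mul_sq (by norm_num : (0:ℝ) < 1/8)).const_mul _).const_mul _
  have hΔ : (∫ t in (-(c*σ))..(c*σ), ‖(∫ w, Complex.exp ((1 + Complex.I * t) * w) ∂(lawW μ Y n σ)) - Complex.exp ((1 + Complex.I * t)^2/2)‖) ≤ L/σ * (P * I1) := by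
    have hT : 0 < c*σ := by positivity
    rw [intervalIntegral.integral_of_le (by linarith)]
    have h1 : ∫ t : ℝ, L/σ * (P * Real.exp (-(1/8)*t^2)) = L/σ * (P * I1) := by
      rw [integral_const_mul, integral_const_mul]
    rw [← h1]
    refine le_trans ?_ (setIntegral_le_integral (s := Set.Ioc (-(c*σ)) (c*σ)) hgi (ae_of_all _ fun t => ?_))
    · refine integral_mono_of_nonneg (ae_of_all _ fun t => norm_nonneg _) hgi.integrableOn ?_
      refine (ae_restrict_iff' measurableSet_Ioc).2 (ae_of_all _ fun t ht => ?_)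
      exact hpt t (abs_le.2 ⟨ht.1.le, ht.2⟩)
    · simp only [Pi.zero_apply]; positivity
  have := htc (lawW μ Y n σ) hprob M (c*σ) _ hexp hMb (by positivity) hΔ x
  refine this.trans (le_of_eq ?_)
  field_simp

end
end BE

namespace BE

section
variable {α : Type*} {m0 : MeasurableSpace α} {μ : Measure α} [IsProbabilityMeasure μ]
  {F G : ℕ → MeasurableSpace α} {N : ℕ} {q ρ : ℝ}

lemma crude (ν : Measure ℝ) [IsProbabilityMeasure ν] (h : Integrable Real.exp ν) (x : ℝ) :
    Real.exp x * |ν.real (Set.Ioi x) - (gaussianReal 0 1).real (Set.Ioi x)| ≤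
      ∫ w, Real.exp w ∂ν + ∫ w, Real.exp w ∂(gaussianReal 0 1) := by
  have h1 := tailG_le ν h x
  have h2 := tailG_le (gaussianReal 0 1) exp_int_gauss x
  have h3 := tailG_nonneg ν x
  have h4 := tailG_nonneg (gaussianReal 0 1) x
  have : Real.exp x * |ν.real (Set.Ioi x) - (gaussianReal 0 1).real (Set.Ioi x)| =
      |tailG ν x - tailG (gaussianReal 0 1) x| := by
    rw [← abs_of_nonneg (Real.exp_nonneg x), ← abs_mul]
    simp only [tailG]; congr 1; ring
  rw [this, abs_le]
  constructor <;> linarith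

lemma chain_clt (hc : Chain μ F G N q ρ) (hN : 0 < N) (hq : q < 1) (hρ0 : 0 ≤ ρ) (hρ : ρ < 1)
    (C : ℝ) (hC : 0 ≤ C) (Y : ℕ → α → ℝ) (hY : ∀ k, Bdd μ (G (k+1)) (Y k))
    (hYC : ∀ k, ∀ᵐ ω ∂μ, |Y k ω| ≤ C) (σs : ℕ → ℝ)
    (hσ : ∀ n, σs n = Real.sqrt (variance (fun ω => ∑ k ∈ Finset.range n, Y k ω) μ))
    (hσ_top : Tendsto σs atTop atTop) (s : ℝ) (hs : 0 ≤ s) : ∃ Cs : ℝ, ∀ h h' : ℝ → ℝ,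
      Measurable h' →
      (∀ x y : ℝ, h y - h x = ∫ t in x..y, h' t) →
      Integrable (fun x => |h' x| / (1 + |x| ^ s)) volume →
      ∀ n : ℕ,
        σs n * |(∫ w, h w ∂(lawW μ Y n (σs n))) - ∫ x, h x ∂(gaussianReal 0 1)|
          ≤ Cs * ∫ x, |h' x| / (1 + |x| ^ s) := by
  obtain ⟨K, σ₀, hK, hσ₀, htail⟩ := tail_rate hc hN hq hρ0 hρ C hC
  obtain ⟨c, hc0, hsm⟩ := smooth_compare s hs
  obtain ⟨n1, hn1⟩ := (hσ_top.eventually_ge_atTop σ₀).exists_forall_of_atTop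
  have hY' : ∀ k, Bdd μ (G (k+1)) (fun ω => - Y k ω) := fun k => neg_bdd (hY k)
  have hYC' : ∀ k, ∀ᵐ ω ∂μ, |(fun ω => - Y k ω) ω| ≤ C := fun k => by simpa using hYC k
  have hσ0 : ∀ n, 0 ≤ σs n := fun n => by rw [hσ]; exact Real.sqrt_nonneg _
  have hv : ∀ n, variance (fun ω => ∑ k ∈ Finset.range n, Y k ω) μ = σs n ^ 2 := fun n => by
    rw [hσ, Real.sq_sqrt (variance_nonneg _ _)]
  have hv' : ∀ n, variance (fun ω => ∑ k ∈ Finset.range n, - Y k ω) μ = σs n ^ 2 := fun n => by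
    rw [← hv n, ← variance_neg]; congr 1; ext ω; simp
  obtain ⟨g, hg⟩ : ∃ g : ℕ → ℝ, ∀ n, g n = ∫ w, Real.exp w ∂(lawW μ Y n (σs n)) +
      ∫ w, Real.exp w ∂(lawW μ (fun k ω => - Y k ω) n (σs n)) + ∫ w, Real.exp w ∂(gaussianReal 0 1) := ⟨_, fun _ => rfl⟩
  have hp : ∀ n, 0 ≤ ∫ w, Real.exp w ∂(lawW μ Y n (σs n)) := fun n => integral_nonneg fun _ => (Real.exp_nonneg _)
  have hp' : ∀ n, 0 ≤ ∫ w, Real.exp w ∂(lawW μ (fun k ω => - Y k ω) n (σs n)) := fun n => integral_nonneg fun _ => (Real.exp_nonneg _)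
  have hp2 : 0 ≤ ∫ w, Real.exp w ∂(gaussianReal 0 1) := integral_nonneg fun _ => (Real.exp_nonneg _)
  have hg0 : ∀ n, 0 ≤ g n := fun n => by rw [hg]; linarith [hp n, hp' n]
  refine ⟨c * K + ∑ n ∈ Finset.range n1, σs n * (c * g n), ?_⟩
  intro h h' hm hFTC hi n
  have hI : 0 ≤ ∫ x, |h' x| / (1 + |x| ^ s) := integral_nonneg fun x => by
    simp only [Pi.zero_apply]; positivity
  have hsum : 0 ≤ ∑ n ∈ Finset.range n1, σs n * (c * g n) :=
    Finset.sum_nonneg fun k _ => mul_nonneg (hσ0 k) (mul_nonneg hc0 (hg0 k))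
  have P1 := law_prob hc hY n (σs n)
  have P2 := law_prob hc hY' n (σs n)
  have E1 := law_exp hc hY n (σs n)
  have E2 := law_exp hc hY' n (σs n)
  have key : ∀ E : ℝ, (∀ x, Real.exp x * |(lawW μ Y n (σs n)).real (Set.Ioi x) - (gaussianReal 0 1).real (Set.Ioi x)| ≤ E) →
      (∀ x, Real.exp x * |(lawW μ (fun k ω => - Y k ω) n (σs n)).real (Set.Ioi x) - (gaussianReal 0 1).real (Set.Ioi x)| ≤ E) →
      |(∫ w, h w ∂(lawW μ Y n (σs n))) - ∫ x, h x ∂(gaussianReal 0 1)| ≤ c * E * ∫ x, |h' x| / (1 + |x| ^ s) := by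
    intro E h1 h2
    exact hsm _ P1 E E1 (by rw [law_neg hc hY]; exact E2) h1 (by rw [law_neg hc hY]; exact h2) h h' hm hFTC hi
  by_cases hn : n1 ≤ n
  · have hσn := hn1 n hn
    have hpos : 0 < σs n := lt_of_lt_of_le hσ₀ hσn
    have := key (K/σs n) (htail n Y (σs n) hY hYC hσn (hv n)) (htail n _ (σs n) hY' hYC' hσn (hv' n))
    calc _ ≤ σs n * (c * (K/σs n) * ∫ x, |h' x| / (1 + |x| ^ s)) := mul_le_mul_of_nonneg_left this hpos.le
      _ = c * K * ∫ x, |h' x| / (1 + |x| ^ s) := by field_simp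
      _ ≤ _ := mul_le_mul_of_nonneg_right (by linarith) hI
  · have := key (g n) (fun x => (crude _ E1 x).trans (by rw [hg]; linarith [hp' n]))
      (fun x => (crude _ E2 x).trans (by rw [hg]; linarith [hp n]))
    calc _ ≤ σs n * (c * g n * ∫ x, |h' x| / (1 + |x| ^ s)) := mul_le_mul_of_nonneg_left this (hσ0 n)
      _ = (σs n * (c * g n)) * ∫ x, |h' x| / (1 + |x| ^ s) := by ring
      _ ≤ _ := by
        refine mul_le_mul_of_nonneg_right ?_ hI
        have h1 := Finset.single_le_sum (f := fun n => σs n * (c * g n))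
          (fun k _ => mul_nonneg (hσ0 k) (mul_nonneg hc0 (hg0 k))) (Finset.mem_range.2 (not_le.1 hn))
        have h2 : 0 ≤ c * K := mul_nonneg hc0 hK
        linarith

lemma map_int (hc : Chain μ F G N q ρ) {Y : ℕ → α → ℝ} (hY : ∀ k, Bdd μ (G (k+1)) (Y k)) (n : ℕ) (σ : ℝ)
    (h h' : ℝ → ℝ) (hint : ∀ x y : ℝ, IntervalIntegrable h' volume x y)
    (hFTC : ∀ x y : ℝ, h y - h x = ∫ t in x..y, h' t) :
    ∫ w, h w ∂(lawW μ Y n σ) =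
    ∫ ω, h (((∑ k ∈ Finset.range n, Y k ω) - ∫ ω', ∑ k ∈ Finset.range n, Y k ω' ∂μ) / σ) ∂μ := by
  have hcont : Continuous h := by
    have h1 := intervalIntegral.continuous_primitive hint 0
    have h2 : h = fun x => h 0 + ∫ t in (0:ℝ)..x, h' t := by
      ext x; rw [← hFTC]; ring
    rw [h2]
    exact continuous_const.add h1
  rw [lawW, integral_map (W_bdd hc hY n σ).sm.measurable.aemeasurable hcont.aestronglyMeasurable]

end
end BE

/-- **Theorem (CLT rates for smooth test functions, Doeblin case).**
If `σ_n → ∞`, then for every `1 ≤ s < ∞` there is a constant `C_s` such that for every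
absolutely continuous `h : ℝ → ℝ` (with derivative `h'` in the sense of the fundamental
theorem of calculus) satisfying `H_s(h) = ∫ |h'(x)|/(1+|x|^s) dx < ∞` one has
`|E[h((S_n − E S_n)/σ_n)] − ∫ h dΦ| ≤ C_s H_s(h) σ_n⁻¹` for all `n`. -/
theorem smooth_CLT_rate_doeblin
    (μ : Measure Ω) [IsProbabilityMeasure μ]
    (X : ∀ j, Ω → 𝒳 j) (κ : ∀ j n, Kernel (𝒳 j) (𝒳 (j + n)))
    (hMarkov : IsInhomMarkov μ X κ)
    (n₀ : ℕ) (hn₀ : 0 < n₀) (γ : ℝ) (hγ : γ ∈ Set.Ioo (0 : ℝ) 1)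
    (m : ∀ j, Measure (𝒳 j)) (hm : ∀ j, IsProbabilityMeasure (m j))
    (hDoeblin : ∀ j (x : 𝒳 j) (Γ : Set (𝒳 (j + n₀))), MeasurableSet Γ →
      ENNReal.ofReal γ * m (j + n₀) Γ ≤ κ j n₀ x Γ)
    (f : ∀ j, 𝒳 j → ℝ) (hfmeas : ∀ j, Measurable (f j))
    (C : ℝ) (hbdd : ∀ j, ∀ᵐ ω ∂μ, |f j (X j ω)| ≤ C)
    (S : ℕ → Ω → ℝ) (hS : ∀ n ω, S n ω = ∑ j ∈ Finset.range n, f j (X j ω))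
    (σs : ℕ → ℝ) (hσ : ∀ n, σs n = Real.sqrt (variance (S n) μ))
    (hσ_top : Tendsto σs atTop atTop) :
    ∀ s : ℝ, 1 ≤ s → ∃ Cs : ℝ, ∀ h h' : ℝ → ℝ,
      Measurable h' →
      (∀ x y : ℝ, IntervalIntegrable h' volume x y) →
      -- `h` is absolutely continuous with a.e. derivative `h'`
      (∀ x y : ℝ, h y - h x = ∫ t in x..y, h' t) →
      Integrable (fun x => |h' x| / (1 + |x| ^ s)) volume →
      ∀ n : ℕ,
        σs n * |(∫ ω, h ((S n ω - ∫ ω', S n ω' ∂μ) / σs n) ∂μ)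
            - ∫ x, h x ∂(gaussianReal 0 1)|
          ≤ Cs * ∫ x, |h' x| / (1 + |x| ^ s) := by

  intro s hs
  have hchain := BE.chain_of_markov μ X κ hMarkov n₀ hn₀ γ hγ m hm hDoeblin
  have hC : 0 ≤ C := by
    obtain ⟨ω, hω⟩ := (hbdd 0).exists
    exact (abs_nonneg _).trans hω
  have hγ1 := hγ.1
  have hγ2 := hγ.2
  have hY : ∀ k, BE.Bdd μ (BE.GG X (k+1)) (fun ω => f k (X k ω)) := fun k =>
    ⟨((hfmeas k).comp (comap_measurable (X k))).stronglyMeasurable, C, hbdd k⟩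
  have hSf : ∀ n, S n = fun ω => ∑ j ∈ Finset.range n, f j (X j ω) := fun n => funext (hS n)
  obtain ⟨Cs, hCs⟩ := BE.chain_clt hchain hn₀ (by linarith) (Real.sqrt_nonneg _)
    ((Real.sqrt_lt' one_pos).2 (by linarith)) C hC (fun k ω => f k (X k ω)) hY hbdd σs
    (fun n => by rw [hσ n, hSf n]) hσ_top s (by linarith)
  refine ⟨Cs, fun h h' hm' hint hFTC hi n => ?_⟩
  have h1 := hCs h h' hm' hFTC hi n
  rw [BE.map_int hchain hY n (σs n) h h' hint hFTC] at h1
  simpa only [hSf n] using h1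

end
end

section
/- There exist measurable functions M_j on 𝒳_{j−1} × 𝒳_j and h_j on 𝒳_j such that almost surely, for every j > 0, f_j(X_j) − E[f_j(X_j)] = M_j(X_{j−1}, X_j) + h_{j−1}(X_{j−1}) − h_j(X_j); moreover, sup_j ‖h_j‖_{L^∞} < ∞, sup_j ‖M_j‖_{L^∞} < ∞, and (M_j(X_{j−1}, X_j))_{j≥1} is a martingale-difference sequence with respect to the filtration generated by (X_0, X_1, …, X_j). -/
open MeasureTheory ProbabilityTheory Filter
open scoped ENNReal NNReal

noncomputable section

variable {Ω : Type*} [MeasurableSpace Ω] {𝒳 : ℕ → Type*} [∀ j, MeasurableSpace (𝒳 j)]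

lemma dob_past_le {μ : Measure Ω} {X : ∀ j, Ω → 𝒳 j} (hX : ∀ j, Measurable (X j)) (j : ℕ) :
    pastSigma X j ≤ ‹MeasurableSpace Ω› := by
  unfold pastSigma
  refine iSup₂_le fun i _ => ?_
  exact (hX i).comap_le

lemma dob_past_mono (X : ∀ j, Ω → 𝒳 j) {i j : ℕ} (h : i ≤ j) :
    pastSigma X i ≤ pastSigma X j := by
  unfold pastSigma
  refine iSup₂_le fun k hk => ?_
  refine le_iSup₂_of_le (f := fun k (_ : k ∈ Finset.range (j+1)) =>
    MeasurableSpace.comap (X k) inferInstance) k ?_ le_rfl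
  simp at hk ⊢; omega

lemma dob_past_meas (X : ∀ j, Ω → 𝒳 j) (j : ℕ) : Measurable[pastSigma X j] (X j) := by
  rw [measurable_iff_comap_le]
  unfold pastSigma
  exact le_iSup₂_of_le (f := fun k (_ : k ∈ Finset.range (j+1)) =>
    MeasurableSpace.comap (X k) inferInstance) j (by simp) le_rfl

lemma dob_integrable {α : Type*} [MeasurableSpace α] (ν : Measure α) [IsFiniteMeasure ν]
    {φ : α → ℝ} (hφ : Measurable φ) {B : ℝ} (hB : ∀ x, |φ x| ≤ B) : Integrable φ ν :=
  Integrable.of_bound hφ.aestronglyMeasurable B (ae_of_all _ hB)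

lemma dob_condExp {μ : Measure Ω} [IsProbabilityMeasure μ]
    {X : ∀ j, Ω → 𝒳 j} {κ : ∀ j n, Kernel (𝒳 j) (𝒳 (j + n))}
    (hM : IsInhomMarkov μ X κ) (j n : ℕ) (φ : 𝒳 (j + n) → ℝ) (hφ : Measurable φ)
    (B : ℝ) (hB : ∀ x, |φ x| ≤ B) :
    μ[(fun ω => φ (X (j + n) ω)) | pastSigma X j] =ᵐ[μ] fun ω => ∫ y, φ y ∂(κ j n (X j ω)) := by
  have hle := dob_past_le (μ := μ) hM.meas j
  have := hM.isMarkovKernel j n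
  have hmj := dob_past_meas X j
  have hint : Measurable fun x => ∫ y, φ y ∂(κ j n x) :=
    (StronglyMeasurable.integral_kernel hφ.stronglyMeasurable).measurable
  have hbd : ∀ x, |∫ y, φ y ∂(κ j n x)| ≤ B := fun x => by
    have := norm_integral_le_of_norm_le_const (μ := κ j n x) (f := φ) (C := B) (ae_of_all _ hB)
    simpa using this
  symm
  refine ae_eq_condExp_of_forall_setIntegral_eq hle
    (dob_integrable μ (hφ.comp (hM.meas _)) (fun ω => hB _)) ?_ ?_ ?_
  · intro s _ _
    exact (dob_integrable μ (hint.comp (hM.meas _)) (fun ω => hbd _)).integrableOn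
  · intro s hs _
    have hs' := hle s hs
    have key : (κ j n) ∘ₘ ((μ.restrict s).map (X j)) = (μ.restrict s).map (X (j + n)) := by
      ext Γ hΓ
      rw [Measure.bind_apply hΓ (Kernel.aemeasurable _), lintegral_map (Kernel.measurable_coe _ hΓ) (hM.meas j),
        Measure.map_apply (hM.meas _) hΓ]
      have h1 : ∫ ω in s, (κ j n (X j ω) Γ).toReal ∂μ
          = ∫ ω in s, Γ.indicator (fun _ => (1 : ℝ)) (X (j + n) ω) ∂μ := by
        rw [← setIntegral_condExp hle (f := fun ω => Γ.indicator (fun _ => (1 : ℝ)) (X (j + n) ω)) _ hs]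
        · exact setIntegral_congr_ae hs' ((hM.cond j n Γ hΓ).symm.mono fun ω h _ => h)
        · refine dob_integrable μ (B := 1) ((measurable_const.indicator hΓ).comp (hM.meas _)) ?_
          intro ω
          simp only [Set.indicator]; split_ifs <;> simp
      have h2 : ∫ ω in s, Γ.indicator (fun _ => (1 : ℝ)) (X (j + n) ω) ∂μ
          = ((μ.restrict s) (X (j + n) ⁻¹' Γ)).toReal := by
        have : (fun ω => Γ.indicator (fun _ => (1 : ℝ)) (X (j + n) ω))
          = (X (j + n) ⁻¹' Γ).indicator (fun _ => (1 : ℝ)) := rfl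
        rw [this, integral_indicator_const _ (hM.meas _ hΓ)]
        simp [Measure.real]
      rw [h2, integral_toReal (f := fun ω => κ j n (X j ω) Γ) ((Kernel.measurable_coe _ hΓ).comp (hM.meas j)).aemeasurable
        (ae_of_all _ fun ω => measure_lt_top _ _)] at h1
      refine (ENNReal.toReal_eq_toReal_iff' ?_ (measure_ne_top _ _)).1 h1
      refine ne_of_lt (lt_of_le_of_lt (lintegral_mono (g := fun _ => 1) fun ω => prob_le_one) ?_)
      simp
    have e1 : ∫ ω in s, φ (X (j + n) ω) ∂μ = ∫ y, φ y ∂((μ.restrict s).map (X (j + n))) :=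
      (integral_map (hM.meas _).aemeasurable hφ.aestronglyMeasurable).symm
    have e2 : ∫ ω in s, (∫ y, φ y ∂(κ j n (X j ω))) ∂μ
        = ∫ x, (∫ y, φ y ∂(κ j n x)) ∂((μ.restrict s).map (X j)) :=
      (integral_map (hM.meas _).aemeasurable hint.aestronglyMeasurable).symm
    rw [e1, e2, ← key]
    have hi : Integrable φ ((κ j n) ∘ₘ ((μ.restrict s).map (X j))) := by
      rw [key]
      exact dob_integrable _ hφ hB
    rw [Measure.comp_eq_comp_const_apply] at hi ⊢
    rw [Kernel.integral_comp hi]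
    simp
  · exact (hint.comp hmj).stronglyMeasurable.aestronglyMeasurable

lemma dob_contract {α : Type*} [MeasurableSpace α] (ν m : Measure α) [IsProbabilityMeasure ν]
    [IsProbabilityMeasure m] {γ : ℝ} (hγ : 0 < γ)
    (h : ∀ Γ, MeasurableSet Γ → ENNReal.ofReal γ * m Γ ≤ ν Γ)
    (φ : α → ℝ) (hφ : Measurable φ) (a b : ℝ) (hab : ∀ x, φ x ∈ Set.Icc a b) :
    ∫ x, φ x ∂ν ∈ Set.Icc (a + γ * (∫ x, φ x ∂m - a))
      (a + γ * (∫ x, φ x ∂m - a) + (1 - γ) * (b - a)) := by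
  have hB : ∀ x, |φ x| ≤ max |a| |b| := fun x => abs_le_max_abs_abs (hab x).1 (hab x).2
  have hle : ENNReal.ofReal γ • m ≤ ν := by
    refine Measure.le_iff.2 fun Γ hΓ => ?_
    simpa using h Γ hΓ
  have i1 := dob_integrable ν hφ hB
  have i2 := dob_integrable m hφ hB
  have A := integral_mono_measure (f := fun x => φ x - a) hle
    (ae_of_all _ fun x => sub_nonneg.2 (hab x).1) (i1.sub (integrable_const a))
  have A' := integral_mono_measure (f := fun x => b - φ x) hle
    (ae_of_all _ fun x => sub_nonneg.2 (hab x).2) ((integrable_const b).sub i1)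
  rw [integral_smul_measure, integral_sub i1 (integrable_const a),
    integral_sub i2 (integrable_const a)] at A
  rw [integral_smul_measure, integral_sub (integrable_const b) i1,
    integral_sub (integrable_const b) i2] at A'
  simp [ENNReal.toReal_ofReal hγ.le] at A A'
  constructor <;> nlinarith

lemma dob_version {μ : Measure Ω} [IsProbabilityMeasure μ]
    {X : ∀ j, Ω → 𝒳 j} {κ : ∀ j n, Kernel (𝒳 j) (𝒳 (j + n))}
    (hM : IsInhomMarkov μ X κ) (n₀ : ℕ) (γ : ℝ) (hγ : γ ∈ Set.Ioo (0 : ℝ) 1)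
    (m : ∀ j, Measure (𝒳 j)) (hm : ∀ j, IsProbabilityMeasure (m j))
    (hDoeblin : ∀ j (x : 𝒳 j) (Γ : Set (𝒳 (j + n₀))), MeasurableSet Γ →
      ENNReal.ofReal γ * m (j + n₀) Γ ≤ κ j n₀ x Γ)
    (i : ℕ) (φ : 𝒳 i → ℝ) (hφ : Measurable φ) (a b : ℝ) (hab : ∀ x, φ x ∈ Set.Icc a b) (p : ℕ) :
    ∀ j, j + n₀ * p ≤ i → ∃ (v : 𝒳 j → ℝ) (c : ℝ), Measurable v ∧
      (∀ x, v x ∈ Set.Icc c (c + (1 - γ) ^ p * (b - a))) ∧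
      μ[(fun ω => φ (X i ω)) | pastSigma X j] =ᵐ[μ] fun ω => v (X j ω) := by
  induction p with
  | zero =>
    intro j hj
    obtain ⟨n, rfl⟩ := Nat.exists_eq_add_of_le (show j ≤ i by omega)
    have := hM.isMarkovKernel j n
    have hB : ∀ x, |φ x| ≤ max |a| |b| := fun x => abs_le_max_abs_abs (hab x).1 (hab x).2
    refine ⟨fun x => ∫ y, φ y ∂(κ j n x), a,
      (StronglyMeasurable.integral_kernel hφ.stronglyMeasurable).measurable, fun x => ?_,
      dob_condExp hM j n φ hφ _ hB⟩
    have hi := dob_integrable (κ j n x) hφ hB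
    have h1 := integral_mono (integrable_const a) hi fun x => (hab x).1
    have h2 := integral_mono hi (integrable_const b) fun x => (hab x).2
    simp at h1 h2
    constructor <;> simpa
  | succ p ih =>
    intro j hj
    obtain ⟨v, c, hv, hvb, hve⟩ := ih (j + n₀) (by rw [mul_add] at hj; omega)
    have := hM.isMarkovKernel j n₀
    have := hm (j + n₀)
    have hB : ∀ x, |v x| ≤ _ := fun x => abs_le_max_abs_abs (hvb x).1 (hvb x).2
    refine ⟨fun x => ∫ y, v y ∂(κ j n₀ x), c + γ * (∫ x, v x ∂(m (j + n₀)) - c),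
      (StronglyMeasurable.integral_kernel hv.stronglyMeasurable).measurable, fun x => ?_, ?_⟩
    · have := dob_contract (κ j n₀ x) (m (j + n₀)) hγ.1 (hDoeblin j x) v hv _ _ hvb
      convert this using 3
      ring
    · refine ((condExp_condExp_of_le (dob_past_mono X (Nat.le_add_right j n₀))
        (dob_past_le (μ := μ) hM.meas _)).symm.trans (condExp_congr_ae hve)).trans ?_
      exact dob_condExp hM j n₀ v hv _ hB

lemma dob_summable {γ : ℝ} (hγ : γ ∈ Set.Ioo (0 : ℝ) 1) {n : ℕ} (hn : 0 < n) :
    Summable fun k : ℕ => (1 - γ) ^ ((k + 1) / n) := by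
  have h0 : 0 < 1 - γ := by linarith [hγ.2]
  have h1 : 1 - γ < 1 := by linarith [hγ.1]
  set ρ := (1 - γ) ^ ((n : ℝ)⁻¹) with hρ
  have hρ0 : 0 < ρ := Real.rpow_pos_of_pos h0 _
  have hρn : ρ ^ n = 1 - γ := Real.rpow_inv_natCast_pow h0.le hn.ne'
  have hρ1 : ρ < 1 := Real.rpow_lt_one h0.le h1 (by positivity)
  refine Summable.of_nonneg_of_le (fun k => by positivity) (fun k => ?_)
    ((summable_geometric_of_lt_one hρ0.le hρ1).mul_left ((1 - γ)⁻¹))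
  rw [← div_eq_inv_mul, le_div_iff₀ h0, ← pow_succ, ← hρn, ← pow_mul]
  refine pow_le_pow_of_le_one hρ0.le hρ1.le ?_
  have := Nat.div_add_mod (k + 1) n
  have := Nat.mod_lt (k + 1) hn
  rw [mul_add]; omega

lemma dob_family {μ : Measure Ω} [IsProbabilityMeasure μ]
    {X : ∀ j, Ω → 𝒳 j} {κ : ∀ j n, Kernel (𝒳 j) (𝒳 (j + n))}
    (hM : IsInhomMarkov μ X κ) (n₀ : ℕ) (γ : ℝ) (hγ : γ ∈ Set.Ioo (0 : ℝ) 1)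
    (m : ∀ j, Measure (𝒳 j)) (hm : ∀ j, IsProbabilityMeasure (m j))
    (hDoeblin : ∀ j (x : 𝒳 j) (Γ : Set (𝒳 (j + n₀))), MeasurableSet Γ →
      ENNReal.ofReal γ * m (j + n₀) Γ ≤ κ j n₀ x Γ)
    (F : ∀ j, 𝒳 j → ℝ) (hF : ∀ j, Measurable (F j)) (C : ℝ) (hFb : ∀ j x, |F j x| ≤ C)
    (j i : ℕ) (hij : j ≤ i) :
    ∃ w : 𝒳 j → ℝ, Measurable w ∧ (∀ x, |w x| ≤ (1 - γ) ^ ((i - j) / n₀) * (2 * C)) ∧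
      μ[(fun ω => F i (X i ω) - ∫ ω', F i (X i ω') ∂μ) | pastSigma X j]
        =ᵐ[μ] fun ω => w (X j ω) := by
  have hle := dob_past_le (μ := μ) hM.meas j
  obtain ⟨v, c, hv, hvb, hve⟩ := dob_version hM n₀ γ hγ m hm hDoeblin i (F i) (hF i) (-C) C
    (fun x => abs_le.1 (hFb i x)) ((i - j) / n₀) j
    (by have := Nat.mul_div_le (i - j) n₀; omega)
  have iF := dob_integrable μ ((hF i).comp (hM.meas i)) (fun ω => hFb i _)
  have hB : ∀ x, |v x| ≤ _ := fun x => abs_le_max_abs_abs (hvb x).1 (hvb x).2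
  have iv := dob_integrable μ (hv.comp (hM.meas j)) (fun ω => hB _)
  have hE : ∫ ω', F i (X i ω') ∂μ = ∫ ω, v (X j ω) ∂μ := by
    rw [← integral_condExp hle]
    exact integral_congr_ae hve
  have h1 := integral_mono (integrable_const c) iv fun ω => (hvb _).1
  have h2 := integral_mono iv (integrable_const _) fun ω => (hvb _).2
  simp only [integral_const, probReal_univ, one_smul, Function.comp] at h1 h2
  refine ⟨fun x => v x - ∫ ω', F i (X i ω') ∂μ, hv.sub_const _, fun x => ?_, ?_⟩
  · rw [hE, abs_le]
    have := hvb x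
    constructor <;> linarith [this.1, this.2]
  · refine (condExp_sub iF (integrable_const _) _).trans ?_
    rw [condExp_const hle]
    filter_upwards [hve] with ω h
    simp only [Pi.sub_apply]
    rw [← h]; rfl

/-- **Lemma (martingale–coboundary decomposition under uniform Doeblin minorization).**
There exist measurable functions `M_j` on `𝒳_{j-1} × 𝒳_j` and `h_j` on `𝒳_j` such that a.s.
for every `j > 0`, `f_j(X_j) − E[f_j(X_j)] = M_j(X_{j-1}, X_j) + h_{j-1}(X_{j-1}) − h_j(X_j)`,
with `sup_j ‖h_j‖_∞ < ∞`, `sup_j ‖M_j‖_∞ < ∞`, and `(M_j(X_{j-1},X_j))_{j≥1}` a martingale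
difference sequence with respect to the natural filtration of the chain. -/
theorem martingale_coboundary_doeblin
    (μ : Measure Ω) [IsProbabilityMeasure μ]
    (X : ∀ j, Ω → 𝒳 j) (κ : ∀ j n, Kernel (𝒳 j) (𝒳 (j + n)))
    (hMarkov : IsInhomMarkov μ X κ)
    (n₀ : ℕ) (hn₀ : 0 < n₀) (γ : ℝ) (hγ : γ ∈ Set.Ioo (0 : ℝ) 1)
    (m : ∀ j, Measure (𝒳 j)) (hm : ∀ j, IsProbabilityMeasure (m j))
    (hDoeblin : ∀ j (x : 𝒳 j) (Γ : Set (𝒳 (j + n₀))), MeasurableSet Γ →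
      ENNReal.ofReal γ * m (j + n₀) Γ ≤ κ j n₀ x Γ)
    (f : ∀ j, 𝒳 j → ℝ) (hfmeas : ∀ j, Measurable (f j))
    (C : ℝ) (hbdd : ∀ j, ∀ᵐ ω ∂μ, |f j (X j ω)| ≤ C) :
    ∃ (h : ∀ j, 𝒳 j → ℝ) (M : ∀ j, 𝒳 j × 𝒳 (j + 1) → ℝ),
      (∀ j, Measurable (h j)) ∧ (∃ B, ∀ j x, |h j x| ≤ B) ∧
      (∀ j, Measurable (M j)) ∧ (∃ B, ∀ j y, |M j y| ≤ B) ∧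
      -- martingale difference property w.r.t. the filtration generated by `X_0, …, X_j`
      (∀ j, (μ[(fun ω => M j (X j ω, X (j + 1) ω)) | pastSigma X j]) =ᵐ[μ] 0) ∧
      (∀ j, ∀ᵐ ω ∂μ,
        f (j + 1) (X (j + 1) ω) - (∫ ω', f (j + 1) (X (j + 1) ω') ∂μ) =
          M j (X j ω, X (j + 1) ω) + h j (X j ω) - h (j + 1) (X (j + 1) ω)) := by
  have hM := hMarkov
  set F : ∀ j, 𝒳 j → ℝ := fun j x => max (-|C|) (min |C| (f j x)) with hFdef
  have hF : ∀ j, Measurable (F j) := fun j =>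
    measurable_const.max (measurable_const.min (hfmeas j))
  have hFb : ∀ j x, |F j x| ≤ |C| := fun j x => by
    rw [abs_le]
    exact ⟨le_max_left _ _, max_le (by linarith [abs_nonneg C]) (min_le_left _ _)⟩
  have hFf : ∀ j, ∀ᵐ ω ∂μ, F j (X j ω) = f j (X j ω) := fun j => by
    filter_upwards [hbdd j] with ω h
    have := abs_le.1 (h.trans (le_abs_self C))
    simp only [hFdef]
    rw [min_eq_right this.2, max_eq_right this.1]
  have hFE : ∀ j, ∫ ω, F j (X j ω) ∂μ = ∫ ω, f j (X j ω) ∂μ := fun j =>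
    integral_congr_ae (hFf j)
  have fam := fun j i (hij : j ≤ i) =>
    dob_family hM n₀ γ hγ m hm hDoeblin F hF |C| hFb j i hij
  choose! w hw hwb hwe using fam
  -- summability
  set bnd : ℕ → ℝ := fun k => (1 - γ) ^ ((k + 1) / n₀) * (2 * |C|) with hbnd
  have hbs : Summable bnd := (dob_summable hγ hn₀).mul_right _
  have hwb' : ∀ j k x, |w j (j + 1 + k) x| ≤ bnd k := fun j k x => by
    have := hwb j (j + 1 + k) (by omega) x
    rwa [show j + 1 + k - j = k + 1 by omega] at this
  have hws : ∀ j x, Summable fun k => w j (j + 1 + k) x := fun j x =>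
    Summable.of_norm_bounded hbs (hwb' j · x)
  set h : ∀ j, 𝒳 j → ℝ := fun j x => ∑' k, w j (j + 1 + k) x with hh
  have hhm : ∀ j, Measurable (h j) := fun j => Measurable.tsum fun k => hw _ _ (by omega)
  have hhb : ∀ j x, |h j x| ≤ ∑' k, bnd k := fun j x =>
    tsum_of_norm_bounded (f := fun k => w j (j + 1 + k) x) hbs.hasSum (fun k => hwb' j k x)
  set E : ℕ → ℝ := fun j => ∫ ω, F j (X j ω) ∂μ with hE
  have hEb : ∀ j, |E j| ≤ |C| := fun j => by
    have := norm_integral_le_of_norm_le_const (μ := μ) (f := fun ω => F j (X j ω)) (C := |C|)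
      (ae_of_all _ fun ω => hFb j (X j ω))
    simpa using this
  refine ⟨h, fun j y => F (j + 1) y.2 - E (j + 1) - h j y.1 + h (j + 1) y.2, hhm, ⟨_, hhb⟩, ?_,
    ⟨|C| + |C| + ∑' k, bnd k + ∑' k, bnd k, ?_⟩, ?_, ?_⟩
  · intro j
    exact ((((hF _).comp measurable_snd).sub_const _).sub ((hhm _).comp measurable_fst)).add
      ((hhm _).comp measurable_snd)
  · intro j y
    have a1 := abs_le.1 (hFb (j + 1) y.2)
    have a2 := abs_le.1 (hEb (j + 1))
    have a3 := abs_le.1 (hhb j y.1)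
    have a4 := abs_le.1 (hhb (j + 1) y.2)
    rw [abs_le]
    constructor <;> linarith [a1.1, a1.2, a2.1, a2.2, a3.1, a3.2, a4.1, a4.2]
  · intro j
    have hle := dob_past_le (μ := μ) hM.meas j
    have := hM.isMarkovKernel j 1
    have iF := dob_integrable μ ((hF (j + 1)).comp (hM.meas (j + 1))) (fun ω => hFb _ _)
    have iG : Integrable (fun ω => F (j + 1) (X (j + 1) ω) - E (j + 1)) μ :=
      iF.sub (integrable_const _)
    have iH : ∀ j, Integrable (fun ω => h j (X j ω)) μ := fun j =>
      dob_integrable μ ((hhm j).comp (hM.meas j)) (fun ω => hhb _ _)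
    have c1 := hwe j (j + 1) (by omega)
    have c2 : μ[(fun ω => h j (X j ω)) | pastSigma X j] = fun ω => h j (X j ω) :=
      condExp_of_stronglyMeasurable hle ((hhm j).comp (dob_past_meas X j)).stronglyMeasurable (iH j)
    have c3 := dob_condExp hM j 1 (h (j + 1)) (hhm _) _ (hhb _)
    have c4 : ∀ᵐ ω ∂μ, ∀ k, ∫ y, w (j + 1) (j + 1 + 1 + k) y ∂(κ j 1 (X j ω))
        = w j (j + 1 + (k + 1)) (X j ω) := by
      rw [ae_all_iff]
      intro k
      have d1 := dob_condExp hM j 1 (w (j + 1) (j + 1 + 1 + k)) (hw _ _ (by omega)) _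
        (hwb' (j + 1) k)
      have d2 := hwe (j + 1) (j + 1 + 1 + k) (by omega)
      have d3 := hwe j (j + 1 + 1 + k) (by omega)
      have d4 := condExp_condExp_of_le (μ := μ)
        (f := fun ω => F (j + 1 + 1 + k) (X (j + 1 + 1 + k) ω)
          - ∫ ω', F (j + 1 + 1 + k) (X (j + 1 + 1 + k) ω') ∂μ) (dob_past_mono X (Nat.le_succ j))
        (dob_past_le (μ := μ) hM.meas _)
      have d5 := condExp_congr_ae (m := pastSigma X j) d2
      rw [show j + 1 + (k + 1) = j + 1 + 1 + k by omega]
      filter_upwards [d1, d3, d4, d5] with ω e1 e3 e4 e5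
      rw [← e1, ← e3, ← e4]
      exact e5.symm
    have c5 : ∀ ω, ∫ y, h (j + 1) y ∂(κ j 1 (X j ω))
        = ∑' k, ∫ y, w (j + 1) (j + 1 + 1 + k) y ∂(κ j 1 (X j ω)) := fun ω => by
      refine (HasSum.tsum_eq (hasSum_integral_of_dominated_convergence (fun k _ => bnd k)
        (fun k => (hw (j + 1) _ (by omega)).aestronglyMeasurable)
        (fun k => ae_of_all _ fun x => hwb' (j + 1) k x)
        (ae_of_all _ fun _ => hbs) (integrable_const _)
        (ae_of_all _ fun x => (hws (j + 1) x).hasSum))).symm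
    have s1 := condExp_add (m := pastSigma X j) (iG.sub (iH j)) (iH (j + 1))
    have s2 := condExp_sub (m := pastSigma X j) iG (iH j)
    refine (show _ =ᵐ[μ] _ from s1).trans ?_
    filter_upwards [s2, c1, c3, c4] with ω e2 e1 e3 e4
    have e6 : h j (X j ω) = w j (j + 1) (X j ω) + ∑' k, w j (j + 1 + (k + 1)) (X j ω) := by
      simpa using (hws j (X j ω)).tsum_eq_zero_add
    rw [c5, tsum_congr e4] at e3
    rw [Pi.add_apply, e2, Pi.sub_apply, c2]
    simp only [Pi.zero_apply]
    rw [e6]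
    have e1' : (μ[fun ω => F (j + 1) (X (j + 1) ω) - E (j + 1) | pastSigma X j]) ω
      = w j (j + 1) (X j ω) := e1
    have e3' : (μ[fun ω => h (j + 1) (X (j + 1) ω) | pastSigma X j]) ω = _ := e3
    rw [e1', e3']
    ring
  · intro j
    filter_upwards [hFf (j + 1)] with ω e
    rw [← hFE, ← e]
    ring

end
end
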